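/- arXiv:1705.09195 — 3 statements merged into one kernel-verified Lean document; each statement's English description precedes it below -/
import Mathlib

section
/- Let X ⊆ P² be a k-configuration of type (1,2,…,s) with s ≥ 2, and suppose the number r of lines in P² containing exactly s points of X satisfies 1 ≤ r < s. Then for every integer m ≥ s + 1, ΔH_{mX}(m·s − 1) = r. -/
/-- The projective plane over a field `K`, as the projectivization of `K³`. -/
abbrev P2 (K : Type) [Field K] := Projectivization K (Fin 3 → K)

/-- A line in `P2 K`: a 2-dimensional linear subspace of `K³`. -/
structure ProjLine (K : Type) [Field K] where
  toSubmodule : Submodule K (Fin 3 → K)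
  finrank_eq_two : Module.finrank K toSubmodule = 2

/-- The set of points of `P2 K` lying on a line. -/
def ProjLine.points {K : Type} [Field K] (L : ProjLine K) : Set (P2 K) :=
  {p | p.submodule ≤ L.toSubmodule}

/-- The homogeneous prime ideal of a point of `P2 K`: the ideal generated by
the linear forms vanishing at the point. -/
noncomputable def pointIdeal {K : Type} [Field K] (p : P2 K) :
    Ideal (MvPolynomial (Fin 3) K) :=
  Ideal.span {f | f.IsHomogeneous 1 ∧ MvPolynomial.eval p.rep f = 0}

/-- The defining ideal `I_{mX} = ⋂_{P ∈ X} I_P^m` of the fat point scheme `mX`. -/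
noncomputable def fatIdeal {K : Type} [Field K] (X : Set (P2 K)) (m : ℕ) :
    Ideal (MvPolynomial (Fin 3) K) :=
  ⨅ p ∈ X, (pointIdeal p) ^ m

/-- The Hilbert function of `R/I`: `H(t) = dim_K R_t - dim_K I_t`. -/
noncomputable def hilb {K : Type} [Field K] (I : Ideal (MvPolynomial (Fin 3) K)) (t : ℕ) : ℕ :=
  Module.finrank K ↥(MvPolynomial.homogeneousSubmodule (Fin 3) K t) -
    Module.finrank K ↥(Submodule.restrictScalars K (I : Submodule (MvPolynomial (Fin 3) K) (MvPolynomial (Fin 3) K)) ⊓ MvPolynomial.homogeneousSubmodule (Fin 3) K t)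

/-- The Hilbert function extended to `ℤ`, with `H(t) = 0` for `t < 0`. -/
noncomputable def hilbZ {K : Type} [Field K] (I : Ideal (MvPolynomial (Fin 3) K)) (t : ℤ) : ℤ :=
  if t < 0 then 0 else hilb I t.toNat

/-- The first difference `ΔH(t) = H(t) - H(t-1)` of the Hilbert function. -/
noncomputable def deltaHilb {K : Type} [Field K] (I : Ideal (MvPolynomial (Fin 3) K)) (t : ℤ) : ℤ :=
  hilbZ I t - hilbZ I (t - 1)

/-- `X` is a k-configuration of type `(d 0, …, d (s-1))` defined using the subsets
`Xs 0, …, Xs (s-1)` and the (distinct) lines `Ls 0, …, Ls (s-1)`. -/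
structure IsKConfig {K : Type} [Field K] {s : ℕ} (X : Set (P2 K)) (d : Fin s → ℕ)
    (Xs : Fin s → Set (P2 K)) (Ls : Fin s → ProjLine K) : Prop where
  one_le : ∀ i, 1 ≤ d i
  strictMono : StrictMono d
  lines_distinct : Function.Injective Ls
  union_eq : X = ⋃ i, Xs i
  card_eq : ∀ i, (Xs i).ncard = d i
  subset_line : ∀ i, Xs i ⊆ (Ls i).points
  not_mem : ∀ i j : Fin s, j < i → ∀ p ∈ Xs j, p ∉ (Ls i).points

/-! A form of degree `n` vanishing at fat points whose multiplicities on a line `l` add up to more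
than `n` is divisible by the equation of `l` (Bézout). If they add up to at most `n + 1`, they
impose independent conditions on `l`, so independence of all the conditions follows from
independence in degree `n - 1` for the multiplicities lowered by one along `l`. In degrees
`m * s - 1` and `m * s - 2` each of the `r` lines through `s` points splits off by the first
principle, even after the others have been divided out. What remains are forms of degrees
`m * s - 1 - r` and `m * s - 2 - r` whose multiplicity at each point is `m` minus the number of
these lines through it. By the second principle, applied along the lines of the configuration and
the `r` lines in a suitable order, these multiplicities impose independent conditions in the
smaller, hence also in the larger degree. Thus the dimension of the ideal of `mX` grows by
`m * s - r` between the two degrees, that of the polynomial ring by `m * s`, and the difference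
is `r`. -/

section Incidence

open Finset
open scoped Classical

variable {P L : Type*} [Membership P L]

/-- The multiplicities left after subtracting the line `l` once; the subtraction is truncated, so
a point of multiplicity zero on `l` keeps multiplicity zero. -/
noncomputable def strip (l : L) (f : P → ℕ) : P → ℕ := fun p => if p ∈ l then f p - 1 else f p

/-- The total multiplicity, along the line `l`, of the points of `X`. -/
noncomputable def lineSum (X : Finset P) (l : L) (f : P → ℕ) : ℕ := ∑ p ∈ X with p ∈ l, f p

/-- The number of lines of `T` through a point. -/
noncomputable def lineCount (T : Finset L) (p : P) : ℕ := #{l ∈ T | p ∈ l}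

theorem strip_le (l : L) (f : P → ℕ) (p : P) : strip l f p ≤ f p := by
  unfold strip; split_ifs <;> omega

theorem strip_of_mem {l : L} {p : P} (h : p ∈ l) (f : P → ℕ) : strip l f p = f p - 1 := if_pos h

theorem lineSum_mono {X : Finset P} {l : L} {f g : P → ℕ} (h : ∀ p ∈ X, f p ≤ g p) :
    lineSum X l f ≤ lineSum X l g :=
  sum_le_sum fun p hp => h p (mem_filter.1 hp).1

theorem lineCount_empty (p : P) : lineCount (∅ : Finset L) p = 0 := by simp [lineCount]

theorem lineCount_insert {a : L} {T : Finset L} (ha : a ∉ T) (p : P) :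
    lineCount (insert a T) p = lineCount T p + if p ∈ a then 1 else 0 := by
  unfold lineCount
  rw [filter_insert]
  split_ifs
  · rw [card_insert_of_notMem (by simp [ha])]
  · rfl

theorem lineCount_pos {T : Finset L} {l : L} {p : P} (hl : l ∈ T) (hp : p ∈ l) :
    0 < lineCount T p :=
  card_pos.2 ⟨l, mem_filter.2 ⟨hl, hp⟩⟩

theorem two_le_lineCount {T : Finset L} {l M : L} (hl : l ∈ T) (hM : M ∈ T) (hlM : l ≠ M) {p : P}
    (hpl : p ∈ l) (hpM : p ∈ M) : 2 ≤ lineCount T p := by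
  rw [lineCount, ← card_pair hlM]
  exact card_le_card fun a ha => by
    obtain rfl | rfl : a = l ∨ a = M := by simpa using ha
    exacts [mem_filter.2 ⟨hl, hpl⟩, mem_filter.2 ⟨hM, hpM⟩]

theorem lineCount_erase {T : Finset L} {l : L} (hl : l ∈ T) {p : P} (hp : p ∈ l) :
    lineCount T p = lineCount (T.erase l) p + 1 := by
  conv_lhs => rw [← insert_erase hl]
  rw [lineCount_insert (notMem_erase l T), if_pos hp]

theorem strip_sub_lineCount {a : L} {T : Finset L} (ha : a ∉ T) (f : P → ℕ) (p : P) :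
    strip a f p - lineCount T p = f p - lineCount (insert a T) p := by
  rw [lineCount_insert ha, strip]
  split_ifs <;> omega

theorem filter_lineCount_insert_eq_zero {a : L} {T : Finset L} (ha : a ∉ T) (X : Finset P) :
    {p ∈ X | lineCount (insert a T) p = 0} = {p ∈ {p ∈ X | lineCount T p = 0} | p ∉ a} := by
  ext p
  rw [mem_filter, mem_filter, mem_filter, lineCount_insert ha]
  split_ifs with h <;> simp [h]

variable (L) in
/-- The fat points of multiplicities `f` at the points of `X` can be exhausted by subtracting lines
one after the other. The index `n` stands for forms of degree `n - 1`: the line subtracted from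
index `n + 1` has total multiplicity at most `n + 1`, the number of conditions that a form of
degree `n` can satisfy independently on a line. -/
inductive Peelable (X : Finset P) : (P → ℕ) → ℕ → Prop
  | zero (f : P → ℕ) (n : ℕ) (h : ∀ p ∈ X, f p = 0) : Peelable X f n
  | strip (f : P → ℕ) (n : ℕ) (l : L) (h : lineSum X l f ≤ n + 1)
      (hf : Peelable X (strip l f) n) : Peelable X f (n + 1)

theorem Peelable.succ {X : Finset P} {f : P → ℕ} {n : ℕ} (h : Peelable L X f n) :
    Peelable L X f (n + 1) := by
  induction h with
  | zero f n h => exact .zero f _ h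
  | strip f n l h _ ih => exact .strip f _ l (by omega) ih

theorem Peelable.of_lines {X : Finset P} {n : ℕ} (T : Finset L) {f : P → ℕ}
    (hT : ∀ l ∈ T, lineSum X l f ≤ n + 1) (h : Peelable L X (fun p => f p - lineCount T p) n) :
    Peelable L X f (n + #T) := by
  induction T using Finset.induction_on generalizing f with
  | empty => simpa [lineCount_empty] using h
  | insert a T ha ih =>
    rw [card_insert_of_notMem ha, ← add_assoc]
    refine .strip f _ a ((hT a (mem_insert_self a T)).trans (by omega)) (ih (fun l hl => ?_) ?_)
    · exact (lineSum_mono fun p _ => strip_le a f p).trans (hT l (mem_insert_of_mem hl))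
    · simpa only [strip_sub_lineCount ha] using h

variable (L) in
/-- The combinatorial content of a k-configuration of type `(1, …, n)`: some line contains exactly
`n` points of the set, and the points off that line form a configuration of type `(1, …, n - 1)`. -/
inductive Triangular : ℕ → Finset P → Prop
  | zero : Triangular 0 ∅
  | succ (n : ℕ) (Z : Finset P) (l : L) (h : #{p ∈ Z | p ∈ l} = n + 1)
      (hZ : Triangular n {p ∈ Z | p ∉ l}) : Triangular (n + 1) Z

theorem Triangular.card_eq_one {Z : Finset P} (h : Triangular L 1 Z) : #Z = 1 := by
  obtain _ | ⟨_, _, l, hl, hZ⟩ := h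
  have hoff : #{p ∈ Z | p ∉ l} = 0 := by
    generalize {p ∈ Z | p ∉ l} = Y at hZ
    cases hZ; rfl
  rw [← card_filter_add_card_filter_not (· ∈ l), hl, hoff]

theorem lineSum_le_of_le_one_off {X Z : Finset P} (hZX : Z ⊆ X) {l : L} {f : P → ℕ} {μ : ℕ}
    (hZ : ∀ p ∈ Z, f p ≤ μ + 1) (hX : ∀ p ∈ X, p ∉ Z → f p ≤ μ) :
    lineSum X l f ≤ μ * #{p ∈ X | p ∈ l} + #{p ∈ Z | p ∈ l} := by
  calc lineSum X l f ≤ ∑ p ∈ X with p ∈ l, (μ + if p ∈ Z then 1 else 0) :=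
        sum_le_sum fun p hp => by
          split_ifs with hpZ
          exacts [hZ p hpZ, hX p (mem_filter.1 hp).1 hpZ]
    _ = μ * #{p ∈ X | p ∈ l} + #{p ∈ Z | p ∈ l} := by
        rw [sum_add_distrib, sum_const, smul_eq_mul, mul_comm, ← card_filter, filter_filter]
        congr 2
        ext p
        simp only [mem_filter]
        exact ⟨fun h => ⟨h.2.2, h.2.1⟩, fun h => ⟨hZX h.1, h.2, h.1⟩⟩

theorem lineSum_le_mul_sub_one_add {X Z : Finset P} (hZX : Z ⊆ X) {l : L} {f : P → ℕ} {s μ : ℕ}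
    (hμ : 1 ≤ μ) (hl : #{p ∈ X | p ∈ l} < s) (hZ : ∀ p ∈ Z, f p ≤ μ + 1)
    (hX : ∀ p ∈ X, p ∉ Z → f p ≤ μ) : lineSum X l f ≤ μ * s - 1 + #{p ∈ Z | p ∈ l} := by
  have := lineSum_le_of_le_one_off hZX (l := l) hZ hX
  have := Nat.mul_le_mul_left μ (Nat.succ_le_of_lt hl)
  rw [Nat.mul_succ] at this
  omega

theorem strip_le_of_le_succ_on {X Z : Finset P} {l : L} {f : P → ℕ} {μ : ℕ}
    (hZ : ∀ p ∈ Z, f p ≤ μ + 1) (hX : ∀ p ∈ X, p ∉ Z → f p ≤ μ) :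
    ∀ p ∈ X, p ∉ ({p ∈ Z | p ∉ l} : Finset P) → strip l f p ≤ μ := by
  intro p hp hpl
  by_cases hpZ : p ∈ Z
  · have hmem : p ∈ l := by_contra fun h => hpl (mem_filter.2 ⟨hpZ, h⟩)
    have := hZ p hpZ
    rw [strip_of_mem hmem]
    omega
  · exact (strip_le l f p).trans (hX p hp hpZ)

theorem Triangular.peelable {X Z : Finset P} {n : ℕ} (h : Triangular L n Z) (hZX : Z ⊆ X)
    {f : P → ℕ} (hZ : ∀ p ∈ Z, f p ≤ 1) (hX : ∀ p ∈ X, p ∉ Z → f p = 0) : Peelable L X f n := by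
  induction h generalizing f with
  | zero => exact .zero f 0 fun p hp => hX p hp (notMem_empty p)
  | succ n Z l h _ ih =>
    have hX' : ∀ p ∈ X, p ∉ Z → f p ≤ 0 := fun p hp hpZ => (hX p hp hpZ).le
    have hsum := lineSum_le_of_le_one_off hZX (l := l) (μ := 0) hZ hX'
    refine .strip f n l (by omega) (ih ((filter_subset _ _).trans hZX) (fun p hp => ?_) ?_)
    · exact (strip_le l f p).trans (hZ p (mem_filter.1 hp).1)
    · exact fun p hp hpl => Nat.le_zero.1 (strip_le_of_le_succ_on (μ := 0) hZ hX' p hp hpl)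

section Nondegenerate

variable [Configuration.Nondegenerate P L]

theorem card_filter_mem_mem_le_one (X : Finset P) {a l : L} (hal : a ≠ l) :
    #{p ∈ X | p ∈ a ∧ p ∈ l} ≤ 1 :=
  card_le_one.2 fun p hp q hq => by
    rw [mem_filter] at hp hq
    exact (Configuration.Nondegenerate.eq_or_eq hp.2.1 hq.2.1 hp.2.2 hq.2.2).resolve_right hal

theorem card_filter_mem_le_succ (X : Finset P) {a l : L} (hal : a ≠ l) :
    #{p ∈ X | p ∈ l} ≤ #{p ∈ {p ∈ X | p ∉ a} | p ∈ l} + 1 := by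
  have hsplit := card_filter_add_card_filter_not (s := {p ∈ X | p ∈ l}) (· ∈ a)
  have hone := card_filter_mem_mem_le_one X hal.symm
  rw [filter_filter] at hsplit
  rw [filter_comm]
  omega

theorem sum_lineCount_le (X : Finset P) {T : Finset L} {l : L} (hl : l ∉ T) :
    ∑ p ∈ X with p ∈ l, lineCount T p ≤ #T := by
  calc ∑ p ∈ X with p ∈ l, lineCount T p = ∑ a ∈ T, #{p ∈ {p ∈ X | p ∈ l} | p ∈ a} :=
        sum_card_bipartiteAbove_eq_sum_card_bipartiteBelow (· ∈ ·)
    _ ≤ ∑ _a ∈ T, 1 :=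
        sum_le_sum fun a ha => by
          rw [filter_filter]
          exact card_filter_mem_mem_le_one X (ne_of_mem_of_not_mem ha hl).symm
    _ = #T := (card_eq_sum_ones T).symm

theorem mul_card_filter_mem_le_lineSum_add (X : Finset P) {T : Finset L} {l : L} (hl : l ∉ T)
    (m : ℕ) : m * #{p ∈ X | p ∈ l} ≤ lineSum X l (fun p => m - lineCount T p) + #T :=
  calc m * #{p ∈ X | p ∈ l} = ∑ p ∈ X with p ∈ l, m := by rw [sum_const, smul_eq_mul, mul_comm]
    _ ≤ ∑ p ∈ X with p ∈ l, (m - lineCount T p + lineCount T p) :=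
      sum_le_sum fun p _ => le_tsub_add
    _ = lineSum X l (fun p => m - lineCount T p) + ∑ p ∈ X with p ∈ l, lineCount T p :=
      sum_add_distrib
    _ ≤ lineSum X l (fun p => m - lineCount T p) + #T :=
      Nat.add_le_add_left (sum_lineCount_le X hl) _

theorem card_filter_mem_le_add (X : Finset P) {T : Finset L} {l : L} (hl : l ∉ T) :
    #{p ∈ X | p ∈ l} ≤ #{p ∈ {p ∈ X | lineCount T p = 0} | p ∈ l} + #T := by
  induction T using Finset.induction_on with
  | empty => simp [lineCount_empty]
  | insert a T ha ih =>
    rw [mem_insert, not_or] at hl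
    have := card_filter_mem_le_succ {p ∈ X | lineCount T p = 0} (Ne.symm hl.1)
    rw [filter_lineCount_insert_eq_zero ha, card_insert_of_notMem ha]
    have := ih hl.2
    omega

theorem Triangular.card_le {n : ℕ} {Z : Finset P} (h : Triangular L n Z) (l : L) :
    #{p ∈ Z | p ∈ l} ≤ n := by
  induction h with
  | zero => simp
  | succ n Z a h _ ih =>
    obtain rfl | hal := eq_or_ne a l
    · exact h.le
    · exact (card_filter_mem_le_succ Z hal).trans (by omega)

theorem Triangular.removeLine {n : ℕ} {Z : Finset P} (h : Triangular L (n + 1) Z) {l : L}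
    (hl : #{p ∈ Z | p ∈ l} = n + 1) : Triangular L n {p ∈ Z | p ∉ l} := by
  induction n generalizing Z with
  | zero =>
    have hsplit := card_filter_add_card_filter_not (s := Z) (· ∈ l)
    rw [h.card_eq_one] at hsplit
    rw [card_eq_zero.1 (show #{p ∈ Z | p ∉ l} = 0 by omega)]
    exact .zero
  | succ n ih =>
    obtain _ | ⟨_, _, a, ha, hZ⟩ := h
    obtain rfl | hal := eq_or_ne a l
    · exact hZ
    have hZl : #{p ∈ {p ∈ Z | p ∉ a} | p ∈ l} = n + 1 := by
      have := card_filter_mem_le_succ Z hal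
      have := hZ.card_le l
      omega
    refine .succ n _ a ?_ (by rw [filter_comm]; exact ih hZ hZl)
    have := card_filter_mem_le_succ Z hal.symm
    have hsplit := card_filter_add_card_filter_not (s := {p ∈ Z | p ∈ a}) (· ∈ l)
    have hsplit' := card_filter_add_card_filter_not (s := {p ∈ Z | p ∈ l}) (· ∈ a)
    rw [filter_comm] at hsplit
    rw [filter_comm] at hZl
    rw [filter_comm]
    omega

theorem Triangular.removeLines {s : ℕ} {X : Finset P} (h : Triangular L s X) {T : Finset L}
    (hT : ∀ l ∈ T, #{p ∈ X | p ∈ l} = s) (hTs : #T ≤ s) :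
    Triangular L (s - #T) {p ∈ X | lineCount T p = 0} := by
  induction T using Finset.induction_on with
  | empty => simpa [lineCount_empty] using h
  | insert a T ha ih =>
    rw [card_insert_of_notMem ha] at hTs ⊢
    have hrest := ih (fun l hl => hT l (mem_insert_of_mem hl)) (by omega)
    have hcard : #{p ∈ {p ∈ X | lineCount T p = 0} | p ∈ a} = s - #T := by
      have := hT a (mem_insert_self a T)
      have := card_filter_mem_le_add X ha
      have := hrest.card_le a
      omega
    obtain ⟨k, hk⟩ : ∃ k, s - #T = k + 1 := ⟨s - #T - 1, by omega⟩
    rw [hk] at hrest hcard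
    rw [filter_lineCount_insert_eq_zero ha, show s - (#T + 1) = k by omega]
    exact hrest.removeLine hcard

/-- `Λ` is the set of lines containing exactly `s` points of a configuration `X` of type
`(1, …, s)`, and there are fewer than `s` such lines. -/
structure IsRichLines (s : ℕ) (X : Finset P) (Λ : Finset L) : Prop where
  triangular : Triangular L s X
  mem_iff (l : L) : l ∈ Λ ↔ #{p ∈ X | p ∈ l} = s
  card_lt : #Λ < s

namespace IsRichLines

variable {s : ℕ} {X : Finset P} {Λ : Finset L}

theorem triangular_filter_eq_zero (h : IsRichLines s X Λ) {T : Finset L} (hT : T ⊆ Λ) :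
    Triangular L (s - #T) {p ∈ X | lineCount T p = 0} :=
  h.triangular.removeLines (fun l hl => (h.mem_iff l).1 (hT hl))
    ((card_le_card hT).trans h.card_lt.le)

theorem exists_mem_mem (h : IsRichLines s X Λ) {l M : L} (hl : l ∈ Λ) (hM : M ∈ Λ) :
    ∃ p ∈ X, p ∈ l ∧ p ∈ M := by
  by_contra! hdisj
  have hle := (h.triangular_filter_eq_zero (singleton_subset_iff.2 hM)).card_le l
  have hsub : ({p ∈ X | p ∈ l} : Finset P) ⊆ {p ∈ {p ∈ X | lineCount {M} p = 0} | p ∈ l} :=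
    fun p hp => by
      rw [mem_filter] at hp
      simpa [lineCount, filter_singleton, hp] using hdisj p hp.1 hp.2
  have := (h.mem_iff l).1 hl
  have := card_le_card hsub
  have := h.card_lt
  rw [card_singleton] at hle
  omega

theorem card_lineCount_eq_one (h : IsRichLines s X Λ) {l : L} (hl : l ∈ Λ) :
    #{p ∈ X | p ∈ l ∧ lineCount Λ p = 1} + #Λ = s + 1 := by
  have hge := card_filter_mem_le_add X (notMem_erase l Λ)
  have hle := (h.triangular_filter_eq_zero (erase_subset l Λ)).card_le l
  have heq : ({p ∈ X | p ∈ l ∧ lineCount Λ p = 1} : Finset P) =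
      {p ∈ {p ∈ X | lineCount (Λ.erase l) p = 0} | p ∈ l} := by
    ext p
    simp only [mem_filter, and_assoc]
    refine and_congr_right fun _ => ⟨fun hp => ?_, fun hp => ?_⟩
    · have := lineCount_erase hl hp.1
      exact ⟨by omega, hp.1⟩
    · have := lineCount_erase hl hp.2
      exact ⟨hp.2, by omega⟩
  rw [card_erase_of_mem hl] at hle hge
  rw [(h.mem_iff l).1 hl] at hge
  have := card_pos.2 ⟨l, hl⟩
  have := h.card_lt
  rw [heq]
  omega

theorem le_sum_min_lineCount (h : IsRichLines s X Λ) {l : L} (hl : l ∈ Λ) :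
    s + #Λ ≤ ∑ p ∈ X with p ∈ l, min (lineCount Λ p) 2 + 1 := by
  have hsum : ∑ p ∈ X with p ∈ l, (min (lineCount Λ p) 2 + if lineCount Λ p = 1 then 1 else 0) =
      2 * s := by
    rw [← (h.mem_iff l).1 hl, mul_comm, ← smul_eq_mul, ← sum_const]
    refine sum_congr rfl fun p hp => ?_
    have := lineCount_pos hl (mem_filter.1 hp).2
    split_ifs <;> omega
  rw [sum_add_distrib, ← card_filter, filter_filter] at hsum
  have := h.card_lineCount_eq_one hl
  omega

theorem lineSum_add_le (h : IsRichLines s X Λ) {l : L} (hl : l ∈ Λ) {f : P → ℕ} {B : ℕ}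
    (hf : ∀ p ∈ X, p ∈ l → f p + min (lineCount Λ p) 2 ≤ B + 1) :
    lineSum X l f + #Λ ≤ B * s + 1 := by
  have hsum : lineSum X l f + ∑ p ∈ X with p ∈ l, min (lineCount Λ p) 2 ≤ (B + 1) * s := by
    rw [lineSum, ← sum_add_distrib, mul_comm, ← (h.mem_iff l).1 hl, ← smul_eq_mul]
    exact sum_le_card_nsmul _ _ _ fun p hp => hf p (mem_filter.1 hp).1 (mem_filter.1 hp).2
  have := h.le_sum_min_lineCount hl
  rw [add_one_mul] at hsum
  omega

theorem lineSum_add_le_of_lt (h : IsRichLines s X Λ) {l : L} (hl : l ∈ Λ) {f : P → ℕ} {B : ℕ}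
    (hf : ∀ p ∈ X, p ∈ l → f p + min (lineCount Λ p) 2 ≤ B + 1) {q : P} (hqX : q ∈ X)
    (hql : q ∈ l) (hq : f q + min (lineCount Λ q) 2 ≤ B) :
    lineSum X l f + #Λ ≤ B * s := by
  have hlt : lineSum X l f < lineSum X l (Function.update f q (f q + 1)) := by
    refine sum_lt_sum (fun p _ => ?_) ⟨q, mem_filter.2 ⟨hqX, hql⟩, by simp⟩
    obtain rfl | hpq := eq_or_ne p q
    · simp
    · rw [Function.update_of_ne hpq]
  have hle := h.lineSum_add_le hl (f := Function.update f q (f q + 1)) (B := B) fun p hp hpl => by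
    obtain rfl | hpq := eq_or_ne p q
    · rw [Function.update_self]; omega
    · rw [Function.update_of_ne hpq]; exact hf p hp hpl
  omega

-- Removing `M` first lowers the multiplicity of a point on each other rich line, which leaves these
-- lines just light enough to be removed as well.
theorem peelable_of_peelable_sub (h : IsRichLines s X Λ) {M : L} (hM : M ∈ Λ) {f : P → ℕ}
    {m : ℕ} (hm : 2 ≤ m) (hfm : ∀ p ∈ X, f p ≤ m) (hf : ∀ p ∈ X, f p ≤ m + 1 - lineCount Λ p)
    {q : P} (hqX : q ∈ X) (hqM : q ∈ M) (hq : f q + min (lineCount Λ q) 2 ≤ m)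
    (hpeel : Peelable L X (fun p => f p - lineCount Λ p) (m * s - 1 - #Λ)) :
    Peelable L X f (m * s - 1) := by
  have hslack (p) (hp : p ∈ X) : f p + min (lineCount Λ p) 2 ≤ m + 1 := by
    have := hfm p hp
    have := hf p hp
    omega
  have hsumM := h.lineSum_add_le_of_lt hM (fun p hp _ => hslack p hp) hqX hqM hq
  have hsum (l) (hl : l ∈ Λ.erase M) : lineSum X l (strip M f) + #Λ ≤ m * s := by
    obtain ⟨hlM, hlΛ⟩ := mem_erase.1 hl
    obtain ⟨p, hpX, hpl, hpM⟩ := h.exists_mem_mem hlΛ hM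
    refine h.lineSum_add_le_of_lt hlΛ
      (fun a ha _ => (Nat.add_le_add_right (strip_le M f a) _).trans (hslack a ha)) hpX hpl ?_
    have := two_le_lineCount hlΛ hM hlM hpl hpM
    have := hf p hpX
    rw [strip_of_mem hpM]
    omega
  have hpos := card_pos.2 ⟨M, hM⟩
  have hms : s ≤ m * s := Nat.le_mul_of_pos_left s (by omega)
  have hlt := h.card_lt
  have hcard : #(Λ.erase M) + 1 = #Λ := card_erase_add_one hM
  rw [show m * s - 1 = m * s - 1 - #Λ + #(Λ.erase M) + 1 by omega]
  refine .strip f _ M (by omega)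
    (.of_lines (Λ.erase M) (fun l hl => by have := hsum l hl; omega) ?_)
  simpa only [strip_sub_lineCount (notMem_erase M Λ), insert_erase hM] using hpeel

theorem peelable_of_eq_zero (h : IsRichLines s X Λ) {M : L} (hM : M ∈ Λ) {f : P → ℕ}
    (hf1 : ∀ p ∈ X, f p ≤ 1) (hf : ∀ p ∈ X, f p ≤ 2 - lineCount Λ p)
    (hfM : ∀ p ∈ X, p ∈ M → f p = 0) : Peelable L X f (s - 1) := by
  have hpos := card_pos.2 ⟨M, hM⟩
  have hlt := h.card_lt
  have hcard : #(Λ.erase M) + 1 = #Λ := card_erase_add_one hM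
  rw [show s - 1 = s - #Λ + #(Λ.erase M) by omega]
  refine .of_lines (Λ.erase M) (fun l hl => ?_) ((h.triangular_filter_eq_zero
    Subset.rfl).peelable (filter_subset _ _) (fun p hp => ?_) (fun p hp hp0 => ?_))
  · have := h.lineSum_add_le (mem_of_mem_erase hl) (f := f) (B := 1) fun p hp _ => by
      have := hf1 p hp
      have := hf p hp
      omega
    omega
  · exact (Nat.sub_le _ _).trans (hf1 p (mem_filter.1 hp).1)
  · by_cases hpM : p ∈ M
    · rw [hfM p hp hpM, Nat.zero_sub]
    · have hcount := lineCount_insert (notMem_erase M Λ) p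
      rw [insert_erase hM, if_neg hpM, add_zero] at hcount
      have hp0 : lineCount Λ p ≠ 0 := fun h0 => hp0 (mem_filter.2 ⟨hp, h0⟩)
      have := hf1 p hp
      omega

end IsRichLines

end Nondegenerate

section HasLines

variable [Configuration.HasLines P L]

-- One pass over the lines of `Z` lowers every multiplicity to at most `μ`. The last of these lines
-- meets `Z` in a single point, so it may be replaced by the line joining that point to `q`.
theorem Triangular.exists_peelable_add {X Z : Finset P} {n s μ : ℕ} (h : Triangular L n Z)
    (hn : 1 ≤ n) (hμ : 1 ≤ μ) (hZX : Z ⊆ X)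
    (hs : ∀ l : L, ∀ p ∈ Z, p ∈ l → #{p ∈ X | p ∈ l} < s) {q : P} (hq : q ∉ Z) {f : P → ℕ}
    (hZ : ∀ p ∈ Z, f p ≤ μ + 1) (hX : ∀ p ∈ X, p ∉ Z → f p ≤ μ) :
    ∃ g : P → ℕ, (∀ p, g p ≤ f p) ∧ (∀ p ∈ X, g p ≤ μ) ∧ g q ≤ f q - 1 ∧
      (Peelable L X g (μ * s - 1) → Peelable L X f (μ * s - 1 + n)) := by
  induction h generalizing f with
  | zero => omega
  | succ n Z l h hZl ih =>
    obtain rfl | hn := n.eq_zero_or_pos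
    · obtain ⟨p, rfl⟩ := Finset.card_eq_one.1 (Triangular.card_eq_one (.succ 0 Z l h hZl))
      have hpq : p ≠ q := fun hpq => hq (by simp [hpq])
      obtain ⟨hp, hql⟩ := Configuration.HasLines.mkLine_ax (L := L) hpq
      refine ⟨strip (Configuration.HasLines.mkLine hpq : L) f, strip_le _ f, fun a ha => ?_,
        (strip_of_mem hql f).le, .strip f _ _ ((lineSum_le_mul_sub_one_add hZX hμ
          (hs _ p (mem_singleton_self p) hp) hZ hX).trans (Nat.add_le_add_left ?_ _))⟩
      · refine strip_le_of_le_succ_on hZ hX a ha ?_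
        simp only [mem_filter, mem_singleton, not_and, not_not]
        rintro rfl
        exact hp
      · exact (card_filter_le _ _).trans (card_singleton p).le
    · obtain ⟨p, hp⟩ := card_pos.1 (show 0 < #{p ∈ Z | p ∈ l} by omega)
      rw [mem_filter] at hp
      obtain ⟨g, hgf, hgμ, hgq, hg⟩ := ih hn ((filter_subset _ _).trans hZX)
        (fun l p hp => hs l p (mem_filter.1 hp).1) (fun hq' => hq (mem_filter.1 hq').1)
        (fun p hp => (strip_le l f p).trans (hZ p (mem_filter.1 hp).1))
        (strip_le_of_le_succ_on hZ hX)
      refine ⟨g, fun a => (hgf a).trans (strip_le l f a), hgμ,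
        hgq.trans (Nat.sub_le_sub_right (strip_le l f q) 1),
        fun hpeel => .strip f _ l ?_ (hg hpeel)⟩
      exact (lineSum_le_mul_sub_one_add hZX hμ (hs l p hp.1 hp.2) hZ hX).trans
        (Nat.add_le_add_left h.le _)

namespace IsRichLines

variable {s : ℕ} {X : Finset P} {Λ : Finset L}

theorem exists_peelable_sub_card (h : IsRichLines s X Λ) {μ : ℕ} (hμ : 1 ≤ μ) {q : P}
    (hq : lineCount Λ q ≠ 0) {f : P → ℕ} (hf : ∀ p ∈ X, f p ≤ μ + 1 - lineCount Λ p) :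
    ∃ g : P → ℕ, (∀ p, g p ≤ f p) ∧ (∀ p ∈ X, g p ≤ μ) ∧ g q ≤ f q - 1 ∧
      (Peelable L X g (μ * s - 1) → Peelable L X f ((μ + 1) * s - 1 - #Λ)) := by
  have hlt := h.card_lt
  have hμs : s ≤ μ * s := Nat.le_mul_of_pos_left s (by omega)
  rw [show (μ + 1) * s - 1 - #Λ = μ * s - 1 + (s - #Λ) by rw [add_one_mul]; omega]
  refine (h.triangular_filter_eq_zero Subset.rfl).exists_peelable_add (by omega) hμ
    (filter_subset _ _) (fun l p hp hpl => ?_) (fun hq0 => hq (mem_filter.1 hq0).2)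
    (fun p hp => ?_) (fun p hp hp0 => ?_)
  · refine lt_of_le_of_ne (h.triangular.card_le l) fun hcard => ?_
    exact (lineCount_pos ((h.mem_iff l).2 hcard) hpl).ne' (mem_filter.1 hp).2
  · exact (hf p (mem_filter.1 hp).1).trans (Nat.sub_le _ _)
  · have hp0 : lineCount Λ p ≠ 0 := fun h0 => hp0 (mem_filter.2 ⟨hp, h0⟩)
    have := hf p hp
    omega

end IsRichLines

/-- The multiplicities on `X` reached in the course of peeling: at most `m`, reduced by one for each
rich line through the point. On the distinguished rich line `M` the bound may be attained in fewer
than `m` of the points lying on no other rich line, so that lines through these points can be chosen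
one at a time while `m` decreases. -/
structure IsCapped (X : Finset P) (Λ : Finset L) (M : L) (m : ℕ) (f : P → ℕ) : Prop where
  le_sub : ∀ p ∈ X, f p ≤ m - lineCount Λ p
  card_lt : #{p ∈ X | (p ∈ M ∧ lineCount Λ p = 1) ∧ m ≤ f p + 1} < m

namespace IsRichLines

variable {s : ℕ} {X : Finset P} {Λ : Finset L}

theorem isCapped_sub (h : IsRichLines s X Λ) {M : L} (hM : M ∈ Λ) {m : ℕ}
    (hm : s + 2 ≤ m + #Λ) : IsCapped X Λ M m (fun p => m - lineCount Λ p) where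
  le_sub _ _ := le_rfl
  card_lt := by
    have := h.card_lineCount_eq_one hM
    have hle : #{p ∈ X | (p ∈ M ∧ lineCount Λ p = 1) ∧ m ≤ m - lineCount Λ p + 1} ≤
        #{p ∈ X | p ∈ M ∧ lineCount Λ p = 1} := by
      rw [← filter_filter]
      exact card_filter_le _ _
    omega

theorem exists_card_erase_lt (h : IsRichLines s X Λ) {M : L} (hM : M ∈ Λ) {m : ℕ} (hm : 1 ≤ m)
    {f : P → ℕ} (hf : IsCapped X Λ M (m + 1) f) : ∃ q ∈ X, (q ∈ M ∧ lineCount Λ q = 1) ∧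
      #(({p ∈ X | (p ∈ M ∧ lineCount Λ p = 1) ∧ m ≤ f p} : Finset P).erase q) < m := by
  have hlt := hf.card_lt
  simp only [add_le_add_iff_right] at hlt
  obtain hempty | ⟨q, hq⟩ :=
    ({p ∈ X | (p ∈ M ∧ lineCount Λ p = 1) ∧ m ≤ f p} : Finset P).eq_empty_or_nonempty
  · have := h.card_lineCount_eq_one hM
    have := h.card_lt
    obtain ⟨q, hq⟩ := card_pos.1 (show 0 < #{p ∈ X | p ∈ M ∧ lineCount Λ p = 1} by omega)
    refine ⟨q, (mem_filter.1 hq).1, (mem_filter.1 hq).2, ?_⟩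
    rwa [hempty, erase_empty, card_empty]
  · refine ⟨q, (mem_filter.1 hq).1, (mem_filter.1 hq).2.1, ?_⟩
    have := card_erase_add_one hq
    omega

theorem peelable_of_isCapped (h : IsRichLines s X Λ) {M : L} (hM : M ∈ Λ) {m : ℕ} (hm : 2 ≤ m)
    {f : P → ℕ} (hf : IsCapped X Λ M m f) : Peelable L X f (m * s - 1 - #Λ) := by
  induction m, hm using Nat.le_induction generalizing f with
  | base =>
    obtain ⟨q, hqX, ⟨hqM, hq1⟩, hq⟩ := h.exists_card_erase_lt hM le_rfl hf
    obtain ⟨g, hgf, hg1, hgq, hg⟩ := h.exists_peelable_sub_card le_rfl (q := q) (by omega) hf.le_sub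
    refine hg ?_
    rw [one_mul]
    refine h.peelable_of_eq_zero hM hg1 (fun p hp => (hgf p).trans (hf.le_sub p hp))
      fun p hp hpM => by_contra fun hgp => ?_
    have hcap := hf.le_sub p hp
    have := hgf p
    have := lineCount_pos hM hpM
    have hpq : p ≠ q := by rintro rfl; omega
    have hmem : p ∈ ({p ∈ X | (p ∈ M ∧ lineCount Λ p = 1) ∧ 1 ≤ f p} : Finset P) :=
      mem_filter.2 ⟨hp, ⟨hpM, by omega⟩, by omega⟩
    exact hq.not_ge (card_pos.2 ⟨p, mem_erase.2 ⟨hpq, hmem⟩⟩)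
  | succ m hm ih =>
    obtain ⟨q, hqX, ⟨hqM, hq1⟩, hq⟩ := h.exists_card_erase_lt hM (by omega) hf
    obtain ⟨g, hgf, hgm, hgq, hg⟩ :=
      h.exists_peelable_sub_card (by omega) (q := q) (by omega) hf.le_sub
    have hqle := hf.le_sub q hqX
    refine hg (h.peelable_of_peelable_sub hM hm hgm
      (fun p hp => (hgf p).trans (hf.le_sub p hp)) hqX hqM (by omega) (ih ⟨fun p hp => ?_, ?_⟩))
    · exact Nat.sub_le_sub_right (hgm p hp) _
    · refine (card_le_card fun p hp => ?_).trans_lt hq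
      obtain ⟨hpX, hpM, hpm⟩ := mem_filter.1 hp
      have := hgf p
      refine mem_erase.2 ⟨?_, mem_filter.2 ⟨hpX, hpM, by omega⟩⟩
      rintro rfl
      omega

theorem peelable (h : IsRichLines s X Λ) (hΛ : Λ.Nonempty) {m : ℕ} (hm : s + 2 ≤ m + #Λ) :
    Peelable L X (fun p => m - lineCount Λ p) (m * s - 1 - #Λ) := by
  obtain ⟨M, hM⟩ := hΛ
  have := h.card_lt
  exact h.peelable_of_isCapped hM (by omega) (h.isCapped_sub hM hm)

end IsRichLines

end HasLines

end Incidence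

section LinearForms

open MvPolynomial Matrix

variable {σ K : Type*} [Fintype σ] [Field K]

/-- The linear form with coefficient vector `a`. -/
noncomputable def linForm (a : σ → K) : MvPolynomial σ K := ∑ j, C (a j) * X j

theorem isHomogeneous_linForm (a : σ → K) : (linForm a).IsHomogeneous 1 :=
  .sum _ _ _ fun j _ => isHomogeneous_C_mul_X (a j) j

theorem eval_linForm (a x : σ → K) : eval x (linForm a) = a ⬝ᵥ x := by
  simp [linForm, dotProduct]

theorem exists_eq_linForm {F : MvPolynomial σ K} (hF : F.IsHomogeneous 1) :
    ∃ a, F = linForm a := by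
  rw [← mem_homogeneousSubmodule, homogeneousSubmodule_one_eq_span_X,
    Submodule.mem_span_range_iff_exists_fun] at hF
  obtain ⟨a, rfl⟩ := hF
  exact ⟨a, by simp [linForm, smul_eq_C_mul]⟩

theorem linForm_ne_zero {a : σ → K} (ha : a ≠ 0) : linForm a ≠ 0 := by
  classical
  refine fun h => ha (funext fun j => ?_)
  simpa [eval_linForm] using congrArg (eval (Pi.single j 1)) h

theorem irreducible_linForm {a : σ → K} (ha : a ≠ 0) : Irreducible (linForm a) := by
  have hdeg := (isHomogeneous_linForm a).totalDegree (linForm_ne_zero ha)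
  obtain ⟨d, hd⟩ := ne_zero_iff.1 (linForm_ne_zero ha)
  exact irreducible_of_totalDegree_eq_one hdeg fun c hc =>
    isUnit_iff_ne_zero.2 (ne_zero_of_dvd_ne_zero hd (hc d))

end LinearForms

section HomogeneousForms

open MvPolynomial Matrix Module

variable (σ K : Type*) [Field K]

/-- The homogeneous polynomials of degree `n - 1`. Shifting the degree makes subtraction of degrees
total: there is only the zero form of degree `-1`. -/
noncomputable def predForms : ℕ → Submodule K (MvPolynomial σ K)
  | 0 => ⊥
  | t + 1 => homogeneousSubmodule σ K t

instance [Finite σ] (n : ℕ) : FiniteDimensional K (predForms σ K n) :=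
  match n with
  | 0 => inferInstanceAs (FiniteDimensional K (⊥ : Submodule K (MvPolynomial σ K)))
  | t + 1 => Module.Finite.iff_fg.2 (homogeneousSubmodule_fg σ K t)

theorem finrank_homogeneousSubmodule [Fintype σ] (t : ℕ) :
    finrank K (homogeneousSubmodule σ K t) = (Fintype.card σ + t - 1).choose t := by
  classical
  have hexp : {d : σ →₀ ℕ | d.degree = t} = (Finset.univ : Finset σ).finsuppAntidiag t := by
    ext d
    simp [Finset.mem_finsuppAntidiag, Finsupp.degree_eq_sum]
  have hsupp : homogeneousSubmodule σ K t = restrictSupport K {d : σ →₀ ℕ | d.degree = t} :=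
    homogeneousSubmodule_eq_finsupp_supported σ K t
  rw [hsupp, finrank_eq_nat_card_basis (basisRestrictSupport K _), hexp,
    Nat.card_coe_set_eq, Set.ncard_coe_finset, Finset.card_finsuppAntidiag_nat_eq_choose,
    Finset.card_univ]

theorem finrank_predForms_fin_two (n : ℕ) : finrank K (predForms (Fin 2) K n) = n := by
  obtain _ | t := n
  · exact finrank_bot K _
  · rw [predForms, finrank_homogeneousSubmodule, Fintype.card_fin, show 2 + t - 1 = t + 1 by omega,
      Nat.choose_succ_self_right]

theorem finrank_predForms_fin_three (n : ℕ) :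
    finrank K (predForms (Fin 3) K n) = (n + 1).choose 2 := by
  obtain _ | t := n
  · exact finrank_bot K _
  · rw [predForms, finrank_homogeneousSubmodule, Fintype.card_fin, show 3 + t - 1 = t + 2 by omega,
      Nat.choose_symm_add]

variable {σ K}

theorem mul_mem_predForms_succ {D F : MvPolynomial σ K} (hD : D.IsHomogeneous 1) {n : ℕ}
    (hF : F ∈ predForms σ K n) : D * F ∈ predForms σ K (n + 1) := by
  obtain _ | t := n
  · rw [(Submodule.mem_bot K).1 hF, mul_zero]
    exact zero_mem _
  · rw [predForms, mem_homogeneousSubmodule, add_comm]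
    exact hD.mul hF

theorem exists_eq_mul_of_dvd {D F : MvPolynomial σ K} {m n : ℕ} (hD : D.IsHomogeneous m)
    (hF : F ∈ predForms σ K n) (hDF : D ∣ F) : ∃ G ∈ predForms σ K (n - m), F = D * G := by
  obtain _ | t := n
  · exact ⟨0, zero_mem _, by rw [(Submodule.mem_bot K).1 hF, mul_zero]⟩
  obtain ⟨G, rfl⟩ := hDF
  let : GradedAlgebra (homogeneousSubmodule σ K) := MvPolynomial.gradedAlgebra
  have hdec := DirectSum.coe_decompose_mul_of_left_mem (homogeneousSubmodule σ K) t (b := G)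
    ((mem_homogeneousSubmodule m D).2 hD)
  rw [DirectSum.decompose_of_mem_same (homogeneousSubmodule σ K) hF] at hdec
  split_ifs at hdec with hmt
  · refine ⟨_, ?_, hdec⟩
    rw [Nat.succ_sub hmt]
    exact SetLike.coe_mem (DirectSum.decompose (homogeneousSubmodule σ K) G (t - m))
  · exact ⟨0, zero_mem _, by rw [hdec, mul_zero]⟩

end HomogeneousForms

section Elimination

open MvPolynomial Matrix

variable {K : Type*} [Field K] {n : ℕ}

/-- Restriction of polynomials to the hyperplane with equation `linForm a`, on which the
coordinate `X i` with `a i ≠ 0` is a combination of the other ones. -/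
noncomputable def eliminate (a : Fin (n + 1) → K) (i : Fin (n + 1)) :
    MvPolynomial (Fin (n + 1)) K →ₐ[K] MvPolynomial (Fin n) K :=
  aeval (i.insertNth (C (-(a i)⁻¹) * linForm (i.removeNth a)) X)

theorem linForm_eq_add_rename (a : Fin (n + 1) → K) (i : Fin (n + 1)) :
    linForm a = C (a i) * X i + rename i.succAbove (linForm (i.removeNth a)) := by
  simp [linForm, Fin.sum_univ_succAbove _ i, Fin.removeNth]

theorem eliminate_rename (a : Fin (n + 1) → K) (i : Fin (n + 1)) (F : MvPolynomial (Fin n) K) :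
    eliminate a i (rename i.succAbove F) = F := by
  rw [eliminate, aeval_rename]
  convert aeval_X_left_apply F
  ext j : 1
  simp

theorem eliminate_linForm {a : Fin (n + 1) → K} {i : Fin (n + 1)} (hi : a i ≠ 0) :
    eliminate a i (linForm a) = 0 := by
  rw [linForm_eq_add_rename a i, map_add, eliminate_rename, map_mul]
  simp [eliminate, ← mul_assoc, ← map_mul, hi]

theorem linForm_dvd_sub_rename_eliminate {a : Fin (n + 1) → K} {i : Fin (n + 1)} (hi : a i ≠ 0)
    (F : MvPolynomial (Fin (n + 1)) K) :
    linForm a ∣ F - rename i.succAbove (eliminate a i F) := by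
  let π := Ideal.Quotient.mkₐ K (Ideal.span {linForm a})
  have hπ : π = π.comp ((rename i.succAbove).comp (eliminate a i)) := by
    ext j : 1
    refine Ideal.Quotient.eq.2 (Ideal.mem_span_singleton.2 ?_)
    obtain rfl | ⟨j, rfl⟩ := i.eq_self_or_eq_succAbove j
    · refine ⟨C (a j)⁻¹, ?_⟩
      have helim : eliminate a j (X j) = C (-(a j)⁻¹) * linForm (j.removeNth a) := by
        simp [eliminate]
      have hC : C (a j) * C (a j)⁻¹ = (1 : MvPolynomial (Fin (n + 1)) K) := by
        rw [← map_mul, mul_inv_cancel₀ hi, map_one]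
      rw [RingHom.coe_coe, AlgHom.comp_apply, helim, map_mul, rename_C, map_neg,
        linForm_eq_add_rename a j]
      linear_combination (-X j) * hC
    · simp [eliminate]
  exact Ideal.mem_span_singleton.1 (Ideal.Quotient.eq.1 (DFunLike.congr_fun hπ F))

theorem eliminate_eq_zero_iff {a : Fin (n + 1) → K} {i : Fin (n + 1)} (hi : a i ≠ 0)
    {F : MvPolynomial (Fin (n + 1)) K} : eliminate a i F = 0 ↔ linForm a ∣ F := by
  refine ⟨fun h => ?_, fun ⟨G, hG⟩ => by rw [hG, map_mul, eliminate_linForm hi, zero_mul]⟩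
  simpa [h] using linForm_dvd_sub_rename_eliminate hi F

theorem isHomogeneous_eliminate (a : Fin (n + 1) → K) (i : Fin (n + 1))
    {F : MvPolynomial (Fin (n + 1)) K} {t : ℕ} (hF : F.IsHomogeneous t) :
    (eliminate a i F).IsHomogeneous t := by
  rw [← one_mul t]
  refine hF.aeval _ fun j => ?_
  obtain rfl | ⟨j, rfl⟩ := i.eq_self_or_eq_succAbove j
  · rw [Fin.insertNth_apply_same]
    exact (isHomogeneous_linForm _).C_mul _
  · rw [Fin.insertNth_apply_succAbove]
    exact isHomogeneous_X K j

theorem eliminate_mem_predForms (a : Fin (n + 1) → K) (i : Fin (n + 1))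
    {F : MvPolynomial (Fin (n + 1)) K} {t : ℕ} (hF : F ∈ predForms (Fin (n + 1)) K t) :
    eliminate a i F ∈ predForms (Fin n) K t := by
  obtain _ | t := t
  · rw [(Submodule.mem_bot K).1 hF, map_zero]
    exact zero_mem _
  · exact isHomogeneous_eliminate a i hF

theorem eval_eliminate {a p : Fin (n + 1) → K} {i : Fin (n + 1)} (hi : a i ≠ 0)
    (hp : a ⬝ᵥ p = 0) (F : MvPolynomial (Fin (n + 1)) K) :
    eval (i.removeNth p) (eliminate a i F) = eval p F := by
  induction F using MvPolynomial.induction_on with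
  | C c => simp [eliminate]
  | add F G hF hG => simp only [map_add, hF, hG]
  | mul_X F j hF =>
    rw [map_mul, map_mul, map_mul, hF, eval_X]
    congr 1
    obtain rfl | ⟨j, rfl⟩ := i.eq_self_or_eq_succAbove j
    · rw [dotProduct, Fin.sum_univ_succAbove _ j] at hp
      have hsum : j.removeNth a ⬝ᵥ j.removeNth p = -(a j * p j) :=
        eq_neg_of_add_eq_zero_right hp
      simp [eliminate, eval_linForm, hsum, hi]
    · simp [eliminate, Fin.removeNth]

end Elimination

section Deformation

open Polynomial in
theorem mem_pow_iff_X_pow_dvd {A : Type*} [CommRing A] {I : Ideal A} {φ : A →+* A[X]}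
    (hφ : ∀ a, (φ a).eval 1 = a) (hrees : ∀ a, φ a ∈ reesAlgebra I) (hI : ∀ a ∈ I, X ∣ φ a)
    {k : ℕ} {a : A} : a ∈ I ^ k ↔ X ^ k ∣ φ a := by
  constructor
  · intro ha
    have hle : I ≤ (Ideal.span {X}).comap φ := fun b hb => Ideal.mem_span_singleton.2 (hI b hb)
    rw [← Ideal.mem_span_singleton, ← Ideal.span_singleton_pow]
    exact Ideal.le_comap_pow φ k (Ideal.pow_right_mono hle k ha)
  · intro ha
    rw [← hφ a, eval_eq_sum_range]
    refine Ideal.sum_mem _ fun n _ => ?_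
    rw [one_pow, mul_one]
    obtain hn | hn := lt_or_ge n k
    · rw [X_pow_dvd_iff.1 ha n hn]
      exact Ideal.zero_mem _
    · exact Ideal.pow_le_pow_right hn ((mem_reesAlgebra_iff I _).1 (hrees a) n)

open MvPolynomial Matrix

variable {σ K : Type*} [Field K]

/-- The degeneration of the identity (at parameter `1`) to the projection from the hyperplane
`X i = 0` onto the line through `p` (at parameter `0`). The power of the parameter dividing the
image of a polynomial is its order of vanishing at `p`. -/
noncomputable def deform (p : σ → K) (i : σ) :
    MvPolynomial σ K →ₐ[K] Polynomial (MvPolynomial σ K) :=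
  aeval fun j => Polynomial.C (C (p j / p i) * X i) +
    Polynomial.X * Polynomial.C (X j - C (p j / p i) * X i)

theorem eval_one_deform (p : σ → K) (i : σ) (F : MvPolynomial σ K) :
    (deform p i F).eval 1 = F := by
  have hid : ((Polynomial.aeval (1 : MvPolynomial σ K)).restrictScalars K).comp (deform p i) =
      AlgHom.id K _ := by
    ext j : 1
    simp [deform]
  simpa [Polynomial.aeval_def, Polynomial.eval₂_eq_eval_map] using DFunLike.congr_fun hid F

theorem deform_linForm [Fintype σ] (p : σ → K) (i : σ) (a : σ → K) :
    deform p i (linForm a) = Polynomial.C (C (a ⬝ᵥ p / p i) * X i) +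
      Polynomial.X * Polynomial.C (linForm a - C (a ⬝ᵥ p / p i) * X i) := by
  have hC (c : K) : deform p i (C c) = Polynomial.C (C c) := (deform p i).commutes c
  have hdot : C (a ⬝ᵥ p / p i) * X i = ∑ j, C (a j) * (C (p j / p i) * X i : MvPolynomial σ K) := by
    simp only [dotProduct, Finset.sum_div, map_sum, Finset.sum_mul, mul_div_assoc, map_mul,
      mul_assoc]
  rw [hdot, linForm, ← Finset.sum_sub_distrib, map_sum, map_sum, map_sum, Finset.mul_sum,
    ← Finset.sum_add_distrib]
  refine Finset.sum_congr rfl fun j _ => ?_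
  rw [map_mul, hC, deform, aeval_X]
  simp only [map_mul, map_sub]
  ring

end Deformation

section PointIdeal

open MvPolynomial Matrix

variable {K : Type} [Field K]

theorem exists_rep_ne_zero (P : P2 K) : ∃ i, P.rep i ≠ 0 := Function.ne_iff.1 P.rep_nonzero

theorem linForm_mem_pointIdeal {P : P2 K} {a : Fin 3 → K} (h : a ⬝ᵥ P.rep = 0) :
    linForm a ∈ pointIdeal P :=
  Ideal.subset_span ⟨isHomogeneous_linForm a, (eval_linForm a _).trans h⟩

theorem X_sub_mem_pointIdeal (P : P2 K) {i : Fin 3} (hi : P.rep i ≠ 0) (j : Fin 3) :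
    X j - C (P.rep j / P.rep i) * X i ∈ pointIdeal P :=
  Ideal.subset_span ⟨(isHomogeneous_X K j).sub (isHomogeneous_C_mul_X _ i), by simp [hi]⟩

theorem mem_pointIdeal_pow_iff {P : P2 K} {i : Fin 3} (hi : P.rep i ≠ 0) {k : ℕ}
    {F : MvPolynomial (Fin 3) K} :
    F ∈ pointIdeal P ^ k ↔ Polynomial.X ^ k ∣ deform P.rep i F := by
  refine mem_pow_iff_X_pow_dvd (φ := (deform P.rep i).toRingHom) (eval_one_deform _ _)
    (fun G => ?_) fun G hG => ?_
  · have hC (G : MvPolynomial (Fin 3) K) : Polynomial.C G ∈ reesAlgebra (pointIdeal P) :=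
      (reesAlgebra (pointIdeal P)).algebraMap_mem G
    change deform P.rep i G ∈ reesAlgebra (pointIdeal P)
    induction G using MvPolynomial.induction_on with
    | C c => exact (deform P.rep i).commutes c ▸ hC (C c)
    | add F G hF hG => exact map_add (deform P.rep i) F G ▸ add_mem hF hG
    | mul_X F j hF =>
      rw [map_mul]
      refine mul_mem hF ?_
      rw [deform, aeval_X, Polynomial.X_mul_C, Polynomial.C_mul_X_eq_monomial]
      refine add_mem (hC _) (reesAlgebra.monomial_mem.2 ?_)
      rw [pow_one]
      exact X_sub_mem_pointIdeal P hi j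
  · suffices hle : pointIdeal P ≤ (Ideal.span {Polynomial.X}).comap (deform P.rep i) from
      Ideal.mem_span_singleton.1 (hle hG)
    refine Ideal.span_le.2 ?_
    rintro G ⟨hG1, hGP⟩
    obtain ⟨a, rfl⟩ := exists_eq_linForm hG1
    rw [eval_linForm] at hGP
    rw [SetLike.mem_coe, Ideal.mem_comap, deform_linForm, hGP,
      Ideal.mem_span_singleton]
    simp

theorem linForm_mul_mem_pointIdeal_pow_iff_of_eq_zero {P : P2 K} {a : Fin 3 → K} (ha : a ≠ 0)
    (haP : a ⬝ᵥ P.rep = 0) {k : ℕ} {G : MvPolynomial (Fin 3) K} :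
    linForm a * G ∈ pointIdeal P ^ k ↔ G ∈ pointIdeal P ^ (k - 1) := by
  obtain _ | k := k
  · simp
  obtain ⟨i, hi⟩ := exists_rep_ne_zero P
  refine ⟨fun h => ?_, fun h => ?_⟩
  · rw [mem_pointIdeal_pow_iff hi, map_mul, deform_linForm, haP] at h
    simp only [zero_div, map_zero, zero_mul, sub_zero, zero_add, pow_succ', mul_assoc,
      mul_dvd_mul_iff_left Polynomial.X_ne_zero] at h
    refine (mem_pointIdeal_pow_iff hi).2 (Polynomial.prime_X.pow_dvd_of_dvd_mul_left _ ?_ h)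
    simpa [Polynomial.X_dvd_iff] using linForm_ne_zero ha
  · rw [pow_succ']
    exact Ideal.mul_mem_mul (linForm_mem_pointIdeal haP) h

theorem linForm_mul_mem_pointIdeal_pow_iff_of_ne_zero {P : P2 K} {a : Fin 3 → K}
    (haP : a ⬝ᵥ P.rep ≠ 0) {k : ℕ} {G : MvPolynomial (Fin 3) K} :
    linForm a * G ∈ pointIdeal P ^ k ↔ G ∈ pointIdeal P ^ k := by
  obtain ⟨i, hi⟩ := exists_rep_ne_zero P
  refine ⟨fun h => ?_, fun h => Ideal.mul_mem_left _ _ h⟩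
  rw [mem_pointIdeal_pow_iff hi, map_mul, deform_linForm] at h
  refine (mem_pointIdeal_pow_iff hi).2 (Polynomial.prime_X.pow_dvd_of_dvd_mul_left _ ?_ h)
  simp [Polynomial.X_dvd_iff, haP, hi]

end PointIdeal

section Lines

open Matrix Module

variable {K : Type} [Field K]

instance : Membership (P2 K) (ProjLine K) := ⟨fun L P => P ∈ L.points⟩

theorem ProjLine.mem_iff_rep_mem {L : ProjLine K} {P : P2 K} : P ∈ L ↔ P.rep ∈ L.toSubmodule := by
  change P.submodule ≤ L.toSubmodule ↔ _
  rw [Projectivization.submodule_eq, Submodule.span_singleton_le_iff_mem]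

theorem ProjLine.toSubmodule_injective :
    Function.Injective (ProjLine.toSubmodule : ProjLine K → Submodule K (Fin 3 → K)) :=
  fun ⟨_, _⟩ ⟨_, _⟩ h => by cases h; rfl

theorem ProjLine.toSubmodule_lt_top (L : ProjLine K) : L.toSubmodule < ⊤ :=
  Submodule.lt_top_of_finrank_lt_finrank (by simp [L.finrank_eq_two])

/-- The line with equation `linForm a`. -/
noncomputable def lineOfForm (a : Fin 3 → K) (ha : a ≠ 0) : ProjLine K where
  toSubmodule := LinearMap.ker (dotProductBilin K K a)
  finrank_eq_two := by
    have hne : (dotProductBilin K K a : Dual K (Fin 3 → K)) ≠ 0 :=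
      (dotProductEquiv K (Fin 3)).map_ne_zero_iff.2 ha
    simpa using Module.Dual.finrank_ker_add_one_of_ne_zero hne

theorem mem_lineOfForm {a : Fin 3 → K} {ha : a ≠ 0} {P : P2 K} :
    P ∈ lineOfForm a ha ↔ a ⬝ᵥ P.rep = 0 := ProjLine.mem_iff_rep_mem

theorem ProjLine.exists_eq_lineOfForm (L : ProjLine K) : ∃ a ha, L = lineOfForm a ha := by
  obtain ⟨φ, hφ, hle⟩ := Submodule.exists_le_ker_of_lt_top _ L.toSubmodule_lt_top
  obtain ⟨a, rfl⟩ := (dotProductEquiv K (Fin 3)).surjective φ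
  have ha : a ≠ 0 := (dotProductEquiv K (Fin 3)).map_ne_zero_iff.1 hφ
  exact ⟨a, ha, ProjLine.toSubmodule_injective <| Submodule.eq_of_le_of_finrank_eq hle <|
    L.finrank_eq_two.trans (lineOfForm a ha).finrank_eq_two.symm⟩

/-- The line joining two distinct points. -/
noncomputable def lineThrough {P Q : P2 K} (h : P ≠ Q) : ProjLine K where
  toSubmodule := P.submodule ⊔ Q.submodule
  finrank_eq_two := by
    have hli := Projectivization.independent_iff.1
      ((Projectivization.independent_pair_iff_ne P Q).2 h)
    rw [P.submodule_eq, Q.submodule_eq, ← Submodule.span_insert, ← Set.image_pair,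
      ← Matrix.range_cons_cons_empty P Q ![], ← Set.range_comp]
    exact finrank_span_eq_card hli

theorem eq_lineThrough {P Q : P2 K} (h : P ≠ Q) {l : ProjLine K} (hP : P ∈ l) (hQ : Q ∈ l) :
    l = lineThrough h :=
  (ProjLine.toSubmodule_injective <| Submodule.eq_of_le_of_finrank_eq (sup_le hP hQ) <|
    (lineThrough h).finrank_eq_two.trans l.finrank_eq_two.symm).symm

noncomputable instance : Configuration.HasLines (P2 K) (ProjLine K) where
  exists_point l := by
    obtain ⟨v, -, hv⟩ := SetLike.exists_of_lt l.toSubmodule_lt_top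
    have hv0 : v ≠ 0 := fun h => hv (h ▸ zero_mem _)
    exact ⟨.mk K v hv0, fun h => hv (h (by simp [Projectivization.submodule_mk,
      Submodule.mem_span_singleton_self]))⟩
  exists_line P := by
    obtain ⟨i, hi⟩ := exists_rep_ne_zero P
    exact ⟨lineOfForm (Pi.single i 1) (by simp), fun h => hi (by simpa using mem_lineOfForm.1 h)⟩
  eq_or_eq hPl hQl hPm hQm :=
    or_iff_not_imp_left.2 fun h => (eq_lineThrough h hPl hQl).trans (eq_lineThrough h hPm hQm).symm
  mkLine h := lineThrough h
  mkLine_ax {P Q} _ := ⟨show P.submodule ≤ P.submodule ⊔ Q.submodule from le_sup_left,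
    show Q.submodule ≤ P.submodule ⊔ Q.submodule from le_sup_right⟩

end Lines

section Restriction

open Finset MvPolynomial Matrix

variable {K : Type} [Field K]

/-- The linear form in two variables vanishing at `q`, as a divisor the point `q` on a line. -/
noncomputable def pointForm (q : Fin 2 → K) : MvPolynomial (Fin 2) K := linForm ![q 1, -q 0]

theorem eval_pointForm (p q : Fin 2 → K) : eval p (pointForm q) = p 0 * q 1 - p 1 * q 0 := by
  simp only [pointForm, eval_linForm, dotProduct, Fin.sum_univ_two, cons_val_zero, cons_val_one]
  ring

theorem isHomogeneous_pointForm (q : Fin 2 → K) : (pointForm q).IsHomogeneous 1 :=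
  isHomogeneous_linForm _

theorem irreducible_pointForm {q : Fin 2 → K} (hq : q ≠ 0) : Irreducible (pointForm q) :=
  irreducible_linForm fun h => hq <| funext <| Fin.forall_fin_two.2
    ⟨by simpa using congrFun h 1, by simpa using congrFun h 0⟩

theorem pointForm_dvd {q : Fin 2 → K} (hq : q ≠ 0) {F : MvPolynomial (Fin 2) K}
    (hF : F.IsHomogeneous 1) (hFq : eval q F = 0) : pointForm q ∣ F := by
  obtain ⟨b, rfl⟩ := exists_eq_linForm hF
  rw [eval_linForm, dotProduct, Fin.sum_univ_two] at hFq
  have hC : C (b 0) * C (q 0) + C (b 1) * C (q 1) = (0 : MvPolynomial (Fin 2) K) := by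
    simpa using congrArg C hFq
  have hdvd : ∀ j, pointForm q ∣ C (q j) * linForm b := by
    refine Fin.forall_fin_two.2 ⟨⟨C (-b 1), ?_⟩, ⟨C (b 0), ?_⟩⟩ <;>
      simp only [pointForm, linForm, Fin.sum_univ_two, cons_val_zero, cons_val_one, map_neg]
    · linear_combination X 0 * hC
    · linear_combination X 1 * hC
  obtain ⟨j, hj⟩ := Function.ne_iff.1 hq
  exact ((isUnit_iff_ne_zero.2 hj).map C).dvd_mul_left.1 (hdvd j)

theorem eq_zero_of_removeNth_eq_zero {n : ℕ} {a v : Fin (n + 1) → K} {i : Fin (n + 1)}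
    (hi : a i ≠ 0) (hv : a ⬝ᵥ v = 0) (h : i.removeNth v = 0) : v = 0 := by
  rw [dotProduct, Fin.sum_univ_succAbove _ i] at hv
  have hv' (j) : v (i.succAbove j) = 0 := congrFun h j
  simp only [hv', mul_zero, Finset.sum_const_zero, add_zero, mul_eq_zero, hi, false_or] at hv
  exact funext <| i.forall_iff_succAbove.2 ⟨hv, hv'⟩

theorem removeNth_rep_ne_zero {a : Fin 3 → K} {i : Fin 3} (hi : a i ≠ 0) {P : P2 K}
    (hP : a ⬝ᵥ P.rep = 0) : i.removeNth P.rep ≠ 0 :=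
  fun h => P.rep_nonzero (eq_zero_of_removeNth_eq_zero hi hP h)

theorem eq_of_pointForm_dvd {a : Fin 3 → K} {i : Fin 3} (hi : a i ≠ 0) {P Q : P2 K}
    (hP : a ⬝ᵥ P.rep = 0) (hQ : a ⬝ᵥ Q.rep = 0)
    (h : pointForm (i.removeNth P.rep) ∣ pointForm (i.removeNth Q.rep)) : P = Q := by
  set p := i.removeNth P.rep
  set q := i.removeNth Q.rep
  have hpq : p 0 * q 1 - p 1 * q 0 = 0 := by
    have heval := map_dvd (eval p) h
    rwa [eval_pointForm, eval_pointForm, mul_comm (p 0), sub_self, zero_dvd_iff] at heval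
  have hcross : ∀ j k, p j * q k = q j * p k := by
    simp only [Fin.forall_fin_two]
    exact ⟨⟨mul_comm _ _, by linear_combination hpq⟩, by linear_combination -hpq, mul_comm _ _⟩
  obtain ⟨j, hj⟩ := Function.ne_iff.1 (removeNth_rep_ne_zero hi hP)
  have hzero : p j • Q.rep - q j • P.rep = 0 := by
    refine eq_zero_of_removeNth_eq_zero hi (by simp [dotProduct_sub, hP, hQ]) ?_
    exact funext fun k => sub_eq_zero.2 (hcross j k)
  have hrep : Q.rep = ((p j)⁻¹ * q j) • P.rep := by
    rw [mul_smul, ← sub_eq_zero.1 hzero, inv_smul_smul₀ hj]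
  rw [← P.mk_rep, ← Q.mk_rep, eq_comm, Projectivization.mk_eq_mk_iff']
  exact ⟨_, hrep.symm⟩

theorem pointForm_pow_dvd_eliminate {a : Fin 3 → K} {i : Fin 3} (hi : a i ≠ 0) {P : P2 K}
    (hP : a ⬝ᵥ P.rep = 0) {k : ℕ} {F : MvPolynomial (Fin 3) K} (hF : F ∈ pointIdeal P ^ k) :
    pointForm (i.removeNth P.rep) ^ k ∣ eliminate a i F := by
  have hle : pointIdeal P ≤ (Ideal.span {pointForm (i.removeNth P.rep)}).comap (eliminate a i) :=
    Ideal.span_le.2 fun G hG => Ideal.mem_span_singleton.2 <|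
      pointForm_dvd (removeNth_rep_ne_zero hi hP) (isHomogeneous_eliminate a i hG.1)
        ((eval_eliminate hi hP G).trans hG.2)
  rw [← Ideal.mem_span_singleton, ← Ideal.span_singleton_pow]
  exact Ideal.le_comap_pow (eliminate a i) k (Ideal.pow_right_mono hle k hF)

theorem prod_pointForm_pow_dvd_eliminate {a : Fin 3 → K} {i : Fin 3} (hi : a i ≠ 0)
    {Y : Finset (P2 K)} (hY : ∀ P ∈ Y, a ⬝ᵥ P.rep = 0) {f : P2 K → ℕ} {F : MvPolynomial (Fin 3) K}
    (hF : ∀ P ∈ Y, F ∈ pointIdeal P ^ f P) :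
    ∏ P ∈ Y, pointForm (i.removeNth P.rep) ^ f P ∣ eliminate a i F := by
  refine Finset.prod_dvd_of_isRelPrime (fun P hP Q hQ hPQ => ?_)
    fun P hP => pointForm_pow_dvd_eliminate hi (hY P hP) (hF P hP)
  have hirr := irreducible_pointForm (removeNth_rep_ne_zero hi (hY P hP))
  exact (hirr.isRelPrime_iff_not_dvd.2 fun h =>
    hPQ (eq_of_pointForm_dvd hi (hY P hP) (hY Q hQ) h)).pow

end Restriction

section FatForms

open Finset MvPolynomial Matrix Module
open scoped Classical

theorem finrank_map_add_finrank_inf_ker {k V W : Type*} [DivisionRing k] [AddCommGroup V]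
    [Module k V] [AddCommGroup W] [Module k W] (S : Submodule k V) [FiniteDimensional k S]
    (φ : V →ₗ[k] W) : finrank k (S.map φ) + finrank k ↥(S ⊓ LinearMap.ker φ) = finrank k S := by
  rw [← LinearMap.range_domRestrict, ← Submodule.map_comap_subtype,
    Submodule.finrank_map_subtype_eq, ← LinearMap.ker_domRestrict,
    LinearMap.finrank_range_add_finrank_ker]

variable {K : Type} [Field K]

/-- The forms of degree `n - 1` vanishing to order `f P` at each point `P` of `X`. -/
noncomputable def fatForms (X : Finset (P2 K)) (f : P2 K → ℕ) (n : ℕ) :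
    Submodule K (MvPolynomial (Fin 3) K) :=
  (⨅ P ∈ X, pointIdeal P ^ f P).restrictScalars K ⊓ predForms (Fin 3) K n

variable {X : Finset (P2 K)} {f : P2 K → ℕ} {n : ℕ}

instance : FiniteDimensional K (fatForms X f n) :=
  Submodule.finiteDimensional_of_le (inf_le_right : fatForms X f n ≤ predForms (Fin 3) K n)

theorem mem_fatForms {F : MvPolynomial (Fin 3) K} :
    F ∈ fatForms X f n ↔ (∀ P ∈ X, F ∈ pointIdeal P ^ f P) ∧ F ∈ predForms (Fin 3) K n := by
  simp [fatForms, Submodule.mem_iInf]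

theorem fatForms_congr {g : P2 K → ℕ} (h : ∀ P ∈ X, f P = g P) :
    fatForms X f n = fatForms X g n := by
  ext F
  simp +contextual only [mem_fatForms, h]

theorem linForm_mul_mem_fatForms {a : Fin 3 → K} {ha : a ≠ 0} {G : MvPolynomial (Fin 3) K}
    (hG : G ∈ predForms (Fin 3) K n) :
    linForm a * G ∈ fatForms X f (n + 1) ↔ G ∈ fatForms X (strip (lineOfForm a ha) f) n := by
  rw [mem_fatForms, mem_fatForms]
  refine and_congr (forall₂_congr fun P _ => ?_)
    (iff_of_true (mul_mem_predForms_succ (isHomogeneous_linForm a) hG) hG)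
  unfold strip
  split_ifs with hP
  · exact linForm_mul_mem_pointIdeal_pow_iff_of_eq_zero ha (mem_lineOfForm.1 hP)
  · exact linForm_mul_mem_pointIdeal_pow_iff_of_ne_zero fun h => hP (mem_lineOfForm.2 h)

theorem map_mulLeft_linForm_fatForms {a : Fin 3 → K} (ha : a ≠ 0) {i : Fin 3} (hi : a i ≠ 0) :
    (fatForms X (strip (lineOfForm a ha) f) n).map (LinearMap.mulLeft K (linForm a)) =
      fatForms X f (n + 1) ⊓ LinearMap.ker (eliminate a i).toLinearMap := by
  ext F
  constructor
  · rintro ⟨G, hG, rfl⟩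
    exact ⟨(linForm_mul_mem_fatForms (mem_fatForms.1 hG).2).2 hG,
      (eliminate_eq_zero_iff hi).2 (dvd_mul_right _ G)⟩
  · rintro ⟨hF, hker⟩
    obtain ⟨G, hG, rfl⟩ := exists_eq_mul_of_dvd (isHomogeneous_linForm a) (mem_fatForms.1 hF).2
      ((eliminate_eq_zero_iff hi).1 hker)
    exact ⟨G, (linForm_mul_mem_fatForms hG).1 hF, rfl⟩

theorem finrank_fatForms_succ {a : Fin 3 → K} (ha : a ≠ 0) {i : Fin 3} (hi : a i ≠ 0) :
    finrank K (fatForms X f (n + 1)) = finrank K (fatForms X (strip (lineOfForm a ha) f) n) +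
      finrank K ((fatForms X f (n + 1)).map (eliminate a i).toLinearMap) := by
  have hinj : Function.Injective (LinearMap.mulLeft K (linForm a)) :=
    mul_right_injective₀ (linForm_ne_zero ha)
  rw [← finrank_map_add_finrank_inf_ker (fatForms X f (n + 1)) (eliminate a i).toLinearMap,
    ← map_mulLeft_linForm_fatForms ha hi, add_comm,
    ← (Submodule.equivMapOfInjective _ hinj _).finrank_eq]

theorem finrank_map_eliminate_fatForms_le {a : Fin 3 → K} (ha : a ≠ 0) {i : Fin 3} (hi : a i ≠ 0) :
    finrank K ((fatForms X f n).map (eliminate a i).toLinearMap) ≤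
      n - lineSum X (lineOfForm a ha) f := by
  set D := ∏ P ∈ X with P ∈ lineOfForm a ha, pointForm (i.removeNth P.rep) ^ f P
  have hD : D.IsHomogeneous (lineSum X (lineOfForm a ha) f) :=
    .prod _ _ _ fun P _ => by simpa using (isHomogeneous_pointForm _).pow (f P)
  have hle : (fatForms X f n).map (eliminate a i).toLinearMap ≤
      (predForms (Fin 2) K (n - lineSum X (lineOfForm a ha) f)).map (LinearMap.mulLeft K D) := by
    rintro _ ⟨F, hF, rfl⟩
    obtain ⟨hFX, hFn⟩ := mem_fatForms.1 hF
    obtain ⟨G, hG, hFG⟩ := exists_eq_mul_of_dvd hD (eliminate_mem_predForms a i hFn) <|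
      prod_pointForm_pow_dvd_eliminate hi (fun P hP => mem_lineOfForm.1 (mem_filter.1 hP).2)
        fun P hP => hFX P (mem_filter.1 hP).1
    exact ⟨G, hG, hFG.symm⟩
  exact (Submodule.finrank_mono hle).trans
    ((Submodule.finrank_map_le _ _).trans_eq (finrank_predForms_fin_two K _))

theorem finrank_fatForms_strip_le (X : Finset (P2 K)) (f : P2 K → ℕ) (l : ProjLine K) (n : ℕ) :
    finrank K (fatForms X (strip l f) n) ≤ finrank K (fatForms X f (n + 1)) := by
  obtain ⟨a, ha, rfl⟩ := l.exists_eq_lineOfForm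
  obtain ⟨i, hi⟩ := Function.ne_iff.1 ha
  rw [finrank_fatForms_succ ha hi]
  exact Nat.le_add_right _ _

theorem finrank_fatForms_succ_le (X : Finset (P2 K)) (f : P2 K → ℕ) (l : ProjLine K) (n : ℕ) :
    finrank K (fatForms X f (n + 1)) ≤
      finrank K (fatForms X (strip l f) n) + (n + 1 - lineSum X l f) := by
  obtain ⟨a, ha, rfl⟩ := l.exists_eq_lineOfForm
  obtain ⟨i, hi⟩ := Function.ne_iff.1 ha
  rw [finrank_fatForms_succ ha hi]
  exact Nat.add_le_add_left (finrank_map_eliminate_fatForms_le ha hi) _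

theorem finrank_fatForms_le (X : Finset (P2 K)) (f : P2 K → ℕ) (n : ℕ) :
    finrank K (fatForms X f n) ≤ (n + 1).choose 2 :=
  (Submodule.finrank_mono inf_le_right).trans_eq (finrank_predForms_fin_three K n)

end FatForms

section PointConditions

open Finset MvPolynomial Matrix Module
open scoped Classical

theorem choose_two_succ (n : ℕ) : (n + 1).choose 2 = n.choose 2 + n := by
  rw [Nat.choose_succ_succ' n 1, Nat.choose_one_right, add_comm]

theorem aeval_mem_pow_of_isHomogeneous {σ R A : Type*} [CommRing R] [CommRing A] [Algebra R A]
    {I : Ideal A} {g : σ → A} (hg : ∀ j, g j ∈ I) {G : MvPolynomial σ R} {n : ℕ}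
    (hG : G.IsHomogeneous n) : aeval g G ∈ I ^ n := by
  rw [aeval_def, eval₂_eq]
  refine Ideal.sum_mem _ fun d hd => Ideal.mul_mem_left _ _ ?_
  have hdeg : d.degree = n :=
    (DFunLike.congr_fun Finsupp.degree_eq_weight_one d).trans (hG (mem_support_iff.1 hd))
  rw [← hdeg, Finsupp.degree_apply, ← prod_pow_eq_pow_sum]
  exact Ideal.prod_mem_prod fun j _ => Ideal.pow_mem_pow (hg j) _

variable {K : Type} [Field K]

theorem predForms_le_map_eliminate_fatForms {P : P2 K} {i : Fin 3} (hi : P.rep i ≠ 0)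
    {f : P2 K → ℕ} {n : ℕ} (hn : f P ≤ n) :
    predForms (Fin 2) K (n + 1) ≤
      (fatForms {P} f (n + 1)).map (eliminate (Pi.single i 1) i).toLinearMap := by
  intro G hG
  set g : Fin 2 → MvPolynomial (Fin 3) K := fun j =>
    X (i.succAbove j) - C (P.rep (i.succAbove j) / P.rep i) * X i
  refine ⟨aeval g G, mem_fatForms.2 ⟨fun Q hQ => ?_, ?_⟩, ?_⟩
  · rw [mem_singleton.1 hQ]
    exact Ideal.pow_le_pow_right hn <|
      aeval_mem_pow_of_isHomogeneous (fun j => X_sub_mem_pointIdeal P hi _) hG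
  · have haeval := IsHomogeneous.aeval hG g fun j =>
      (isHomogeneous_X K _).sub (isHomogeneous_C_mul_X _ i)
    rwa [one_mul] at haeval
  · have hid : (eliminate (Pi.single i 1) i).comp (aeval g) = AlgHom.id K _ := by
      ext j : 1
      simp [g, eliminate, linForm, Fin.removeNth]
    exact DFunLike.congr_fun hid G

theorem succ_le_finrank_map_eliminate_fatForms {P : P2 K} {i : Fin 3} (hi : P.rep i ≠ 0)
    {f : P2 K → ℕ} {n : ℕ} (hn : f P ≤ n) : n + 1 ≤
      finrank K ((fatForms {P} f (n + 1)).map (eliminate (Pi.single i 1) i).toLinearMap) := by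
  have : FiniteDimensional K
      ((fatForms {P} f (n + 1)).map (eliminate (Pi.single i 1) i).toLinearMap) :=
    Module.Finite.map (fatForms {P} f (n + 1)) _
  exact (finrank_predForms_fin_two K (n + 1)).symm.trans_le
    (Submodule.finrank_mono (predForms_le_map_eliminate_fatForms hi hn))

theorem choose_two_le_finrank_fatForms_singleton_add (P : P2 K) (f : P2 K → ℕ) (n : ℕ) :
    (n + 1).choose 2 ≤ finrank K (fatForms {P} f n) + (f P + 1).choose 2 := by
  obtain hn | hn := le_total n (f P)
  · exact (Nat.choose_le_choose 2 (by omega)).trans (Nat.le_add_left _ _)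
  induction n, hn using Nat.le_induction with
  | base => exact Nat.le_add_left _ _
  | succ n hn ih =>
    obtain ⟨i, hi⟩ := exists_rep_ne_zero P
    have ha : (Pi.single i 1 : Fin 3 → K) ≠ 0 := by simp
    have hP : P ∉ lineOfForm _ ha := fun h => hi (by simpa using mem_lineOfForm.1 h)
    have hstrip : fatForms {P} (strip (lineOfForm _ ha) f) n = fatForms {P} f n :=
      fatForms_congr fun Q hQ => if_neg (mem_singleton.1 hQ ▸ hP)
    have himage := succ_le_finrank_map_eliminate_fatForms hi hn
    rw [finrank_fatForms_succ ha (i := i) (by simp), hstrip, choose_two_succ]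
    omega

theorem fatForms_insert (P : P2 K) (X : Finset (P2 K)) (f : P2 K → ℕ) (n : ℕ) :
    fatForms (insert P X) f n = fatForms {P} f n ⊓ fatForms X f n := by
  ext F
  simp only [Submodule.mem_inf, mem_fatForms, forall_mem_insert, mem_singleton, forall_eq]
  tauto

theorem choose_two_le_finrank_fatForms_add (X : Finset (P2 K)) (f : P2 K → ℕ) (n : ℕ) :
    (n + 1).choose 2 ≤ finrank K (fatForms X f n) + ∑ P ∈ X, (f P + 1).choose 2 := by
  induction X using Finset.induction_on with
  | empty =>
    have htop : fatForms (∅ : Finset (P2 K)) f n = predForms (Fin 3) K n := by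
      simp [fatForms]
    rw [htop, finrank_predForms_fin_three]
    exact Nat.le_add_right _ _
  | insert P X hP ih =>
    have hsup : finrank K ↥(fatForms {P} f n ⊔ fatForms X f n) ≤ (n + 1).choose 2 :=
      (Submodule.finrank_mono (sup_le inf_le_right inf_le_right)).trans_eq
        (finrank_predForms_fin_three K n)
    have hdim := Submodule.finrank_sup_add_finrank_inf_eq (fatForms {P} f n) (fatForms X f n)
    have hpoint := choose_two_le_finrank_fatForms_singleton_add P f n
    rw [fatForms_insert, sum_insert hP]
    omega

theorem sum_choose_two_eq_sum_strip_add_lineSum (X : Finset (P2 K)) (l : ProjLine K)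
    (f : P2 K → ℕ) : ∑ P ∈ X, (f P + 1).choose 2 =
      ∑ P ∈ X, (strip l f P + 1).choose 2 + lineSum X l f := by
  rw [lineSum, sum_filter, ← sum_add_distrib]
  refine sum_congr rfl fun P _ => ?_
  unfold strip
  split_ifs
  · obtain _ | k := f P
    · rfl
    · exact choose_two_succ (k + 1)
  · rfl

theorem Peelable.finrank_fatForms_add {X : Finset (P2 K)} {f : P2 K → ℕ} {n : ℕ}
    (h : Peelable (ProjLine K) X f n) :
    finrank K (fatForms X f n) + ∑ P ∈ X, (f P + 1).choose 2 = (n + 1).choose 2 := by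
  refine le_antisymm ?_ (choose_two_le_finrank_fatForms_add X f n)
  induction h with
  | zero f n hf =>
    rw [sum_eq_zero fun P hP => by rw [hf P hP]; rfl]
    exact finrank_fatForms_le X f n
  | strip f n l hl _ ih =>
    have hline := finrank_fatForms_succ_le X f l n
    rw [sum_choose_two_eq_sum_strip_add_lineSum X l f, choose_two_succ]
    omega

end PointConditions

section Configurations

variable {K : Type} [Field K]

namespace IsKConfig

theorem finite {s : ℕ} {X : Set (P2 K)} {d : Fin s → ℕ} {Xs : Fin s → Set (P2 K)}
    {Ls : Fin s → ProjLine K} (h : IsKConfig X d Xs Ls) : X.Finite := by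
  rw [h.union_eq]
  exact Set.finite_iUnion fun i => Set.finite_of_ncard_pos (h.card_eq i ▸ h.one_le i)

variable {s : ℕ} {X : Set (P2 K)} {d : Fin (s + 1) → ℕ} {Xs : Fin (s + 1) → Set (P2 K)}
  {Ls : Fin (s + 1) → ProjLine K}

theorem inter_points_last (h : IsKConfig X d Xs Ls) :
    X ∩ (Ls (Fin.last s)).points = Xs (Fin.last s) := by
  refine Set.Subset.antisymm ?_ fun P hP =>
    ⟨h.union_eq ▸ Set.mem_iUnion_of_mem _ hP, h.subset_line _ hP⟩
  rintro P ⟨hPX, hPl⟩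
  obtain ⟨i, hi⟩ := Set.mem_iUnion.1 (h.union_eq ▸ hPX)
  obtain hlt | rfl := (Fin.le_last i).lt_or_eq
  · exact absurd hPl (h.not_mem _ i hlt P hi)
  · exact hi

theorem diff_points_last (h : IsKConfig X d Xs Ls) :
    IsKConfig (X \ (Ls (Fin.last s)).points) (fun i => d i.castSucc) (fun i => Xs i.castSucc)
      (fun i => Ls i.castSucc) where
  one_le _ := h.one_le _
  strictMono := h.strictMono.comp (Fin.strictMono_castSucc)
  lines_distinct := h.lines_distinct.comp (Fin.castSucc_injective s)
  union_eq := by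
    ext P
    simp only [Set.mem_sdiff, h.union_eq, Set.mem_iUnion]
    constructor
    · rintro ⟨⟨i, hi⟩, hP⟩
      obtain ⟨j, rfl⟩ | rfl := i.eq_castSucc_or_eq_last
      · exact ⟨j, hi⟩
      · exact absurd (h.subset_line _ hi) hP
    · rintro ⟨j, hj⟩
      exact ⟨⟨_, hj⟩, h.not_mem _ _ (Fin.castSucc_lt_last j) P hj⟩
  card_eq _ := h.card_eq _
  subset_line _ := h.subset_line _
  not_mem i j hij := h.not_mem _ _ (Fin.castSucc_lt_castSucc_iff.2 hij)

end IsKConfig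

open scoped Classical in
theorem IsKConfig.triangular {s : ℕ} {X : Set (P2 K)} {Xs : Fin s → Set (P2 K)}
    {Ls : Fin s → ProjLine K} (h : IsKConfig X (fun i => i.1 + 1) Xs Ls) {Y : Finset (P2 K)}
    (hY : (Y : Set (P2 K)) = X) : Triangular (ProjLine K) s Y := by
  induction s generalizing X Y with
  | zero =>
    have hempty : Y = ∅ := Finset.coe_eq_empty.1 <| by rw [hY, h.union_eq, Set.iUnion_of_empty]
    exact hempty ▸ .zero
  | succ s ih =>
    refine .succ s Y (Ls (Fin.last s)) ?_ (ih h.diff_points_last ?_)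
    · have hcoe : ({P ∈ Y | P ∈ Ls (Fin.last s)} : Finset (P2 K)) = Xs (Fin.last s) := by
        rw [Finset.coe_filter, ← h.inter_points_last, ← hY]
        rfl
      rw [← Set.ncard_coe_finset, hcoe, h.card_eq, Fin.val_last]
    · rw [Finset.coe_filter, ← hY]
      rfl

end Configurations

section HilbertFunction

open Finset MvPolynomial Module
open scoped Classical

variable {K : Type} [Field K] {X : Finset (P2 K)}

theorem hilb_fatIdeal (m t : ℕ) : hilb (fatIdeal (X : Set (P2 K)) m) t =
    (t + 2).choose 2 - finrank K (fatForms X (fun _ => m) (t + 1)) :=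
  congrArg (· - _) (finrank_predForms_fin_three K (t + 1))

theorem deltaHilb_fatIdeal (m t : ℕ) : deltaHilb (fatIdeal (X : Set (P2 K)) m) t =
    t + 1 + finrank K (fatForms X (fun _ => m) t) -
      finrank K (fatForms X (fun _ => m) (t + 1)) := by
  have hle := finrank_fatForms_le X (fun _ => m)
  have hhilb (t : ℕ) : hilbZ (fatIdeal (X : Set (P2 K)) m) t =
      (t + 2).choose 2 - finrank K (fatForms X (fun _ => m) (t + 1)) := by
    rw [hilbZ, if_neg (by omega), Int.toNat_natCast, hilb_fatIdeal, Nat.cast_sub (hle (t + 1))]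
  rw [deltaHilb, hhilb]
  obtain _ | t := t
  · have hzero : finrank K (fatForms X (fun _ => m) 0) = 0 := Nat.le_zero.1 (hle 0)
    simp [hilbZ, hzero]
  · rw [Nat.cast_succ, add_sub_cancel_right, hhilb, choose_two_succ (t + 2)]
    push_cast
    ring

theorem finrank_fatForms_sub_lineCount {s m n : ℕ} (hn : n ≤ m * s) {T : Finset (ProjLine K)}
    (hT : ∀ l ∈ T, #{P ∈ X | P ∈ l} = s) :
    finrank K (fatForms X (fun P => m - lineCount T P) (n - #T)) =
      finrank K (fatForms X (fun _ => m) n) := by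
  induction T using Finset.induction_on with
  | empty =>
    rw [card_empty, Nat.sub_zero,
      fatForms_congr fun P _ => by rw [lineCount_empty, Nat.sub_zero]]
  | insert l T hl ih =>
    rw [← ih fun M hM => hT M (mem_insert_of_mem hM), card_insert_of_notMem hl, ← Nat.sub_sub]
    have hstrip : (fun P => m - lineCount (insert l T) P) = strip l (fun P => m - lineCount T P) :=
      funext fun P => by
        simp only [lineCount_insert hl, strip]
        split_ifs <;> omega
    have hline := mul_card_filter_mem_le_lineSum_add X hl m
    rw [hT l (mem_insert_self l T)] at hline
    obtain hk | ⟨k, hk⟩ : n - #T = 0 ∨ ∃ k, n - #T = k + 1 := by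
      cases n - #T <;> simp
    · rw [hk, Nat.zero_sub, Nat.le_zero.1 (finrank_fatForms_le X _ 0),
        Nat.le_zero.1 (finrank_fatForms_le X _ 0)]
    · have hle := finrank_fatForms_succ_le X (fun P => m - lineCount T P) l k
      rw [hk, Nat.add_sub_cancel, hstrip]
      exact le_antisymm (finrank_fatForms_strip_le X _ l k) (by omega)

theorem Peelable.finrank_fatForms_succ_eq {f : P2 K → ℕ} {n : ℕ}
    (h : Peelable (ProjLine K) X f n) :
    finrank K (fatForms X f (n + 1)) = finrank K (fatForms X f n) + (n + 1) := by
  have hn := h.finrank_fatForms_add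
  have hsucc := h.succ.finrank_fatForms_add
  rw [choose_two_succ (n + 1)] at hsucc
  omega

theorem IsRichLines.deltaHilb_fatIdeal_eq_card {s m : ℕ} {Λ : Finset (ProjLine K)}
    (h : IsRichLines s X Λ) (hΛ : Λ.Nonempty) (hm : s + 2 ≤ m + #Λ) :
    deltaHilb (fatIdeal (X : Set (P2 K)) m) ((m : ℤ) * s - 1) = #Λ := by
  have hrich : ∀ l ∈ Λ, #{P ∈ X | P ∈ l} = s := fun l => (h.mem_iff l).1
  have hlt : #Λ < m * s := by
    have hcard := h.card_lt
    nlinarith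
  obtain ⟨t, ht⟩ : ∃ t, m * s = t + 1 := ⟨m * s - 1, by omega⟩
  have hsub := finrank_fatForms_sub_lineCount (m := m) (n := t) (by omega) hrich
  have hsub' := finrank_fatForms_sub_lineCount (m := m) (n := t + 1) ht.ge hrich
  have hpeel := (h.peelable hΛ hm).finrank_fatForms_succ_eq
  rw [ht, Nat.add_sub_cancel, hsub, ← Nat.sub_add_comm (by omega), hsub'] at hpeel
  rw [← Nat.cast_mul, ht, Nat.cast_succ, add_sub_cancel_right, deltaHilb_fatIdeal]
  omega

end HilbertFunction

theorem kconfig_delta_r_general {K : Type} [Field K] {s : ℕ} {X : Set (P2 K)}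
    {Xs : Fin s → Set (P2 K)} {Ls : Fin s → ProjLine K}
    (hX : IsKConfig X (fun i : Fin s => i.1 + 1) Xs Ls) {r : ℕ} (hr1 : 1 ≤ r) (hrs : r < s)
    (hcard : {L : ProjLine K | (X ∩ L.points).ncard = s}.ncard = r) {m : ℕ} (hm : s + 2 ≤ m + r) :
    deltaHilb (fatIdeal X m) ((m : ℤ) * s - 1) = r := by
  classical
  obtain ⟨Y, rfl⟩ := hX.finite.exists_finset_coe
  obtain ⟨Λ, hΛ⟩ := (Set.finite_of_ncard_pos (hcard ▸ hr1)).exists_finset_coe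
  rw [← hΛ, Set.ncard_coe_finset] at hcard
  have hmem (l : ProjLine K) : l ∈ Λ ↔ ({P ∈ Y | P ∈ l} : Finset (P2 K)).card = s := by
    rw [← Finset.mem_coe, hΛ, ← Set.ncard_coe_finset, Finset.coe_filter]
    rfl
  have hrich : IsRichLines s Y Λ := ⟨hX.triangular rfl, hmem, hcard ▸ hrs⟩
  rw [← hcard] at hr1 hm ⊢
  exact hrich.deltaHilb_fatIdeal_eq_card (Finset.card_pos.1 hr1) hm

/-- **Theorem (case `d_s = s`, `1 ≤ r < s` lines).** Let `X` be a
k-configuration of type `(1,2,…,s)`, `s ≥ 2`, such that the number `r` of lines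
containing exactly `s` points of `X` satisfies `1 ≤ r < s`. Then
`ΔH_{mX}(m·s − 1) = r` for all `m ≥ s + 1`. -/
theorem kconfig_delta_r {K : Type} [Field K] [IsAlgClosed K] {s : ℕ} (hs : 2 ≤ s)
    (X : Set (P2 K)) (Xs : Fin s → Set (P2 K)) (Ls : Fin s → ProjLine K)
    (hX : IsKConfig X (fun i : Fin s => i.1 + 1) Xs Ls)
    (r : ℕ) (hr1 : 1 ≤ r) (hrs : r < s)
    (hfin : {L : ProjLine K | (X ∩ L.points).ncard = s}.Finite)
    (hcard : {L : ProjLine K | (X ∩ L.points).ncard = s}.ncard = r) :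
    ∀ m : ℕ, s + 1 ≤ m → deltaHilb (fatIdeal X m) ((m : ℤ) * s - 1) = r :=
  fun m hm => kconfig_delta_r_general hX hr1 hrs hcard (by omega)
end

section
/- Let X ⊆ P² be a k-configuration of type (1,2,…,s) with s ≥ 2, defined using subsets X₁,…,X_s and lines L₁,…,L_s, with X₁ = {P} where P = [1:0:0], and with X₂ = {Q₁,Q₂} where Q₁ = [0:1:0] and Q₂ = [0:0:1]. Assume that no line in P² containing exactly s points of X passes through P, and set Y = X \ {P}. Then for every integer m ≥ s + 1, the graded piece of R/(I_{mY} + I_P^m) in degree m·s − 2 is zero; equivalently, (I_{mY} + I_P^m)_{ms−2} = R_{ms−2}. -/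
/-!
Let `u`, `v` be equations of the lines `PQ₁`, `PQ₂`, so that `I_P = (u, v)`, and put `D = ms - 2`
and `J = I_{mY} + I_P ^ m`. Suppose that for all `a + b < m` there is a form `U` of degree
`D - (a + b)` with `U(P) ≠ 0` and `u ^ a * v ^ b * U ∈ J`. Any form `g` of the same degree as `U`
is a constant multiple of `U` modulo `I_P`, so `u ^ a * v ^ b * g` lies in `J` up to multiples of
`u ^ (a + 1) * v ^ b` and `u ^ a * v ^ (b + 1)`. Hence, in degree `D`, each `I_P ^ j` with `j < m`
is contained in `J + I_P ^ (j + 1)`, and so the ideal `J` contains every form of degree `D`.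

With `ℓᵢ` an equation of `Lᵢ`, one can take `U = (ℓ₃ ⋯ ℓₛ) ^ m * ℓ₂ ^ (2m - 2 - a - b)` if
`a, b ≤ m - 2`. For `u ^ (m - 1)` this fails at `Q₂`. As the line `PQ₂` does not contain exactly
`s` points of `X`, it misses some `X_k`, since otherwise it would meet every `X_i` in exactly one
point. Replacing one factor `ℓ_k` and `d_k - 1` factors `ℓ₂` of `(ℓ₃ ⋯ ℓₛ) ^ m * ℓ₂ ^ (m - 1)` by
the lines joining `Q₂` to the `d_k` points of `X_k` restores the multiplicity at `Q₂` without
losing it elsewhere.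
-/

open MvPolynomial Module

theorem mul_mem_pow_of_le {R : Type*} [CommSemiring R] {I : Ideal R} {x y : R} {a b m : ℕ}
    (hx : x ∈ I ^ a) (hy : y ∈ I ^ b) (h : m ≤ a + b) : x * y ∈ I ^ m :=
  Ideal.pow_le_pow_right h (pow_add I a b ▸ Ideal.mul_mem_mul hx hy)

section Homogeneous

variable {σ R S : Type*}

theorem aeval_mul_left_of_isHomogeneous [CommSemiring R] [CommSemiring S] [Algebra R S]
    {f : MvPolynomial σ R} {n : ℕ} (hf : f.IsHomogeneous n) (t : S) (x : σ → S) :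
    aeval (fun i => t * x i) f = t ^ n * aeval x f := by
  simp only [aeval_def, eval₂_eq, Finset.mul_sum]
  refine Finset.sum_congr rfl fun d hd => ?_
  have hdeg : ∑ i ∈ d.support, d i = n := (hf.degree_eq_sum_deg_support hd).symm
  simp only [mul_pow, Finset.prod_mul_distrib, Finset.prod_pow_eq_pow_sum, hdeg]
  ring

theorem exists_isHomogeneous_of_mem_span_pair [CommSemiring R] {u v f : MvPolynomial σ R}
    {d n : ℕ} (hu : u.IsHomogeneous d) (hv : v.IsHomogeneous d) (hf : f.IsHomogeneous (n + d))
    (h : f ∈ Ideal.span {u, v}) :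
    ∃ g h : MvPolynomial σ R, g.IsHomogeneous n ∧ h.IsHomogeneous n ∧ f = g * u + h * v := by
  classical
  let := gradedAlgebra (σ := σ) (R := R)
  obtain ⟨a, b, rfl⟩ := Ideal.mem_span_pair.1 h
  let component := fun p : MvPolynomial σ R =>
    DirectSum.decompose (homogeneousSubmodule σ R) p n
  refine ⟨component a, component b, (component a).2, (component b).2, ?_⟩
  rw [← DirectSum.coe_decompose_mul_add_of_right_mem _ hu,
    ← DirectSum.coe_decompose_mul_add_of_right_mem _ hv]
  simpa only [DirectSum.decompose_add, DirectSum.add_apply, Submodule.coe_add] using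
    (DirectSum.decompose_of_mem_same (homogeneousSubmodule σ R) hf).symm

end Homogeneous

section LinearForm

variable {σ K : Type*} [Fintype σ] [DecidableEq σ] [Field K]

/-- The linear form `∑ i, φ eᵢ Xᵢ` attached to a functional `φ` on `K^σ`; this is how lines of the
plane, given as subspaces, are turned into equations. -/
noncomputable def linearForm : Dual K (σ → K) →ₗ[K] MvPolynomial σ K :=
  ∑ i, (LinearMap.toSpanSingleton K _ (X i)).comp (LinearMap.applyₗ (Pi.single i 1))

theorem linearForm_apply (φ : Dual K (σ → K)) :
    linearForm φ = ∑ i, φ (Pi.single i 1) • X i := by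
  simp [linearForm]

theorem isHomogeneous_linearForm (φ : Dual K (σ → K)) : (linearForm φ).IsHomogeneous 1 := by
  rw [linearForm_apply]
  exact .sum _ _ _ fun i _ => smul_eq_C_mul (R := K) _ _ ▸ isHomogeneous_C_mul_X _ i

theorem eval_linearForm (φ : Dual K (σ → K)) (x : σ → K) : eval x (linearForm φ) = φ x := by
  conv_rhs => rw [pi_eq_sum_univ' x]
  simp [linearForm_apply, mul_comm]

theorem exists_linearForm_eq {f : MvPolynomial σ K} (hf : f.IsHomogeneous 1) :
    ∃ φ, linearForm φ = f := by
  have hX : Submodule.span K (Set.range X) ≤ LinearMap.range (linearForm (σ := σ) (K := K)) := by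
    rw [Submodule.span_le]
    rintro _ ⟨i, rfl⟩
    exact ⟨LinearMap.proj i, by simp [linearForm_apply, Pi.single_apply]⟩
  exact hX (homogeneousSubmodule_one_eq_span_X (σ := σ) (R := K) ▸ hf)

end LinearForm

section Plane

variable {K : Type} [Field K] {P Q R : P2 K} {L M : ProjLine K}

theorem mem_points_iff_rep_mem : P ∈ L.points ↔ P.rep ∈ L.toSubmodule := by
  simp [ProjLine.points, Projectivization.submodule_eq]

theorem exists_line_through (h : P ≠ Q) : ∃ L : ProjLine K, P ∈ L.points ∧ Q ∈ L.points := by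
  have hrank := finrank_span_eq_card (Projectivization.linearIndependent_pair_iff_ne.2 h)
  refine ⟨⟨_, hrank⟩, ?_, ?_⟩ <;> rw [mem_points_iff_rep_mem]
  exacts [Submodule.subset_span ⟨0, rfl⟩, Submodule.subset_span ⟨1, rfl⟩]

theorem line_eq_of_mem_points (h : P ≠ Q) (hPL : P ∈ L.points) (hQL : Q ∈ L.points)
    (hPM : P ∈ M.points) (hQM : Q ∈ M.points) : L = M := by
  have hsub : L.toSubmodule = M.toSubmodule := Projectivization.line_unique h _ _
    L.finrank_eq_two M.finrank_eq_two
    ((Submodule.mem_projectivization_iff_submodule_le _ _).2 hPL)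
    ((Submodule.mem_projectivization_iff_submodule_le _ _).2 hQL)
    ((Submodule.mem_projectivization_iff_submodule_le _ _).2 hPM)
    ((Submodule.mem_projectivization_iff_submodule_le _ _).2 hQM)
  cases L; cases M; cases hsub; rfl

theorem exists_ne_lines_through (hPL : P ∉ L.points) (hQL : Q ∈ L.points) (hRL : R ∈ L.points)
    (hQR : Q ≠ R) : ∃ M N : ProjLine K, M ≠ N ∧ (P ∈ M.points ∧ Q ∈ M.points) ∧
      (P ∈ N.points ∧ R ∈ N.points) := by
  obtain ⟨M, hPM, hQM⟩ := exists_line_through (ne_of_mem_of_not_mem hQL hPL).symm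
  obtain ⟨N, hPN, hRN⟩ := exists_line_through (ne_of_mem_of_not_mem hRL hPL).symm
  refine ⟨M, N, ?_, ⟨hPM, hQM⟩, ⟨hPN, hRN⟩⟩
  rintro rfl
  exact hPL (line_eq_of_mem_points hQR hQM hRN hQL hRL ▸ hPM)

theorem inf_toSubmodule_eq_submodule (hLM : L ≠ M) (hL : P ∈ L.points) (hM : P ∈ M.points) :
    L.toSubmodule ⊓ M.toSubmodule = P.submodule := by
  refine le_antisymm (fun x hx => ?_) (le_inf hL hM)
  by_contra hxP
  have hx0 : x ≠ 0 := by rintro rfl; exact hxP (zero_mem _)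
  let Q : P2 K := Projectivization.mk K x hx0
  have hQ (N : ProjLine K) (hxN : x ∈ N.toSubmodule) : Q ∈ N.points := by
    simpa [Q, ProjLine.points] using hxN
  have hQP : Q ≠ P := by
    rintro rfl
    exact hxP (Submodule.mem_span_singleton_self x)
  exact hLM (line_eq_of_mem_points hQP (hQ L hx.1) hL (hQ M hx.2) hM)

theorem exists_ker_eq_toSubmodule (L : ProjLine K) :
    ∃ φ : Dual K (Fin 3 → K), LinearMap.ker φ = L.toSubmodule := by
  have hlt : L.toSubmodule < ⊤ := Submodule.lt_top_of_finrank_lt_finrank (by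
    simp [L.finrank_eq_two])
  obtain ⟨φ, hφ, hle⟩ := Submodule.exists_le_ker_of_lt_top _ hlt
  have hrank := Dual.finrank_ker_add_one_of_ne_zero hφ
  rw [finrank_fin_fun] at hrank
  exact ⟨φ, (Submodule.eq_of_le_of_finrank_eq hle (by rw [L.finrank_eq_two]; omega)).symm⟩

/-- A linear form cutting out the line `L`; the choice, unique up to a nonzero scalar, is
arbitrary. -/
noncomputable def ProjLine.form (L : ProjLine K) : MvPolynomial (Fin 3) K :=
  linearForm (exists_ker_eq_toSubmodule L).choose

theorem ProjLine.exists_functional (L : ProjLine K) :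
    ∃ φ : Dual K (Fin 3 → K), LinearMap.ker φ = L.toSubmodule ∧ linearForm φ = L.form :=
  ⟨_, (exists_ker_eq_toSubmodule L).choose_spec, rfl⟩

theorem ProjLine.isHomogeneous_form (L : ProjLine K) : L.form.IsHomogeneous 1 :=
  isHomogeneous_linearForm _

theorem ProjLine.eval_form_eq_zero_iff : eval P.rep L.form = 0 ↔ P ∈ L.points := by
  obtain ⟨φ, hker, hφ⟩ := L.exists_functional
  rw [← hφ, eval_linearForm, ← LinearMap.mem_ker, hker, mem_points_iff_rep_mem]

theorem ProjLine.form_mem_pointIdeal (h : P ∈ L.points) : L.form ∈ pointIdeal P :=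
  Ideal.subset_span ⟨L.isHomogeneous_form, eval_form_eq_zero_iff.2 h⟩

theorem mem_pointIdeal_of_eval_eq_zero {f : MvPolynomial (Fin 3) K} {n : ℕ}
    (hf : f.IsHomogeneous n) (h0 : eval P.rep f = 0) : f ∈ pointIdeal P := by
  obtain ⟨j, hj⟩ := Function.ne_iff.1 P.rep_nonzero
  -- Modulo `I_P` the coordinates are proportional to those of `P`, so `f` is congruent to
  -- a multiple of `f(P)`.
  have hX (i : Fin 3) : C (P.rep j) * X i - X j * C (P.rep i) ∈ pointIdeal P :=
    Ideal.subset_span ⟨(isHomogeneous_C_mul_X _ i).sub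
      (mul_comm (X j) (C (P.rep i)) ▸ isHomogeneous_C_mul_X _ j), by simp [mul_comm]⟩
  have hcongr : aeval (fun i => C (P.rep j) * X i) f - aeval (fun i => X j * C (P.rep i)) f ∈
      pointIdeal P := by
    rw [← Ideal.Quotient.eq, ← Ideal.Quotient.mkₐ_eq_mk K, comp_aeval_apply, comp_aeval_apply]
    congr 2 with i
    exact Ideal.Quotient.eq.2 (hX i)
  have hC : aeval (fun i => C (P.rep i)) f = (0 : MvPolynomial (Fin 3) K) := by
    simpa [h0] using (comp_aeval_apply P.rep (Algebra.ofId K (MvPolynomial (Fin 3) K)) f).symm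
  rw [aeval_mul_left_of_isHomogeneous hf, aeval_mul_left_of_isHomogeneous hf, hC, mul_zero,
    sub_zero, aeval_X_left_apply, ← C_pow] at hcongr
  exact (Ideal.unit_mul_mem_iff_mem _ ((IsUnit.mk0 _ (pow_ne_zero n hj)).map C)).1 hcongr

theorem pointIdeal_eq_span_pair (hLM : L ≠ M) (hL : P ∈ L.points) (hM : P ∈ M.points) :
    pointIdeal P = Ideal.span {L.form, M.form} := by
  refine le_antisymm (Ideal.span_le.2 ?_) ?_
  · rintro f ⟨hf, hfP⟩
    obtain ⟨φ, rfl⟩ := exists_linearForm_eq hf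
    rw [eval_linearForm] at hfP
    obtain ⟨φL, hkerL, hφL⟩ := L.exists_functional
    obtain ⟨φM, hkerM, hφM⟩ := M.exists_functional
    have hker : ⨅ i, LinearMap.ker (![φL, φM] i) ≤ LinearMap.ker φ := by
      intro x hx
      rw [Submodule.mem_iInf] at hx
      have hxP : x ∈ P.submodule := by
        rw [← inf_toSubmodule_eq_submodule hLM hL hM, ← hkerL, ← hkerM]
        exact ⟨hx 0, hx 1⟩
      rw [P.submodule_eq, Submodule.mem_span_singleton] at hxP
      obtain ⟨c, rfl⟩ := hxP
      simp [hfP]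
    have hφ : φ ∈ Submodule.span K {φL, φM} := by
      simpa [Set.pair_comm] using mem_span_of_iInf_ker_le_ker hker
    obtain ⟨a, b, rfl⟩ := Submodule.mem_span_pair.1 hφ
    refine Ideal.mem_span_pair.2 ⟨C a, C b, ?_⟩
    simp [← hφL, ← hφM, smul_eq_C_mul]
  · rw [Ideal.span_le, Set.pair_subset_iff]
    exact ⟨ProjLine.form_mem_pointIdeal hL, ProjLine.form_mem_pointIdeal hM⟩

end Plane

section Descent

variable {K : Type} [Field K] {P : P2 K} {I J : Ideal (MvPolynomial (Fin 3) K)}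
  {f u v : MvPolynomial (Fin 3) K} {m n D : ℕ}

/-- `f` is brought into the ideal `I` by some form of degree `n` that does not vanish at `P`. Such
forms let one pass from `I_P ^ j` to `I_P ^ (j + 1)` modulo `I` in a fixed degree. -/
def HasMultiplier (I : Ideal (MvPolynomial (Fin 3) K)) (P : P2 K) (n : ℕ)
    (f : MvPolynomial (Fin 3) K) : Prop :=
  ∃ U : MvPolynomial (Fin 3) K, U.IsHomogeneous n ∧ eval P.rep U ≠ 0 ∧ f * U ∈ I

theorem HasMultiplier.mono (h : HasMultiplier I P n f) (hIJ : I ≤ J) : HasMultiplier J P n f :=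
  let ⟨U, hU, hU0, hUI⟩ := h
  ⟨U, hU, hU0, hIJ hUI⟩

theorem exists_eq_add_of_eval_eq_zero (hu : u.IsHomogeneous 1) (hv : v.IsHomogeneous 1)
    (huv : Ideal.span {u, v} = pointIdeal P) (hf : f.IsHomogeneous n) (h0 : eval P.rep f = 0) :
    ∃ g h : MvPolynomial (Fin 3) K, g.IsHomogeneous (n - 1) ∧ h.IsHomogeneous (n - 1) ∧
      f = g * u + h * v := by
  cases n with
  | zero =>
    have hf0 : f = 0 := by
      rw [(totalDegree_eq_zero_iff_eq_C).1 (Nat.le_zero.1 hf.totalDegree_le)] at h0 ⊢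
      simpa using h0
    exact ⟨0, 0, isHomogeneous_zero _ _ _, isHomogeneous_zero _ _ _, by simp [hf0]⟩
  | succ n =>
    exact exists_isHomogeneous_of_mem_span_pair hu hv hf
      (huv ▸ mem_pointIdeal_of_eval_eq_zero hf h0)

theorem HasMultiplier.mul_mem (hu : u.IsHomogeneous 1) (hv : v.IsHomogeneous 1)
    (huv : Ideal.span {u, v} = pointIdeal P) (hf : HasMultiplier I P n f)
    (hstep : ∀ h : MvPolynomial (Fin 3) K, h.IsHomogeneous (n - 1) →
      f * u * h ∈ I ∧ f * v * h ∈ I)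
    {g : MvPolynomial (Fin 3) K} (hg : g.IsHomogeneous n) : f * g ∈ I := by
  obtain ⟨U, hU, hU0, hUI⟩ := hf
  obtain ⟨g₁, g₂, hg₁, hg₂, heq⟩ := exists_eq_add_of_eval_eq_zero hu hv huv
    ((hg.C_mul (eval P.rep U)).sub (hU.C_mul (eval P.rep g))) (by simp [mul_comm])
  have hmem : C (eval P.rep U) * (f * g) ∈ I := by
    have hsplit : C (eval P.rep U) * (f * g) =
        C (eval P.rep g) * (f * U) + (f * u * g₁ + f * v * g₂) := by
      linear_combination f * heq
    rw [hsplit]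
    exact I.add_mem (I.mul_mem_left _ hUI) (I.add_mem (hstep g₁ hg₁).1 (hstep g₂ hg₂).2)
  exact (I.unit_mul_mem_iff_mem ((IsUnit.mk0 _ hU0).map C)).1 hmem

theorem mem_of_forall_hasMultiplier (hu : u.IsHomogeneous 1) (hv : v.IsHomogeneous 1)
    (huv : Ideal.span {u, v} = pointIdeal P) (hI : pointIdeal P ^ m ≤ I)
    (hmul : ∀ a b, a + b < m → HasMultiplier I P (D - (a + b)) (u ^ a * v ^ b))
    (hf : f.IsHomogeneous D) : f ∈ I := by
  have hpow (a b : ℕ) (hab : m ≤ a + b) : u ^ a * v ^ b ∈ I :=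
    hI (mul_mem_pow_of_le (Ideal.pow_mem_pow (huv ▸ Ideal.subset_span (by simp)) a)
      (Ideal.pow_mem_pow (huv ▸ Ideal.subset_span (by simp)) b) hab)
  suffices key : ∀ k a b g, m ≤ a + b + k → g.IsHomogeneous (D - (a + b)) →
      u ^ a * v ^ b * g ∈ I by
    simpa using key m 0 0 f (by omega) (by simpa using hf)
  intro k
  induction k with
  | zero => exact fun a b g hk _ => I.mul_mem_right g (hpow a b hk)
  | succ k ih =>
    intro a b g hk hg
    by_cases hab : a + b < m
    · refine (hmul a b hab).mul_mem hu hv huv (fun h hh => ⟨?_, ?_⟩) hg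
      · have := ih (a + 1) b h (by omega) (by convert hh using 1; omega)
        rwa [pow_succ, mul_right_comm (u ^ a)] at this
      · have := ih a (b + 1) h (by omega) (by convert hh using 1; omega)
        rwa [pow_succ, ← mul_assoc] at this
    · exact I.mul_mem_right g (hpow a b (not_lt.1 hab))

end Descent

section LineProducts

variable {K : Type} [Field K] {ι : Type*} {Ls : ι → ProjLine K} {T : Finset ι} {m : ℕ} {P Q : P2 K}

theorem isHomogeneous_prod_form_pow (Ls : ι → ProjLine K) (T : Finset ι) (m : ℕ) :
    (∏ i ∈ T, (Ls i).form ^ m).IsHomogeneous (m * T.card) := by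
  simpa [mul_comm] using
    IsHomogeneous.prod T _ (fun _ => 1 * m) fun i _ => (Ls i).isHomogeneous_form.pow m

theorem eval_prod_form_pow_ne_zero (m : ℕ) (h : ∀ i ∈ T, P ∉ (Ls i).points) :
    eval P.rep (∏ i ∈ T, (Ls i).form ^ m) ≠ 0 := by
  rw [map_prod, Finset.prod_ne_zero_iff]
  intro i hi
  rw [map_pow]
  exact pow_ne_zero m (mt ProjLine.eval_form_eq_zero_iff.1 (h i hi))

theorem prod_form_pow_mem_pow (m : ℕ) {i : ι} (hi : i ∈ T) (h : P ∈ (Ls i).points) :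
    ∏ i ∈ T, (Ls i).form ^ m ∈ pointIdeal P ^ m :=
  Ideal.mem_of_dvd _ (Finset.dvd_prod_of_mem _ hi)
    (Ideal.pow_mem_pow (ProjLine.form_mem_pointIdeal h) m)

theorem exists_line_through_of_notMem {L : ProjLine K} (hP : P ∈ L.points) (hQ : Q ∈ L.points)
    (hPQ : P ≠ Q) {R : P2 K} (hR : R ∉ L.points) :
    ∃ M : ProjLine K, Q ∈ M.points ∧ R ∈ M.points ∧ P ∉ M.points := by
  obtain ⟨M, hQM, hRM⟩ := exists_line_through (ne_of_mem_of_not_mem hQ hR)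
  refine ⟨M, hQM, hRM, fun hPM => hR ?_⟩
  rwa [line_eq_of_mem_points hPQ hP hQ hPM hQM]

theorem exists_cone {L : ProjLine K} (hP : P ∈ L.points) (hQ : Q ∈ L.points) (hPQ : P ≠ Q)
    {Z : Set (P2 K)} (hZ : Z.Finite) (hZL : Disjoint Z L.points) :
    ∃ G : MvPolynomial (Fin 3) K, G.IsHomogeneous Z.ncard ∧ eval P.rep G ≠ 0 ∧
      G ∈ pointIdeal Q ^ Z.ncard ∧ ∀ R ∈ Z, G ∈ pointIdeal R := by
  have := hZ.fintype
  choose M hQM hRM hPM using fun R : Z =>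
    exists_line_through_of_notMem hP hQ hPQ (hZL.notMem_of_mem_left R.2)
  have hcard : (Finset.univ : Finset Z).card = Z.ncard := by
    rw [Finset.card_univ, ← Nat.card_eq_fintype_card, Nat.card_coe_set_eq]
  refine ⟨∏ R, (M R).form, ?_, ?_, ?_, fun R hR => ?_⟩
  · simpa [hcard] using isHomogeneous_prod_form_pow M Finset.univ 1
  · simpa using eval_prod_form_pow_ne_zero 1 fun R _ => hPM R
  · rw [← hcard, ← Finset.prod_const]
    exact Ideal.prod_mem_prod fun R _ => ProjLine.form_mem_pointIdeal (hQM R)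
  · simpa using prod_form_pow_mem_pow 1 (Finset.mem_univ ⟨R, hR⟩) (hRM ⟨R, hR⟩)

end LineProducts

namespace IsKConfig

variable {K : Type} [Field K] {s : ℕ} {X : Set (P2 K)} {d : Fin s → ℕ} {Xs : Fin s → Set (P2 K)}
  {Ls : Fin s → ProjLine K} {i₀ i₁ : Fin s} {P Q₁ Q₂ : P2 K} {m a b : ℕ}
  {f g u v : MvPolynomial (Fin 3) K}

theorem notMem_line (hX : IsKConfig X d Xs Ls) (h₀ : IsBot i₀) (hP : P ∈ Xs i₀) {i : Fin s}
    (hi : i ≠ i₀) : P ∉ (Ls i).points :=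
  hX.not_mem i i₀ (lt_of_le_of_ne (h₀ i) hi.symm) P hP

theorem eval_form_ne_zero (hX : IsKConfig X d Xs Ls) (h₀ : IsBot i₀) (hP : Xs i₀ = {P})
    {i : Fin s} (hi : i ≠ i₀) : eval P.rep (Ls i).form ≠ 0 :=
  mt ProjLine.eval_form_eq_zero_iff.1 (hX.notMem_line h₀ (hP ▸ Set.mem_singleton P) hi)

theorem exists_disjoint_line (hX : IsKConfig X d Xs Ls) (h₀ : IsBot i₀) (hP : Xs i₀ = {P})
    {L : ProjLine K} (hPL : P ∈ L.points) (hL : (X ∩ L.points).ncard ≠ s) :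
    ∃ k, Disjoint (Xs k) L.points := by
  by_contra! hmeet
  choose p hpX hpL using fun k => Set.not_disjoint_iff.1 (hmeet k)
  have hp : Function.Injective p := .of_lt_imp_ne fun i j hij h =>
    hX.not_mem j i hij (p i) (hpX i) (h ▸ hX.subset_line j (hpX j))
  have hunique (i : Fin s) (q : P2 K) (hq : q ∈ Xs i) (hqL : q ∈ L.points) : p i = q := by
    by_contra hne
    have hLi := line_eq_of_mem_points hne (hpL i) hqL (hX.subset_line i (hpX i))
      (hX.subset_line i hq)
    obtain rfl | hi := eq_or_ne i i₀
    · exact hne (Set.subsingleton_singleton.anti hP.subset (hpX i) hq)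
    · exact hX.notMem_line h₀ (hP ▸ Set.mem_singleton P) hi (hLi ▸ hPL)
  have hrange : X ∩ L.points = Set.range p := by
    ext q
    simp only [hX.union_eq, Set.mem_inter_iff, Set.mem_iUnion, Set.mem_range]
    constructor
    · rintro ⟨⟨i, hq⟩, hqL⟩
      exact ⟨i, hunique i q hq hqL⟩
    · rintro ⟨i, rfl⟩
      exact ⟨⟨i, hpX i⟩, hpL i⟩
  rw [hrange, ← Set.image_univ, Set.ncard_image_of_injective _ hp] at hL
  simp at hL

theorem mem_fatIdeal_diff (hX : IsKConfig X d Xs Ls) (hP : Xs i₀ = {P})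
    (hg : ∀ i ≠ i₀, ∀ p ∈ Xs i, g ∈ pointIdeal p ^ m) : g ∈ fatIdeal (X \ {P}) m := by
  simp only [fatIdeal, Submodule.mem_iInf, hX.union_eq, Set.mem_sdiff, Set.mem_iUnion]
  rintro p ⟨⟨i, hp⟩, hpP⟩
  refine hg i ?_ p hp
  rintro rfl
  exact hpP (hP ▸ hp)

theorem hasMultiplier_of_forall_mem (hX : IsKConfig X d Xs Ls) (h₀ : IsBot i₀)
    (hP : Xs i₀ = {P}) {T : Finset (Fin s)} (hT : i₀ ∈ T) {n : ℕ} (hg : g.IsHomogeneous n)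
    (hgP : eval P.rep g ≠ 0) (hfg : ∀ i ∈ T, i ≠ i₀ → ∀ p ∈ Xs i, f * g ∈ pointIdeal p ^ m) :
    HasMultiplier (fatIdeal (X \ {P}) m) P (m * (s - T.card) + n) f := by
  refine ⟨(∏ i ∈ Tᶜ, (Ls i).form ^ m) * g, ?_, ?_, hX.mem_fatIdeal_diff hP fun i hi p hp => ?_⟩
  · simpa [Finset.card_compl] using (isHomogeneous_prod_form_pow Ls Tᶜ m).mul hg
  · rw [map_mul]
    refine mul_ne_zero (eval_prod_form_pow_ne_zero m fun i hi => ?_) hgP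
    exact hX.notMem_line h₀ (hP ▸ Set.mem_singleton P)
      (ne_of_mem_of_not_mem hT (Finset.mem_compl.1 hi)).symm
  · rw [mul_left_comm]
    by_cases hiT : i ∈ T
    · exact Ideal.mul_mem_left _ _ (hfg i hiT hi p hp)
    · exact Ideal.mul_mem_right _ _
        (prod_form_pow_mem_pow m (Finset.mem_compl.2 hiT) (hX.subset_line i hp))

theorem hasMultiplier_pow_mul_pow (hX : IsKConfig X d Xs Ls) (h₀ : IsBot i₀) (hP : Xs i₀ = {P})
    (hi : i₁ ≠ i₀) (hQ : Xs i₁ = {Q₁, Q₂}) (hu : u ∈ pointIdeal Q₁) (hv : v ∈ pointIdeal Q₂)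
    (ha : a + 2 ≤ m) (hb : b + 2 ≤ m) :
    HasMultiplier (fatIdeal (X \ {P}) m) P (m * s - 2 - (a + b)) (u ^ a * v ^ b) := by
  let ℓ := (Ls i₁).form
  have hℓP : eval P.rep ℓ ≠ 0 := hX.eval_form_ne_zero h₀ hP hi
  have hℓ (p : P2 K) (hp : p ∈ Xs i₁) : ℓ ∈ pointIdeal p :=
    ProjLine.form_mem_pointIdeal (hX.subset_line i₁ hp)
  have hmem : ∀ i ∈ ({i₀, i₁} : Finset (Fin s)), i ≠ i₀ → ∀ p ∈ Xs i,
      u ^ a * v ^ b * ℓ ^ (2 * m - 2 - (a + b)) ∈ pointIdeal p ^ m := by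
    intro i hiT hi₀ p hp
    obtain rfl : i = i₁ := by simp_all
    have hℓp := Ideal.pow_mem_pow (hℓ p hp) (2 * m - 2 - (a + b))
    rw [hQ] at hp
    obtain rfl | rfl := hp
    · rw [mul_right_comm]
      exact Ideal.mul_mem_right _ _
        (mul_mem_pow_of_le (Ideal.pow_mem_pow hu a) hℓp (by omega))
    · rw [mul_assoc]
      exact Ideal.mul_mem_left _ _
        (mul_mem_pow_of_le (Ideal.pow_mem_pow hv b) hℓp (by omega))
  have hcard : ({i₀, i₁} : Finset (Fin s)).card = 2 := Finset.card_pair hi.symm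
  have hdeg : m * s - 2 - (a + b) = m * (s - ({i₀, i₁} : Finset (Fin s)).card) +
      1 * (2 * m - 2 - (a + b)) := by
    have hs : 2 ≤ s := by simpa [hcard] using Finset.card_le_univ {i₀, i₁}
    have hms : m * 2 ≤ m * s := Nat.mul_le_mul_left m hs
    rw [hcard, Nat.mul_sub]
    omega
  rw [hdeg]
  exact hX.hasMultiplier_of_forall_mem h₀ hP (Finset.mem_insert_self i₀ {i₁})
    ((Ls i₁).isHomogeneous_form.pow _) (by rw [map_pow]; exact pow_ne_zero _ hℓP) hmem

theorem pow_mul_mem_pointIdeal_pow (hX : IsKConfig X d Xs Ls) (hQ : Xs i₁ = {Q₁, Q₂})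
    (hu : u ∈ pointIdeal Q₁) {k : Fin s} (hgQ : g ∈ pointIdeal Q₂ ^ d k)
    (hgk : ∀ p ∈ Xs k, g ∈ pointIdeal p) (hkm : d k < m) {p : P2 K} (hp : p ∈ Xs i₁ ∪ Xs k) :
    u ^ (m - 1) * ((Ls k).form ^ (m - 1) * ((Ls i₁).form ^ (m - d k) * g)) ∈
      pointIdeal p ^ m := by
  have hline {i : Fin s} (hp : p ∈ Xs i) (n : ℕ) : (Ls i).form ^ n ∈ pointIdeal p ^ n :=
    Ideal.pow_mem_pow (ProjLine.form_mem_pointIdeal (hX.subset_line i hp)) n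
  obtain hp | hp := hp
  · have hℓ := hline hp (m - d k)
    rw [hQ] at hp
    obtain rfl | rfl := hp
    · rw [mul_left_comm, ← mul_assoc (u ^ _)]
      exact Ideal.mul_mem_left _ _ (Ideal.mul_mem_right _ _
        (mul_mem_pow_of_le (Ideal.pow_mem_pow hu _) hℓ (by omega)))
    · exact Ideal.mul_mem_left _ _ (Ideal.mul_mem_left _ _
        (mul_mem_pow_of_le hℓ hgQ (by omega)))
  · have hg : g ∈ pointIdeal p ^ 1 := by simpa using hgk p hp
    rw [mul_left_comm ((Ls k).form ^ _)]
    exact Ideal.mul_mem_left _ _ (Ideal.mul_mem_left _ _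
      (mul_mem_pow_of_le (hline hp _) hg (by omega)))

theorem hasMultiplier_pow (hX : IsKConfig X d Xs Ls) (h₀ : IsBot i₀) (hP : Xs i₀ = {P})
    (hi : i₁ ≠ i₀) (hQ : Xs i₁ = {Q₁, Q₂}) (hu : u ∈ pointIdeal Q₁) {N : ProjLine K}
    (hPN : P ∈ N.points) (hQN : Q₂ ∈ N.points) {k : Fin s} (hk : Disjoint (Xs k) N.points)
    (hkm : d k < m) :
    HasMultiplier (fatIdeal (X \ {P}) m) P (m * s - 2 - (m - 1)) (u ^ (m - 1)) := by
  have hPX : P ∈ Xs i₀ := hP ▸ Set.mem_singleton P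
  have hQ₂ : Q₂ ∈ Xs i₁ := by simp [hQ]
  have hk₀ : k ≠ i₀ := by rintro rfl; exact hk.notMem_of_mem_left hPX hPN
  have hk₁ : k ≠ i₁ := by rintro rfl; exact hk.notMem_of_mem_left hQ₂ hQN
  have hPQ : P ≠ Q₂ :=
    (ne_of_mem_of_not_mem (hX.subset_line i₁ hQ₂) (hX.notMem_line h₀ hPX hi)).symm
  have hkd := hX.one_le k
  obtain ⟨G, hG, hGP, hGQ, hGk⟩ := exists_cone hPN hQN hPQ
    (Set.finite_of_ncard_pos (by rwa [hX.card_eq])) hk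
  rw [hX.card_eq] at hG hGQ
  have hcard : ({i₀, i₁, k} : Finset (Fin s)).card = 3 :=
    Finset.card_eq_three.2 ⟨_, _, _, hi.symm, hk₀.symm, hk₁.symm, rfl⟩
  have hdeg : m * s - 2 - (m - 1) = m * (s - ({i₀, i₁, k} : Finset (Fin s)).card) +
      (1 * (m - 1) + (1 * (m - d k) + d k)) := by
    have hs : 3 ≤ s := by simpa [hcard] using Finset.card_le_univ {i₀, i₁, k}
    have hms : m * 3 ≤ m * s := Nat.mul_le_mul_left m hs
    rw [hcard, Nat.mul_sub]
    omega
  rw [hdeg]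
  refine hX.hasMultiplier_of_forall_mem h₀ hP (Finset.mem_insert_self i₀ {i₁, k})
    (((Ls k).isHomogeneous_form.pow _).mul (((Ls i₁).isHomogeneous_form.pow _).mul hG))
    (by simp [hGP, hX.eval_form_ne_zero h₀ hP, hi, hk₀]) fun i hiT hi₀ p hp =>
      hX.pow_mul_mem_pointIdeal_pow hQ hu hGQ hGk hkm ?_
  obtain rfl | rfl : i = i₁ ∨ i = k := by simp_all
  exacts [.inl hp, .inr hp]

end IsKConfig

theorem kconfig_claim_degree_piece_general {K : Type} [Field K] {s : ℕ} {X : Set (P2 K)}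
    {d : Fin s → ℕ} {Xs : Fin s → Set (P2 K)} {Ls : Fin s → ProjLine K} (hX : IsKConfig X d Xs Ls)
    {P : P2 K} {i₀ i₁ : Fin s} (h₀ : IsBot i₀) (hP : Xs i₀ = {P}) (hd : d i₁ = 2)
    (hnoline : ∀ L : ProjLine K, (X ∩ L.points).ncard = s → P ∉ L.points) {m : ℕ}
    (hm : ∀ i, d i < m) {f : MvPolynomial (Fin 3) K} (hf : f.IsHomogeneous (m * s - 2)) :
    f ∈ fatIdeal (X \ {P}) m + pointIdeal P ^ m := by
  have hi : i₁ ≠ i₀ := by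
    rintro rfl
    simp [← hX.card_eq, hP] at hd
  obtain ⟨Q₁, Q₂, hne, hQ⟩ := Set.ncard_eq_two.1 ((hX.card_eq _).trans hd)
  obtain ⟨N₁, N₂, hN, ⟨hPN₁, hQN₁⟩, hPN₂, hQN₂⟩ := exists_ne_lines_through
    (hX.notMem_line h₀ (hP ▸ Set.mem_singleton P) hi)
    (hX.subset_line _ (by simp [hQ])) (hX.subset_line _ (by simp [hQ])) hne
  obtain ⟨k₁, hk₁⟩ := hX.exists_disjoint_line h₀ hP hPN₁ fun h => hnoline N₁ h hPN₁
  obtain ⟨k₂, hk₂⟩ := hX.exists_disjoint_line h₀ hP hPN₂ fun h => hnoline N₂ h hPN₂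
  have hu := ProjLine.form_mem_pointIdeal hQN₁
  have hv := ProjLine.form_mem_pointIdeal hQN₂
  refine mem_of_forall_hasMultiplier N₁.isHomogeneous_form N₂.isHomogeneous_form
    (pointIdeal_eq_span_pair hN hPN₁ hPN₂).symm le_sup_right
    (fun a b hab => HasMultiplier.mono ?_ le_sup_left) hf
  obtain ⟨rfl, rfl⟩ | ⟨rfl, rfl⟩ | ⟨ha, hb⟩ :
      (a = m - 1 ∧ b = 0) ∨ (a = 0 ∧ b = m - 1) ∨ (a + 2 ≤ m ∧ b + 2 ≤ m) := by omega
  · simpa using hX.hasMultiplier_pow h₀ hP hi hQ hu hPN₂ hQN₂ hk₂ (hm k₂)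
  · simpa using hX.hasMultiplier_pow h₀ hP hi (hQ.trans (Set.pair_comm _ _)) hv hPN₁ hQN₁ hk₁
      (hm k₁)
  · exact hX.hasMultiplier_pow_mul_pow h₀ hP hi hQ hu hv ha hb

/-- **Claim in Theorem (case `1 ≤ r < s`).** Let `X` be a k-configuration of
type `(1,2,…,s)`, `s ≥ 2`, with `X₁ = {P}`, `P = [1:0:0]`, and
`X₂ = {Q₁,Q₂}`, `Q₁ = [0:1:0]`, `Q₂ = [0:0:1]`. Assume no line containing
exactly `s` points of `X` passes through `P`, and set `Y = X \ {P}`. Then for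
every `m ≥ s + 1`, every homogeneous polynomial of degree `m·s − 2` lies in
`I_{mY} + I_P^m`; i.e. `(I_{mY} + I_P^m)_{ms−2} = R_{ms−2}`. -/
theorem kconfig_claim_degree_piece {K : Type} [Field K] [IsAlgClosed K] {s : ℕ} (hs : 2 ≤ s)
    (X : Set (P2 K)) (Xs : Fin s → Set (P2 K)) (Ls : Fin s → ProjLine K)
    (hX : IsKConfig X (fun i : Fin s => i.1 + 1) Xs Ls)
    (P Q₁ Q₂ : P2 K)
    (hP : P = Projectivization.mk K ![1, 0, 0] (by intro h; simpa using congrFun h 0))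
    (hQ₁ : Q₁ = Projectivization.mk K ![0, 1, 0] (by intro h; simpa using congrFun h 1))
    (hQ₂ : Q₂ = Projectivization.mk K ![0, 0, 1] (by intro h; simpa using congrFun h 2))
    (hX1 : Xs ⟨0, by omega⟩ = {P}) (hX2 : Xs ⟨1, by omega⟩ = {Q₁, Q₂}) (hQ : Q₁ ≠ Q₂)
    (hnoline : ∀ L : ProjLine K, (X ∩ L.points).ncard = s → P ∉ L.points)
    (Y : Set (P2 K)) (hY : Y = X \ {P}) :
    ∀ m : ℕ, s + 1 ≤ m →
      ∀ f : MvPolynomial (Fin 3) K, f.IsHomogeneous (m * s - 2) →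
        f ∈ fatIdeal Y m + pointIdeal P ^ m := by
  subst hP hY
  exact fun m hm f hf =>
    kconfig_claim_degree_piece_general hX (fun i => Nat.zero_le i.1) hX1 (i₁ := ⟨1, hs⟩) rfl
      hnoline (fun i => by omega) hf
end

section
/- Let X ⊆ P² be a k-configuration of type (d₁,…,d_s). Then for every integer m ≥ s + 1, the regularity index of the fat point scheme mX is ri(mX) = m·d_s − 1. -/
/-!
For a line `ℓ = 0` and a fat point scheme `Z`, multiplication by `ℓ` gives the residuation formula
`H_Z(t) = H_{Z : ℓ}(t - 1) + H_{R/(I_Z + (ℓ))}(t)`, where the residual scheme `Z : ℓ` has the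
multiplicities of `Z` lowered by one along the line and the last term lies between
`min (deg (Z ∩ ℓ)) (t + 1)` and `t + 1`. Hence, if `Z : ℓ` imposes independent conditions in degree
`t - 1` and `deg (Z ∩ ℓ) ≤ t + 1`, then `Z` imposes independent conditions in degree `t`. For
`Z = mX` and `t = m d_s - 1`, remove the lines `L_s, …, L_1` in this order, `m` times over: the
strict growth of the `d_i` compensates for the points of the later components on each `L_i`, so
the degree condition holds at every step. Conversely, if `Z` imposes independent conditions in
degree `t`, then `deg (Z ∩ ℓ) ≤ t + 1`; for `Z = mX` and the line `L_s` this says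
`m d_s ≤ t + 1`.
-/

namespace FatPoints

open MvPolynomial

attribute [local instance] MvPolynomial.gradedAlgebra

section GradedPieces

variable {σ K : Type*} [Field K]

/-- The space of forms of degree `T - 1`, which is zero for `T = 0`. The shift by one makes room
for degree `-1`, so that dividing by a linear form always lowers the index by exactly one. -/
noncomputable def forms (σ K : Type*) [Field K] : ℕ → Submodule K (MvPolynomial σ K)
  | 0 => ⊥
  | t + 1 => homogeneousSubmodule σ K t

/-- The part of degree `T - 1` of an ideal. -/
noncomputable def gradedPiece (I : Ideal (MvPolynomial σ K)) (T : ℕ) :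
    Submodule K (MvPolynomial σ K) :=
  I.restrictScalars K ⊓ forms σ K T

/-- The Hilbert function of the quotient by an ideal, with the index shift of `forms`: the value
at `T` belongs to degree `T - 1`. -/
noncomputable def shiftedHilb (I : Ideal (MvPolynomial σ K)) (T : ℕ) : ℕ :=
  Module.finrank K (forms σ K T) - Module.finrank K (gradedPiece I T)

theorem gradedPiece_mono {I J : Ideal (MvPolynomial σ K)} (hIJ : I ≤ J) (T : ℕ) :
    gradedPiece I T ≤ gradedPiece J T :=
  inf_le_inf_right _ hIJ

theorem gradedPiece_inf (I J : Ideal (MvPolynomial σ K)) (T : ℕ) :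
    gradedPiece (I ⊓ J) T = gradedPiece I T ⊓ gradedPiece J T :=
  inf_inf_distrib_right (I.restrictScalars K) (J.restrictScalars K) (forms σ K T)

theorem gradedPiece_sup {I J : Ideal (MvPolynomial σ K)}
    (hI : I.IsHomogeneous (homogeneousSubmodule σ K))
    (hJ : J.IsHomogeneous (homogeneousSubmodule σ K)) (T : ℕ) :
    gradedPiece (I ⊔ J) T = gradedPiece I T ⊔ gradedPiece J T := by
  apply le_antisymm
  · rintro f ⟨hf, hfT⟩
    obtain ⟨g, hg, h, hh, rfl⟩ := Submodule.mem_sup.mp hf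
    cases T with
    | zero => exact (show g + h = 0 from hfT) ▸ zero_mem _
    | succ t =>
      rw [← homogeneousComponent_eq_self hfT, map_add]
      exact Submodule.add_mem_sup
        ⟨homogeneousComponent_mem_of_mem hI hg t, homogeneousComponent_mem _ _⟩
        ⟨homogeneousComponent_mem_of_mem hJ hh t, homogeneousComponent_mem _ _⟩
  · exact sup_le (gradedPiece_mono le_sup_left T) (gradedPiece_mono le_sup_right T)

theorem isHomogeneous_span_singleton {F : MvPolynomial σ K} {n : ℕ} (hF : F.IsHomogeneous n) :
    (Ideal.span {F}).IsHomogeneous (homogeneousSubmodule σ K) :=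
  Ideal.homogeneous_span _ _ fun _ hx => ⟨n, Set.mem_singleton_iff.mp hx ▸ hF⟩

theorem homogeneousComponent_mul_of_isHomogeneous {F : MvPolynomial σ K} {n : ℕ}
    (hF : F.IsHomogeneous n) (g : MvPolynomial σ K) (t : ℕ) :
    homogeneousComponent t (F * g) =
      if n ≤ t then F * homogeneousComponent (t - n) g else 0 := by
  rw [← decomposition.decompose'_apply, ← decomposition.decompose'_apply]
  exact DirectSum.coe_decompose_mul_of_left_mem (homogeneousSubmodule σ K) t hF

theorem gradedPiece_span_singleton {F : MvPolynomial σ K} {n : ℕ} (hF : F.IsHomogeneous n)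
    (T : ℕ) :
    gradedPiece (Ideal.span {F}) T = (forms σ K (T - n)).map (LinearMap.mulLeft K F) := by
  cases T with
  | zero => simp [gradedPiece, forms]
  | succ t =>
    ext f
    constructor
    · rintro ⟨hf, hfT⟩
      obtain ⟨g, rfl⟩ := Ideal.mem_span_singleton.mp hf
      rw [← homogeneousComponent_eq_self hfT, homogeneousComponent_mul_of_isHomogeneous hF]
      split_ifs with hnt
      · rw [Nat.sub_add_comm hnt]
        exact Submodule.mem_map_of_mem (homogeneousComponent_mem (t - n) g)
      · exact zero_mem _
    · rintro ⟨g, hg, rfl⟩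
      refine ⟨Ideal.mul_mem_right _ _ (Ideal.mem_span_singleton_self F), ?_⟩
      rcases le_or_gt n t with hnt | hnt
      · rw [Nat.sub_add_comm hnt] at hg
        have := hF.mul (show g.IsHomogeneous (t - n) from hg)
        rwa [Nat.add_sub_cancel' hnt] at this
      · rw [Nat.sub_eq_zero_of_le hnt] at hg
        rw [show g = 0 from hg, map_zero]
        exact zero_mem _

theorem gradedPiece_inf_span_singleton (I : Ideal (MvPolynomial σ K)) {F : MvPolynomial σ K}
    {n : ℕ} (hF : F.IsHomogeneous n) (T : ℕ) :
    gradedPiece (I ⊓ Ideal.span {F}) T =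
      (gradedPiece (I.colon {F}) (T - n)).map (LinearMap.mulLeft K F) := by
  rw [gradedPiece_inf, gradedPiece_span_singleton hF]
  ext f
  constructor
  · rintro ⟨⟨hf, -⟩, g, hg, rfl⟩
    refine ⟨g, ⟨Submodule.mem_colon_singleton.mpr ?_, hg⟩, rfl⟩
    rwa [smul_eq_mul, mul_comm]
  · rintro ⟨g, ⟨hg, hgT⟩, rfl⟩
    have hFg : LinearMap.mulLeft K F g ∈ (forms σ K (T - n)).map (LinearMap.mulLeft K F) :=
      Submodule.mem_map_of_mem hgT
    rw [← gradedPiece_span_singleton hF] at hFg ⊢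
    refine ⟨⟨?_, hFg.2⟩, hFg⟩
    have := Submodule.mem_colon_singleton.mp hg
    rwa [smul_eq_mul, mul_comm] at this

theorem finrank_map_mulLeft {F : MvPolynomial σ K} (hF : F ≠ 0)
    (V : Submodule K (MvPolynomial σ K)) :
    Module.finrank K (V.map (LinearMap.mulLeft K F)) = Module.finrank K V :=
  (Submodule.equivMapOfInjective _ (mul_right_injective₀ hF) V).finrank_eq.symm

theorem shiftedHilb_top (T : ℕ) : shiftedHilb (⊤ : Ideal (MvPolynomial σ K)) T = 0 := by
  rw [shiftedHilb, gradedPiece, Submodule.restrictScalars_top, top_inf_eq, Nat.sub_self]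

end GradedPieces

section HilbertFunction

variable {σ K : Type*} [Finite σ] [Field K]

instance finiteDimensional_forms (T : ℕ) : FiniteDimensional K (forms σ K T) := by
  cases T with
  | zero => exact inferInstanceAs (Module.Finite K (⊥ : Submodule K (MvPolynomial σ K)))
  | succ t => exact Module.Finite.iff_fg.mpr (homogeneousSubmodule_fg σ K t)

instance finiteDimensional_gradedPiece (I : Ideal (MvPolynomial σ K)) (T : ℕ) :
    FiniteDimensional K (gradedPiece I T) :=
  Submodule.finiteDimensional_of_le inf_le_right

theorem shiftedHilb_add_finrank (I : Ideal (MvPolynomial σ K)) (T : ℕ) :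
    shiftedHilb I T + Module.finrank K (gradedPiece I T) = Module.finrank K (forms σ K T) :=
  Nat.sub_add_cancel (Submodule.finrank_mono inf_le_right)

theorem shiftedHilb_anti {I J : Ideal (MvPolynomial σ K)} (hIJ : I ≤ J) (T : ℕ) :
    shiftedHilb J T ≤ shiftedHilb I T :=
  Nat.sub_le_sub_left (Submodule.finrank_mono (gradedPiece_mono hIJ T)) _

theorem shiftedHilb_inf_le (I J : Ideal (MvPolynomial σ K)) (T : ℕ) :
    shiftedHilb (I ⊓ J) T ≤ shiftedHilb I T + shiftedHilb J T := by
  have hdim := Submodule.finrank_sup_add_finrank_inf_eq (gradedPiece I T) (gradedPiece J T)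
  rw [← gradedPiece_inf] at hdim
  have hsup : Module.finrank K ↥(gradedPiece I T ⊔ gradedPiece J T) ≤
      Module.finrank K (forms σ K T) :=
    Submodule.finrank_mono (sup_le inf_le_right inf_le_right)
  have := shiftedHilb_add_finrank I T
  have := shiftedHilb_add_finrank J T
  have := shiftedHilb_add_finrank (I ⊓ J) T
  lia

/-- The additivity of dimensions along `0 → R/(I : F) → R/I → R/(I + (F)) → 0`, in which the first
map is multiplication by `F` and raises degrees by `n`. -/
theorem shiftedHilb_eq_colon_add_sup {I : Ideal (MvPolynomial σ K)}
    (hI : I.IsHomogeneous (homogeneousSubmodule σ K)) {F : MvPolynomial σ K} {n : ℕ}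
    (hF : F.IsHomogeneous n) (hF0 : F ≠ 0) (T : ℕ) :
    shiftedHilb I T =
      shiftedHilb (I.colon {F}) (T - n) + shiftedHilb (I ⊔ Ideal.span {F}) T := by
  have hdim := Submodule.finrank_sup_add_finrank_inf_eq
    (gradedPiece I T) (gradedPiece (Ideal.span {F}) T)
  rw [← gradedPiece_sup hI (isHomogeneous_span_singleton hF), ← gradedPiece_inf,
    gradedPiece_inf_span_singleton I hF, gradedPiece_span_singleton hF,
    finrank_map_mulLeft hF0, finrank_map_mulLeft hF0] at hdim
  have := shiftedHilb_add_finrank I T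
  have := shiftedHilb_add_finrank (I.colon {F}) (T - n)
  have := shiftedHilb_add_finrank (I ⊔ Ideal.span {F}) T
  lia

end HilbertFunction

section LinearForms

variable {σ K : Type*} [Field K]

theorem exists_linearForm_eval_eq [Finite σ] (f : Module.Dual K (σ → K)) :
    ∃ ℓ : MvPolynomial σ K, ℓ.IsHomogeneous 1 ∧ ∀ v, eval v ℓ = f v := by
  classical
  have := Fintype.ofFinite σ
  refine ⟨∑ i, C (f (Pi.single i 1)) * X i,
    IsHomogeneous.sum _ _ _ fun i _ => isHomogeneous_C_mul_X _ _, fun v => ?_⟩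
  conv_rhs => rw [pi_eq_sum_univ' v]
  simp [mul_comm]

theorem exists_linearForm_eval_eq_one {v : σ → K} (hv : v ≠ 0) :
    ∃ b : MvPolynomial σ K, b.IsHomogeneous 1 ∧ eval v b = 1 := by
  obtain ⟨i, hi⟩ := Function.ne_iff.mp hv
  exact ⟨C (v i)⁻¹ * X i, isHomogeneous_C_mul_X _ _, by simp [inv_mul_cancel₀ hi]⟩

theorem prime_of_isHomogeneous_one {ℓ : MvPolynomial σ K} (hℓ : ℓ.IsHomogeneous 1)
    (hℓ0 : ℓ ≠ 0) : Prime ℓ := by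
  refine (irreducible_of_totalDegree_eq_one (hℓ.totalDegree hℓ0) fun c hc => ?_).prime
  obtain ⟨i, hi⟩ := ne_zero_iff.mp hℓ0
  exact (ne_zero_of_dvd_ne_zero hi (hc i)).isUnit

end LinearForms

section Plane

variable {K : Type*} [Field K]

theorem finrank_homogeneousSubmodule (σ K : Type*) [Fintype σ] [Field K] (t : ℕ) :
    Module.finrank K (homogeneousSubmodule σ K t) = (Fintype.card σ + t - 1).choose t := by
  classical
  have hdegree : {d : σ →₀ ℕ | d.degree = t} =
      ↑(Finset.univ.finsuppAntidiag t : Finset (σ →₀ ℕ)) := by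
    ext d
    simp [Finsupp.degree_eq_sum]
  rw [homogeneousSubmodule_eq_finsupp_supported, hdegree]
  refine (Module.finrank_eq_nat_card_basis (basisRestrictSupport K _)).trans ?_
  rw [Nat.card_coe_set_eq, Set.ncard_coe_finset, Finset.card_finsuppAntidiag_nat_eq_choose,
    Finset.card_univ]

theorem finrank_forms (T : ℕ) : Module.finrank K (forms (Fin 3) K T) = (T + 1).choose 2 := by
  cases T with
  | zero => exact finrank_bot K _
  | succ t =>
    have hcard := finrank_homogeneousSubmodule (Fin 3) K t
    rw [Fintype.card_fin, show 3 + t - 1 = t + 2 by lia, Nat.choose_symm_add] at hcard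
    exact hcard

theorem succ_choose_two (n : ℕ) : (n + 1).choose 2 = n.choose 2 + n := by
  rw [Nat.choose_succ_succ' n 1, Nat.choose_one_right, add_comm]

theorem shiftedHilb_span_singleton {F : MvPolynomial (Fin 3) K} {n : ℕ} (hF : F.IsHomogeneous n)
    (hF0 : F ≠ 0) (T : ℕ) :
    shiftedHilb (Ideal.span {F}) T + (T - n + 1).choose 2 = (T + 1).choose 2 := by
  have hdim := shiftedHilb_add_finrank (Ideal.span {F}) T
  rwa [gradedPiece_span_singleton hF, finrank_map_mulLeft hF0, finrank_forms, finrank_forms]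
    at hdim

theorem colon_span_singleton {R : Type*} [CommRing R] [IsDomain R] {F ℓ : R} (hℓ : Prime ℓ)
    (hℓF : ¬ ℓ ∣ F) : (Ideal.span {F}).colon {ℓ} = Ideal.span {F} := by
  ext g
  rw [Submodule.mem_colon_singleton, smul_eq_mul, Ideal.mem_span_singleton,
    Ideal.mem_span_singleton]
  refine ⟨fun h => ?_, fun h => h.mul_right ℓ⟩
  rw [mul_comm] at h
  exact (hℓ.left_dvd_or_dvd_right_of_dvd_mul h).resolve_left hℓF

theorem shiftedHilb_span_singleton_sup {F ℓ : MvPolynomial (Fin 3) K} {n : ℕ}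
    (hF : F.IsHomogeneous n) (hℓ : ℓ.IsHomogeneous 1) (hℓ0 : ℓ ≠ 0)
    (hℓF : ¬ ℓ ∣ F) (T : ℕ) :
    shiftedHilb (Ideal.span {F} ⊔ Ideal.span {ℓ}) T = min n T := by
  have hseq := shiftedHilb_eq_colon_add_sup (isHomogeneous_span_singleton hF) hℓ hℓ0 T
  rw [colon_span_singleton (prime_of_isHomogeneous_one hℓ hℓ0) hℓF] at hseq
  have hF0 : F ≠ 0 := fun h => hℓF (h ▸ dvd_zero ℓ)
  have hT := shiftedHilb_span_singleton hF hF0 T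
  have hT' := shiftedHilb_span_singleton hF hF0 (T - 1)
  simp only [succ_choose_two] at hT hT'
  rcases T with _ | T
  · lia
  · rw [Nat.add_sub_cancel] at hseq hT'
    rw [succ_choose_two T] at hT
    rcases le_or_gt n T with hnT | hnT
    · rw [Nat.sub_add_comm hnT, succ_choose_two] at hT
      lia
    · rw [Nat.sub_eq_zero_of_le hnT] at hT
      rw [Nat.sub_eq_zero_of_le hnT.le] at hT'
      lia

end Plane

section Points

variable {K : Type} [Field K]

/-- The family of substitutions joining `f(X)`, at parameter `1`, to `f(b v)`, at parameter `0`.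
When `b(v) = 1`, the power of the parameter dividing the image of `f` is the order of vanishing of
`f` at the point of the plane with coordinate vector `v`. -/
noncomputable def degeneration (v : Fin 3 → K) (b : MvPolynomial (Fin 3) K) :
    MvPolynomial (Fin 3) K →ₐ[K] Polynomial (MvPolynomial (Fin 3) K) :=
  aeval fun i => Polynomial.C (C (v i) * b) + Polynomial.X * Polynomial.C (X i - C (v i) * b)

theorem degeneration_linearForm (v : Fin 3 → K) (b : MvPolynomial (Fin 3) K)
    {ℓ : MvPolynomial (Fin 3) K} (hℓ : ℓ.IsHomogeneous 1) :
    degeneration v b ℓ = Polynomial.C (C (eval v ℓ) * b) +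
      Polynomial.X * Polynomial.C (ℓ - C (eval v ℓ) * b) := by
  have hspan : ℓ ∈ Submodule.span K (Set.range X) :=
    homogeneousSubmodule_one_eq_span_X (R := K) ▸ hℓ
  clear hℓ
  induction hspan using Submodule.span_induction with
  | mem x hx => obtain ⟨i, rfl⟩ := hx; simp [degeneration]
  | zero => simp
  | add x y _ _ hx hy =>
    simp only [map_add, hx, hy, add_mul, map_sub]
    ring
  | smul a x _ hx =>
    rw [map_smul, hx, smul_eval, C_mul, smul_eq_C_mul, Algebra.smul_def,
      Polynomial.algebraMap_apply, algebraMap_eq]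
    simp only [map_mul, map_sub]
    ring

theorem degeneration_eval_one (v : Fin 3 → K) (b f : MvPolynomial (Fin 3) K) :
    (degeneration v b f).eval 1 = f := by
  have hid : ((Polynomial.aeval (1 : MvPolynomial (Fin 3) K)).restrictScalars K).comp
      (degeneration v b) = AlgHom.id K _ := by
    ext i
    simp [degeneration]
  simpa [Polynomial.coe_aeval_eq_eval] using DFunLike.congr_fun hid f

variable {p : P2 K} {b : MvPolynomial (Fin 3) K}

theorem coeff_degeneration_mem (hb : b.IsHomogeneous 1) (hbp : eval p.rep b = 1)
    (f : MvPolynomial (Fin 3) K) (i : ℕ) :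
    (degeneration p.rep b f).coeff i ∈ pointIdeal p ^ i := by
  suffices hrees : degeneration p.rep b f ∈ reesAlgebra (pointIdeal p) from hrees i
  induction f using MvPolynomial.induction_on with
  | C a =>
    rw [← algebraMap_eq, AlgHom.commutes]
    exact Subalgebra.algebraMap_mem (reesAlgebra (pointIdeal p)) (C a)
  | add f g hf hg => simpa only [map_add] using add_mem hf hg
  | mul_X f i hf =>
    rw [map_mul]
    refine mul_mem hf ?_
    simp only [degeneration, aeval_X]
    refine add_mem (Subalgebra.algebraMap_mem (reesAlgebra (pointIdeal p)) _) ?_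
    rw [mul_comm, ← pow_one Polynomial.X, Polynomial.C_mul_X_pow_eq_monomial,
      reesAlgebra.monomial_mem, pow_one]
    exact Ideal.subset_span ⟨(isHomogeneous_X _ _).sub (hb.C_mul _), by simp [hbp]⟩

theorem mem_pointIdeal_pow_iff (hb : b.IsHomogeneous 1) (hbp : eval p.rep b = 1) {m : ℕ}
    {f : MvPolynomial (Fin 3) K} :
    f ∈ pointIdeal p ^ m ↔ Polynomial.X ^ m ∣ degeneration p.rep b f := by
  constructor
  · intro hf
    have hmap : (pointIdeal p).map (degeneration p.rep b) ≤ Ideal.span {Polynomial.X} := by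
      rw [pointIdeal, Ideal.map_span, Ideal.span_le]
      rintro _ ⟨ℓ, ⟨hℓ, hℓp⟩, rfl⟩
      rw [SetLike.mem_coe, Ideal.mem_span_singleton, degeneration_linearForm _ _ hℓ, hℓp]
      simp
    have hpow := Ideal.pow_right_mono hmap m (Ideal.map_pow (degeneration p.rep b) _ m ▸
      Ideal.mem_map_of_mem (degeneration p.rep b) hf)
    rwa [Ideal.span_singleton_pow, Ideal.mem_span_singleton] at hpow
  · intro hdvd
    rw [← degeneration_eval_one p.rep b f, Polynomial.eval_eq_sum_range]
    refine Ideal.sum_mem _ fun i _ => ?_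
    rw [one_pow, mul_one]
    rcases lt_or_ge i m with hi | hi
    · rw [Polynomial.X_pow_dvd_iff.mp hdvd i hi]
      exact zero_mem _
    · exact Ideal.pow_le_pow_right hi (coeff_degeneration_mem hb hbp f i)

theorem pointIdeal_isPrime (p : P2 K) : (pointIdeal p).IsPrime := by
  obtain ⟨b, hb, hbp⟩ := exists_linearForm_eval_eq_one p.rep_nonzero
  have hcomap : pointIdeal p = (Ideal.span {Polynomial.X}).comap (degeneration p.rep b) := by
    ext f
    rw [Ideal.mem_comap, Ideal.mem_span_singleton, ← pow_one (pointIdeal p),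
      mem_pointIdeal_pow_iff hb hbp, pow_one]
  have := (Ideal.span_singleton_prime Polynomial.X_ne_zero).mpr
    (Polynomial.prime_X (R := MvPolynomial (Fin 3) K))
  exact hcomap ▸ Ideal.comap_isPrime _ _

theorem pointIdeal_pow_isHomogeneous (p : P2 K) (m : ℕ) :
    (pointIdeal p ^ m).IsHomogeneous (homogeneousSubmodule (Fin 3) K) := by
  induction m with
  | zero =>
    rw [pow_zero, Ideal.one_eq_top]
    exact Ideal.IsHomogeneous.top _
  | succ m ih =>
    rw [pow_succ]
    exact ih.mul (Ideal.homogeneous_span _ _ fun f hf => ⟨1, hf.1⟩)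

theorem linearForm_mem_pointIdeal_iff {ℓ : MvPolynomial (Fin 3) K} (hℓ : ℓ.IsHomogeneous 1) :
    ℓ ∈ pointIdeal p ↔ eval p.rep ℓ = 0 := by
  refine ⟨fun h => ?_, fun h => Ideal.subset_span ⟨hℓ, h⟩⟩
  have hker : pointIdeal p ≤ RingHom.ker (eval p.rep) := Ideal.span_le.mpr fun f hf => hf.2
  exact hker h

theorem pointIdeal_pow_colon_of_eval_ne_zero {ℓ : MvPolynomial (Fin 3) K}
    (hℓ : ℓ.IsHomogeneous 1) (hℓp : eval p.rep ℓ ≠ 0) (m : ℕ) :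
    (pointIdeal p ^ m).colon {ℓ} = pointIdeal p ^ m := by
  obtain ⟨b, hb, hbp⟩ := exists_linearForm_eval_eq_one p.rep_nonzero
  have hb0 : b ≠ 0 := by rintro rfl; simp at hbp
  have hX : ¬ Polynomial.X ∣ degeneration p.rep b ℓ := by
    simp [degeneration_linearForm _ _ hℓ, Polynomial.X_dvd_iff, hb0, hℓp]
  ext g
  rw [Submodule.mem_colon_singleton, smul_eq_mul, mem_pointIdeal_pow_iff hb hbp,
    mem_pointIdeal_pow_iff hb hbp, map_mul]
  exact ⟨Polynomial.prime_X.pow_dvd_of_dvd_mul_right m hX, fun h => h.mul_right _⟩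

theorem pointIdeal_pow_colon_of_eval_eq_zero {ℓ : MvPolynomial (Fin 3) K}
    (hℓ : ℓ.IsHomogeneous 1) (hℓ0 : ℓ ≠ 0) (hℓp : eval p.rep ℓ = 0) (m : ℕ) :
    (pointIdeal p ^ m).colon {ℓ} = pointIdeal p ^ (m - 1) := by
  obtain ⟨b, hb, hbp⟩ := exists_linearForm_eval_eq_one p.rep_nonzero
  have hX : ¬ Polynomial.X ∣ Polynomial.C ℓ := by simpa [Polynomial.X_dvd_iff] using hℓ0
  ext g
  rw [Submodule.mem_colon_singleton, smul_eq_mul, mem_pointIdeal_pow_iff hb hbp,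
    mem_pointIdeal_pow_iff hb hbp, map_mul, degeneration_linearForm _ _ hℓ, hℓp]
  rcases m with _ | m
  · simp
  simp only [map_zero, zero_mul, zero_add, sub_zero, Nat.add_sub_cancel]
  rw [mul_left_comm, pow_succ', mul_dvd_mul_iff_left Polynomial.X_ne_zero]
  exact ⟨Polynomial.prime_X.pow_dvd_of_dvd_mul_right m hX, fun h => h.mul_right _⟩

theorem rep_mem_iff_submodule_le {W : Submodule K (Fin 3 → K)} :
    p.rep ∈ W ↔ p.submodule ≤ W := by
  rw [Projectivization.submodule_eq, Submodule.span_singleton_le_iff_mem]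

theorem exists_linearForm_eval_eq_zero_eval_ne_zero {p q : P2 K} (hpq : p ≠ q) :
    ∃ ℓ : MvPolynomial (Fin 3) K,
      ℓ.IsHomogeneous 1 ∧ eval q.rep ℓ = 0 ∧ eval p.rep ℓ ≠ 0 := by
  have hp : p.rep ∉ q.submodule := fun h => hpq <| Projectivization.submodule_injective <|
    Submodule.eq_of_le_of_finrank_eq (rep_mem_iff_submodule_le.mp h)
      (p.finrank_submodule.trans q.finrank_submodule.symm)
  obtain ⟨f, hfp, hfq⟩ := Submodule.exists_le_ker_of_notMem hp
  obtain ⟨ℓ, hℓ, hℓf⟩ := exists_linearForm_eval_eq f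
  exact ⟨ℓ, hℓ, by rw [hℓf]; exact hfq (rep_mem_iff_submodule_le.mpr le_rfl), by rwa [hℓf]⟩

theorem eq_of_pointIdeal_le {p q : P2 K} (h : pointIdeal p ≤ pointIdeal q) : p = q := by
  by_contra hpq
  obtain ⟨ℓ, hℓ, hℓp, hℓq⟩ := exists_linearForm_eval_eq_zero_eval_ne_zero (Ne.symm hpq)
  exact hℓq ((linearForm_mem_pointIdeal_iff hℓ).mp
    (h ((linearForm_mem_pointIdeal_iff hℓ).mpr hℓp)))

/-- The linear forms vanishing at `p`. -/
noncomputable def linearFormsAt (p : P2 K) : Submodule K (MvPolynomial (Fin 3) K) :=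
  homogeneousSubmodule (Fin 3) K 1 ⊓ LinearMap.ker (aeval p.rep).toLinearMap

theorem finrank_linearFormsAt (p : P2 K) : Module.finrank K (linearFormsAt p) = 2 := by
  let evalAt : homogeneousSubmodule (Fin 3) K 1 →ₗ[K] K :=
    (aeval p.rep).toLinearMap.domRestrict _
  have : Module.Finite K (homogeneousSubmodule (Fin 3) K 1) :=
    Module.Finite.iff_fg.mpr (homogeneousSubmodule_fg (Fin 3) K 1)
  have hsurj : LinearMap.range evalAt = ⊤ := by
    obtain ⟨b, hb, hbp⟩ := exists_linearForm_eval_eq_one p.rep_nonzero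
    refine LinearMap.range_eq_top.mpr (LinearMap.surjective fun h => one_ne_zero (α := K) ?_)
    rw [← hbp]
    exact DFunLike.congr_fun h ⟨b, hb⟩
  have hker : (LinearMap.ker evalAt).map (Submodule.subtype _) = linearFormsAt p := by
    rw [LinearMap.ker_domRestrict, Submodule.map_comap_subtype]
    rfl
  have hdim := LinearMap.finrank_range_add_finrank_ker evalAt
  rw [hsurj, finrank_top, Module.finrank_self, finrank_homogeneousSubmodule] at hdim
  rw [← hker, Submodule.finrank_map_subtype_eq]
  exact Nat.add_left_cancel hdim

theorem exists_linearForm_ne_zero_eval_eq_zero (p : P2 K) :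
    ∃ ℓ : MvPolynomial (Fin 3) K, ℓ.IsHomogeneous 1 ∧ ℓ ≠ 0 ∧ eval p.rep ℓ = 0 := by
  have hne : linearFormsAt p ≠ ⊥ := fun h => by
    have := finrank_linearFormsAt p
    rw [h, finrank_bot] at this
    lia
  obtain ⟨ℓ, hℓ, hℓ0⟩ := Submodule.exists_mem_ne_zero_of_ne_bot hne
  exact ⟨ℓ, hℓ.1, hℓ0, hℓ.2⟩

theorem mem_span_singleton_of_dvd {a ℓ : MvPolynomial (Fin 3) K} {n : ℕ} (ha : a.IsHomogeneous n)
    (hℓ : ℓ.IsHomogeneous n) (hdvd : ℓ ∣ a) : a ∈ Submodule.span K {ℓ} := by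
  have hmem : a ∈ gradedPiece (Ideal.span {ℓ}) (n + 1) :=
    ⟨Ideal.mem_span_singleton.mpr hdvd, ha⟩
  rw [gradedPiece_span_singleton hℓ, Nat.add_sub_cancel_left] at hmem
  obtain ⟨c, hc, rfl⟩ := hmem
  refine Submodule.mem_span_singleton.mpr ⟨coeff 0 c, ?_⟩
  have hcC : c = C (coeff 0 c) :=
    totalDegree_eq_zero_iff_eq_C.mp (Nat.le_zero.mp (IsHomogeneous.totalDegree_le hc))
  rw [smul_eq_C_mul, ← hcC, mul_comm]
  rfl

theorem exists_span_pair_eq_of_finrank_eq_two {V : Type*} [AddCommGroup V] [Module K V]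
    {W : Submodule K V} (hW : Module.finrank K W = 2) {x : V} (hx : x ∈ W) (hx0 : x ≠ 0) :
    ∃ y, y ∉ Submodule.span K {x} ∧ Submodule.span K {x, y} = W := by
  have := FiniteDimensional.of_finrank_eq_succ hW
  have hxW : Submodule.span K {x} ≤ W := (Submodule.span_singleton_le_iff_mem _ _).mpr hx
  have hne : Submodule.span K {x} ≠ W := fun h => by
    rw [← h, finrank_span_singleton hx0] at hW
    lia
  obtain ⟨y, hy, hyx⟩ := SetLike.exists_of_lt (hxW.lt_of_ne hne)
  have hle : Submodule.span K {x, y} ≤ W := Submodule.span_le.mpr (Set.pair_subset hx hy)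
  have := Submodule.finiteDimensional_of_le hle
  have hlt : Submodule.span K {x} < Submodule.span K {x, y} :=
    (Submodule.span_mono (by simp)).lt_of_ne fun h => hyx (h ▸ Submodule.subset_span (by simp))
  have hdim := Submodule.finrank_lt_finrank_of_lt hlt
  rw [finrank_span_singleton hx0] at hdim
  exact ⟨y, hyx, Submodule.eq_of_le_of_finrank_le hle (hW ▸ hdim)⟩

theorem exists_pointIdeal_eq_span_pair {ℓ : MvPolynomial (Fin 3) K}
    (hℓ : ℓ.IsHomogeneous 1) (hℓ0 : ℓ ≠ 0) (hℓp : eval p.rep ℓ = 0) :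
    ∃ a : MvPolynomial (Fin 3) K, a.IsHomogeneous 1 ∧ ¬ ℓ ∣ a ∧
      pointIdeal p = Ideal.span {ℓ, a} := by
  obtain ⟨a, haℓ, hspan⟩ := exists_span_pair_eq_of_finrank_eq_two (finrank_linearFormsAt p)
    (show ℓ ∈ linearFormsAt p from ⟨hℓ, hℓp⟩) hℓ0
  have ha : a ∈ linearFormsAt p := hspan ▸ Submodule.subset_span (by simp)
  refine ⟨a, ha.1, fun hdvd => haℓ (mem_span_singleton_of_dvd ha.1 hℓ hdvd), ?_⟩
  calc pointIdeal p = Ideal.span (linearFormsAt p) := rfl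
    _ = Ideal.span {ℓ, a} := by rw [← hspan]; exact Submodule.span_span_of_tower K _ _

end Points

section FatPointIdeals

variable {K : Type} [Field K]

/-- The ideal of the fat point scheme supported on `X` with multiplicity `μ p` at `p`. -/
noncomputable def fatPointIdeal (X : Finset (P2 K)) (μ : P2 K → ℕ) :
    Ideal (MvPolynomial (Fin 3) K) :=
  ⨅ p ∈ X, pointIdeal p ^ μ p

/-- The degree of the fat point scheme supported on `X` with multiplicity `μ p` at `p`. -/
def fatPointDegree (X : Finset (P2 K)) (μ : P2 K → ℕ) : ℕ :=
  ∑ p ∈ X, (μ p + 1).choose 2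

open Classical in
/-- The multiplicities of the residual scheme with respect to the line `ℓ = 0`. -/
noncomputable def residual (ℓ : MvPolynomial (Fin 3) K) (μ : P2 K → ℕ) (p : P2 K) : ℕ :=
  if eval p.rep ℓ = 0 then μ p - 1 else μ p

open Classical in
/-- The degree of the trace of a fat point scheme on the line `ℓ = 0`. -/
noncomputable def traceDegree (X : Finset (P2 K)) (μ : P2 K → ℕ) (ℓ : MvPolynomial (Fin 3) K) :
    ℕ :=
  ∑ p ∈ X with eval p.rep ℓ = 0, μ p

theorem residual_le (ℓ : MvPolynomial (Fin 3) K) (μ : P2 K → ℕ) (p : P2 K) :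
    residual ℓ μ p ≤ μ p := by
  unfold residual
  split_ifs
  · exact Nat.sub_le _ _
  · exact le_rfl

theorem residual_of_eval_eq_zero {ℓ : MvPolynomial (Fin 3) K} {p : P2 K}
    (hℓp : eval p.rep ℓ = 0) (μ : P2 K → ℕ) : residual ℓ μ p = μ p - 1 :=
  if_pos hℓp

theorem fatPointIdeal_insert [DecidableEq (P2 K)] (X : Finset (P2 K)) (μ : P2 K → ℕ) (p : P2 K) :
    fatPointIdeal (insert p X) μ = pointIdeal p ^ μ p ⊓ fatPointIdeal X μ :=
  Finset.iInf_insert _ _ _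

theorem fatPointIdeal_isHomogeneous (X : Finset (P2 K)) (μ : P2 K → ℕ) :
    (fatPointIdeal X μ).IsHomogeneous (homogeneousSubmodule (Fin 3) K) :=
  Ideal.IsHomogeneous.iInf₂ fun p _ => pointIdeal_pow_isHomogeneous p (μ p)

theorem pointIdeal_pow_colon {ℓ : MvPolynomial (Fin 3) K} (hℓ : ℓ.IsHomogeneous 1)
    (hℓ0 : ℓ ≠ 0) (μ : P2 K → ℕ) (p : P2 K) :
    (pointIdeal p ^ μ p).colon {ℓ} = pointIdeal p ^ residual ℓ μ p := by
  unfold residual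
  split_ifs with hℓp
  · exact pointIdeal_pow_colon_of_eval_eq_zero hℓ hℓ0 hℓp _
  · exact pointIdeal_pow_colon_of_eval_ne_zero hℓ hℓp _

theorem fatPointIdeal_colon {ℓ : MvPolynomial (Fin 3) K} (hℓ : ℓ.IsHomogeneous 1)
    (hℓ0 : ℓ ≠ 0) (X : Finset (P2 K)) (μ : P2 K → ℕ) :
    (fatPointIdeal X μ).colon {ℓ} = fatPointIdeal X (residual ℓ μ) := by
  simp only [fatPointIdeal, Submodule.iInf_colon, pointIdeal_pow_colon hℓ hℓ0]

theorem fatPointDegree_eq_residual_add_trace (X : Finset (P2 K)) (μ : P2 K → ℕ)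
    (ℓ : MvPolynomial (Fin 3) K) :
    fatPointDegree X μ = fatPointDegree X (residual ℓ μ) + traceDegree X μ ℓ := by
  classical
  rw [traceDegree, Finset.sum_filter, fatPointDegree, fatPointDegree, ← Finset.sum_add_distrib]
  refine Finset.sum_congr rfl fun p _ => ?_
  unfold residual
  split_ifs
  · rcases μ p with _ | m
    · rfl
    · exact succ_choose_two (m + 1)
  · rfl

theorem shiftedHilb_pointIdeal_pow_sup_le {p : P2 K} {ℓ : MvPolynomial (Fin 3) K}
    (hℓ : ℓ.IsHomogeneous 1) (hℓ0 : ℓ ≠ 0) (hℓp : eval p.rep ℓ = 0) (m T : ℕ) :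
    shiftedHilb (pointIdeal p ^ m ⊔ Ideal.span {ℓ}) T ≤ m := by
  obtain ⟨a, ha, hℓa, hpa⟩ := exists_pointIdeal_eq_span_pair hℓ hℓ0 hℓp
  have hℓam : ¬ ℓ ∣ a ^ m := fun h => hℓa ((prime_of_isHomogeneous_one hℓ hℓ0).dvd_of_dvd_pow h)
  have hle : Ideal.span {a ^ m} ≤ pointIdeal p ^ m := by
    rw [← Ideal.span_singleton_pow, hpa]
    exact Ideal.pow_right_mono (Ideal.span_mono (by simp)) m
  calc shiftedHilb (pointIdeal p ^ m ⊔ Ideal.span {ℓ}) T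
      ≤ shiftedHilb (Ideal.span {a ^ m} ⊔ Ideal.span {ℓ}) T :=
        shiftedHilb_anti (sup_le_sup_right hle _) T
    _ = min (1 * m) T := shiftedHilb_span_singleton_sup (ha.pow m) hℓ hℓ0 hℓam T
    _ ≤ m := (min_le_left _ _).trans_eq (one_mul m)

theorem shiftedHilb_pointIdeal_pow_le (p : P2 K) (m T : ℕ) :
    shiftedHilb (pointIdeal p ^ m) T ≤ (m + 1).choose 2 := by
  obtain ⟨ℓ, hℓ, hℓ0, hℓp⟩ := exists_linearForm_ne_zero_eval_eq_zero p
  induction m generalizing T with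
  | zero => rw [pow_zero, Ideal.one_eq_top, shiftedHilb_top]; exact Nat.zero_le _
  | succ m ih =>
    rw [shiftedHilb_eq_colon_add_sup (pointIdeal_pow_isHomogeneous p _) hℓ hℓ0,
      pointIdeal_pow_colon_of_eval_eq_zero hℓ hℓ0 hℓp, succ_choose_two (m + 1)]
    exact Nat.add_le_add (ih _) (shiftedHilb_pointIdeal_pow_sup_le hℓ hℓ0 hℓp _ T)

theorem shiftedHilb_fatPointIdeal_le (X : Finset (P2 K)) (μ : P2 K → ℕ) (T : ℕ) :
    shiftedHilb (fatPointIdeal X μ) T ≤ fatPointDegree X μ := by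
  classical
  induction X using Finset.induction_on with
  | empty =>
    rw [show fatPointIdeal ∅ μ = ⊤ by simp [fatPointIdeal], shiftedHilb_top]
    exact Nat.zero_le _
  | insert p X hp ih =>
    rw [fatPointIdeal_insert, fatPointDegree, Finset.sum_insert hp]
    exact (shiftedHilb_inf_le _ _ T).trans
      (Nat.add_le_add (shiftedHilb_pointIdeal_pow_le p _ T) ih)

end FatPointIdeals

section Traces

theorem prod_pow_dvd_of_prime {R ι : Type*} [CommMonoidWithZero R] [IsCancelMulZero R]
    {s : Finset ι} {a : ι → R} (ha : ∀ i ∈ s, Prime (a i))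
    (hna : (s : Set ι).Pairwise fun i j => ¬ a i ∣ a j) {m : ι → ℕ} {x : R}
    (hx : ∀ i ∈ s, a i ^ m i ∣ x) : ∏ i ∈ s, a i ^ m i ∣ x := by
  classical
  induction s using Finset.induction_on with
  | empty => simp
  | insert i s hi ih =>
    rw [Finset.forall_mem_insert] at ha hx
    rw [Finset.coe_insert] at hna
    obtain ⟨y, rfl⟩ := ih ha.2 (hna.mono (Set.subset_insert _ _)) hx.2
    have hndvd : ¬ a i ∣ ∏ j ∈ s, a j ^ m j := fun hdvd => by
      obtain ⟨j, hj, hij⟩ := (ha.1.dvd_finsetProd_iff _).mp hdvd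
      exact hna (Set.mem_insert _ _) (Set.mem_insert_of_mem _ hj) (fun h => hi (h ▸ hj))
        (ha.1.dvd_of_dvd_pow hij)
    rw [Finset.prod_insert hi, mul_comm]
    exact mul_dvd_mul_left _ (ha.1.pow_dvd_of_dvd_mul_left _ hndvd hx.1)

theorem map_quotientMk_span_pair {R : Type*} [CommRing R] (ℓ a : R) :
    (Ideal.span {ℓ, a}).map (Ideal.Quotient.mk (Ideal.span {ℓ})) =
      Ideal.span {Ideal.Quotient.mk (Ideal.span {ℓ}) a} := by
  rw [Ideal.span_insert, Ideal.map_sup, Ideal.map_quotient_self, bot_sup_eq, Ideal.map_span,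
    Set.image_singleton]

theorem mem_span_pair_iff_quotientMk_dvd {R : Type*} [CommRing R] {ℓ a f : R} :
    f ∈ Ideal.span {ℓ, a} ↔
      Ideal.Quotient.mk (Ideal.span {ℓ}) a ∣ Ideal.Quotient.mk (Ideal.span {ℓ}) f := by
  rw [← Ideal.mem_span_singleton, ← map_quotientMk_span_pair, ← Ideal.mem_comap,
    Ideal.comap_map_quotientMk, Ideal.span_insert, ← sup_assoc, sup_idem]

theorem prime_quotientMk_of_isPrime_span_pair {R : Type*} [CommRing R] {ℓ a : R} (hℓa : ¬ ℓ ∣ a)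
    (ha : (Ideal.span {ℓ, a}).IsPrime) : Prime (Ideal.Quotient.mk (Ideal.span {ℓ}) a) := by
  have ha0 : Ideal.Quotient.mk (Ideal.span {ℓ}) a ≠ 0 := by
    rwa [Ne, Ideal.Quotient.eq_zero_iff_mem, Ideal.mem_span_singleton]
  rw [← Ideal.span_singleton_prime ha0, ← map_quotientMk_span_pair]
  refine Ideal.map_isPrime_of_surjective Ideal.Quotient.mk_surjective ?_
  rw [Ideal.mk_ker]
  exact Ideal.span_mono (by simp)

variable {K : Type} [Field K] {ℓ : MvPolynomial (Fin 3) K}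

theorem exists_form_fatPointIdeal_le (hℓ : ℓ.IsHomogeneous 1) (hℓ0 : ℓ ≠ 0)
    (X : Finset (P2 K)) (μ : P2 K → ℕ) :
    ∃ F : MvPolynomial (Fin 3) K, F.IsHomogeneous (traceDegree X μ ℓ) ∧ ¬ ℓ ∣ F ∧
      fatPointIdeal X μ ≤ Ideal.span {ℓ, F} := by
  classical
  have hprime := prime_of_isHomogeneous_one hℓ hℓ0
  have : (Ideal.span {ℓ}).IsPrime := (Ideal.span_singleton_prime hℓ0).mpr hprime
  have hpair (p : P2 K) := exists_pointIdeal_eq_span_pair (p := p) hℓ hℓ0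
  choose! a ha hℓa hpa using hpair
  refine ⟨∏ p ∈ X with eval p.rep ℓ = 0, a p ^ μ p, ?_, fun hdvd => ?_, fun f hf => ?_⟩
  · refine IsHomogeneous.prod _ _ _ fun p hp => ?_
    simpa only [one_mul] using (ha p (Finset.mem_filter.mp hp).2).pow (μ p)
  · obtain ⟨p, hp, hdvd⟩ := (hprime.dvd_finsetProd_iff _).mp hdvd
    exact hℓa p (Finset.mem_filter.mp hp).2 (hprime.dvd_of_dvd_pow hdvd)
  · simp only [mem_span_pair_iff_quotientMk_dvd, map_prod, map_pow]
    refine prod_pow_dvd_of_prime (fun p hp => ?_) (fun p hp q hq hpq hdvd => hpq ?_) fun p hp => ?_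
    · have hp0 := (Finset.mem_filter.mp hp).2
      exact prime_quotientMk_of_isPrime_span_pair (hℓa p hp0) (hpa p hp0 ▸ pointIdeal_isPrime p)
    · have hp0 := (Finset.mem_filter.mp hp).2
      have hq0 := (Finset.mem_filter.mp hq).2
      refine (eq_of_pointIdeal_le ?_).symm
      rw [hpa q hq0, hpa p hp0, Ideal.span_le]
      exact Set.pair_subset (Ideal.subset_span (by simp))
        (mem_span_pair_iff_quotientMk_dvd.mpr hdvd)
    · obtain ⟨hpX, hp0⟩ := Finset.mem_filter.mp hp
      have hfp : f ∈ pointIdeal p ^ μ p := iInf₂_le (f := fun p _ => pointIdeal p ^ μ p) p hpX hf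
      rw [← Ideal.mem_span_singleton, ← Ideal.span_singleton_pow, ← map_quotientMk_span_pair,
        ← hpa p hp0, ← Ideal.map_pow]
      exact Ideal.mem_map_of_mem _ hfp

theorem min_traceDegree_le_shiftedHilb_sup (hℓ : ℓ.IsHomogeneous 1) (hℓ0 : ℓ ≠ 0)
    (X : Finset (P2 K)) (μ : P2 K → ℕ) (T : ℕ) :
    min (traceDegree X μ ℓ) T ≤ shiftedHilb (fatPointIdeal X μ ⊔ Ideal.span {ℓ}) T := by
  obtain ⟨F, hF, hℓF, hle⟩ := exists_form_fatPointIdeal_le hℓ hℓ0 X μ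
  rw [← shiftedHilb_span_singleton_sup hF hℓ hℓ0 hℓF]
  refine shiftedHilb_anti (sup_le ?_ le_sup_right) T
  rwa [sup_comm, ← Ideal.span_insert]

theorem shiftedHilb_sup_span_singleton_le (hℓ : ℓ.IsHomogeneous 1) (hℓ0 : ℓ ≠ 0)
    (I : Ideal (MvPolynomial (Fin 3) K)) (T : ℕ) :
    shiftedHilb (I ⊔ Ideal.span {ℓ}) T ≤ T := by
  refine (shiftedHilb_anti le_sup_right T).trans ?_
  have hdim := shiftedHilb_span_singleton hℓ hℓ0 T
  rcases T with _ | T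
  · exact (Nat.le_add_right _ _).trans_eq hdim
  · rw [Nat.add_sub_cancel, succ_choose_two (T + 1)] at hdim
    lia

/-- The fat point scheme supported on `X` with multiplicities `μ` imposes independent conditions
on the forms of degree `T - 1`. -/
def IsRegularAt (X : Finset (P2 K)) (μ : P2 K → ℕ) (T : ℕ) : Prop :=
  shiftedHilb (fatPointIdeal X μ) T = fatPointDegree X μ

theorem IsRegularAt.of_residual (hℓ : ℓ.IsHomogeneous 1) (hℓ0 : ℓ ≠ 0) {X : Finset (P2 K)}
    {μ : P2 K → ℕ} {T : ℕ} (htrace : traceDegree X μ ℓ ≤ T)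
    (hres : IsRegularAt X (residual ℓ μ) (T - 1)) : IsRegularAt X μ T := by
  have hseq := shiftedHilb_eq_colon_add_sup (fatPointIdeal_isHomogeneous X μ) hℓ hℓ0 T
  rw [fatPointIdeal_colon hℓ hℓ0, hres] at hseq
  refine (shiftedHilb_fatPointIdeal_le X μ T).antisymm ?_
  rw [hseq, fatPointDegree_eq_residual_add_trace X μ ℓ, ← min_eq_left htrace]
  exact Nat.add_le_add_left (min_traceDegree_le_shiftedHilb_sup hℓ hℓ0 X μ T) _

theorem IsRegularAt.traceDegree_le (hℓ : ℓ.IsHomogeneous 1) (hℓ0 : ℓ ≠ 0) {X : Finset (P2 K)}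
    {μ : P2 K → ℕ} {T : ℕ} (hreg : IsRegularAt X μ T) : traceDegree X μ ℓ ≤ T := by
  have hseq := shiftedHilb_eq_colon_add_sup (fatPointIdeal_isHomogeneous X μ) hℓ hℓ0 T
  rw [fatPointIdeal_colon hℓ hℓ0, hreg, fatPointDegree_eq_residual_add_trace X μ ℓ] at hseq
  have hres := shiftedHilb_fatPointIdeal_le X (residual ℓ μ) (T - 1)
  have htrace := shiftedHilb_sup_span_singleton_le hℓ hℓ0 (fatPointIdeal X μ) T
  lia

theorem isRegularAt_of_eq_zero {X : Finset (P2 K)} {μ : P2 K → ℕ} (hμ : ∀ p ∈ X, μ p = 0)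
    (T : ℕ) : IsRegularAt X μ T := by
  have hdeg : fatPointDegree X μ = 0 := Finset.sum_eq_zero fun p hp => by rw [hμ p hp]; rfl
  have hle := shiftedHilb_fatPointIdeal_le X μ T
  rw [hdeg] at hle
  exact (Nat.le_zero.mp hle).trans hdeg.symm

end Traces

theorem add_sub_le_of_strictMono {s : ℕ} {d : Fin s → ℕ} (hd : StrictMono d) {i j : Fin s}
    (hij : i ≤ j) : d i + (j - i) ≤ d j := by
  have hcard : (Finset.Ico i j).card ≤ (Finset.Ico (d i) (d j)).card := by
    refine Finset.card_le_card_of_injOn d (fun k hk => ?_) hd.injective.injOn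
    rw [Finset.coe_Ico] at hk ⊢
    exact ⟨hd.monotone hk.1, hd hk.2⟩
  have := hd.monotone hij
  rw [Fin.card_Ico, Nat.card_Ico] at hcard
  lia

end FatPoints

namespace ProjLine

open MvPolynomial FatPoints

variable {K : Type} [Field K]

theorem eq_of_mem_points {L M : ProjLine K} {p q : P2 K} (hpq : p ≠ q) (hpL : p ∈ L.points)
    (hqL : q ∈ L.points) (hpM : p ∈ M.points) (hqM : q ∈ M.points) : L = M := by
  by_contra hLM
  have hne : L.toSubmodule ⊓ M.toSubmodule ≠ L.toSubmodule := fun h => hLM <| by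
    have := Submodule.eq_of_le_of_finrank_eq (inf_eq_left.mp h)
      (L.finrank_eq_two.trans M.finrank_eq_two.symm)
    cases L; cases M; cases this; rfl
  have hlt := Submodule.finrank_lt_finrank_of_lt (inf_le_left.lt_of_ne hne)
  rw [L.finrank_eq_two] at hlt
  have heq {r : P2 K} (hrL : r ∈ L.points) (hrM : r ∈ M.points) :
      r.submodule = L.toSubmodule ⊓ M.toSubmodule :=
    Submodule.eq_of_le_of_finrank_le (le_inf hrL hrM)
      (r.finrank_submodule ▸ Nat.le_of_lt_succ hlt)
  exact hpq (Projectivization.submodule_injective ((heq hpL hpM).trans (heq hqL hqM).symm))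

theorem exists_linearForm_mem_points_iff (L : ProjLine K) :
    ∃ ℓ : MvPolynomial (Fin 3) K,
      ℓ.IsHomogeneous 1 ∧ ℓ ≠ 0 ∧ ∀ p, p ∈ L.points ↔ eval p.rep ℓ = 0 := by
  have hlt : L.toSubmodule < ⊤ := lt_top_iff_ne_top.mpr fun h => by
    have := L.finrank_eq_two
    rw [h, finrank_top, Module.finrank_fin_fun] at this
    lia
  obtain ⟨f, hf0, hLf⟩ := Submodule.exists_le_ker_of_lt_top _ hlt
  have hker : L.toSubmodule = LinearMap.ker f := by
    refine Submodule.eq_of_le_of_finrank_eq hLf (Nat.add_right_cancel (m := 1) ?_)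
    rw [Module.Dual.finrank_ker_add_one_of_ne_zero hf0, L.finrank_eq_two, Module.finrank_fin_fun]
  obtain ⟨ℓ, hℓ, hℓf⟩ := exists_linearForm_eval_eq f
  refine ⟨ℓ, hℓ, ?_, fun p => ?_⟩
  · rintro rfl
    exact hf0 (LinearMap.ext fun v => by rw [← hℓf, map_zero, LinearMap.zero_apply])
  · rw [hℓf, ← LinearMap.mem_ker, ← hker, rep_mem_iff_submodule_le]
    rfl

end ProjLine

namespace IsKConfig

open MvPolynomial FatPoints

variable {K : Type} [Field K] {s : ℕ} {X : Set (P2 K)} {d : Fin s → ℕ} {Xs : Fin s → Set (P2 K)}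
  {Ls : Fin s → ProjLine K}

theorem component_subset (hX : IsKConfig X d Xs Ls) (i : Fin s) : Xs i ⊆ X :=
  hX.union_eq ▸ Set.subset_iUnion Xs i

theorem exists_mem_component (hX : IsKConfig X d Xs Ls) {p : P2 K} (hp : p ∈ X) :
    ∃ i, p ∈ Xs i :=
  Set.mem_iUnion.mp (hX.union_eq ▸ hp)

theorem finite_component (hX : IsKConfig X d Xs Ls) (i : Fin s) : (Xs i).Finite :=
  Set.finite_of_ncard_pos (hX.card_eq i ▸ hX.one_le i)

theorem finite_s18 (hX : IsKConfig X d Xs Ls) : X.Finite :=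
  hX.union_eq ▸ Set.finite_iUnion hX.finite_component

theorem subsingleton_component_inter_points (hX : IsKConfig X d Xs Ls) {i j : Fin s}
    (hij : i ≠ j) : (Xs j ∩ (Ls i).points).Subsingleton := fun p hp q hq => by
  by_contra hpq
  exact hij (hX.lines_distinct (ProjLine.eq_of_mem_points hpq hp.2 hq.2
    (hX.subset_line j hp.1) (hX.subset_line j hq.1)))

/-- The line `Lᵢ` contains the points of `Xᵢ`, at most one point of each `Xⱼ` with `j > i`, and no
other points of `X`. -/
theorem traceDegree_le (hX : IsKConfig X d Xs Ls) {i : Fin s} {ℓ : MvPolynomial (Fin 3) K}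
    (hℓL : ∀ p, p ∈ (Ls i).points ↔ eval p.rep ℓ = 0) {m : ℕ} {μ : P2 K → ℕ}
    (hμ : ∀ p ∈ Xs i, μ p ≤ m + 1) (hμi : ∀ j, i < j → ∀ p ∈ Xs j, μ p ≤ m) :
    traceDegree hX.finite_s18.toFinset μ ℓ ≤ d i * (m + 1) + (s - 1 - i) * m := by
  classical
  have : Nonempty (Fin s) := ⟨i⟩
  choose! c hc using fun p (hp : p ∈ X) => hX.exists_mem_component hp
  have hmem {j : Fin s} {p : P2 K}
      (hp : p ∈ {p ∈ {p ∈ hX.finite_s18.toFinset | eval p.rep ℓ = 0} | c p = j}) :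
      p ∈ Xs j ∩ (Ls i).points := by
    simp only [Finset.mem_filter, Set.Finite.mem_toFinset] at hp
    exact ⟨hp.2 ▸ hc p hp.1.1, (hℓL p).mpr hp.1.2⟩
  have hmaps : ∀ p ∈ {p ∈ hX.finite_s18.toFinset | eval p.rep ℓ = 0}, c p ∈ Finset.Ici i := by
    intro p hp
    have hp' := hmem (Finset.mem_filter.mpr ⟨hp, rfl⟩)
    exact Finset.mem_Ici.mpr (not_lt.mp fun hlt => hX.not_mem i (c p) hlt p hp'.1 hp'.2)
  rw [traceDegree, ← Finset.sum_fiberwise_of_maps_to hmaps, ← Finset.Ioi_insert,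
    Finset.sum_insert (by simp), ← Fin.card_Ioi, ← hX.card_eq, ← smul_eq_mul, ← smul_eq_mul]
  refine Nat.add_le_add ?_ (Finset.sum_le_card_nsmul _ _ _ fun j hj => ?_)
  · refine (Finset.sum_le_card_nsmul _ _ _ fun p hp => hμ p (hmem hp).1).trans ?_
    refine Nat.mul_le_mul_right _ ?_
    rw [← Set.ncard_coe_finset]
    exact Set.ncard_le_ncard (fun p hp => (hmem hp).1) (hX.finite_component i)
  · rw [Finset.mem_Ioi] at hj
    refine (Finset.sum_le_card_nsmul _ _ _ fun p hp => hμi j hj p (hmem hp).1).trans ?_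
    refine (Nat.mul_le_mul_right _ (Finset.card_le_one.mpr fun p hp q hq => ?_)).trans_eq
      (one_mul m)
    exact hX.subsingleton_component_inter_points hj.ne (hmem hp) (hmem hq)

theorem mul_le_traceDegree (hX : IsKConfig X d Xs Ls) {i : Fin s} {ℓ : MvPolynomial (Fin 3) K}
    (hℓL : ∀ p, p ∈ (Ls i).points ↔ eval p.rep ℓ = 0) (m : ℕ) :
    m * d i ≤ traceDegree hX.finite_s18.toFinset (fun _ => m) ℓ := by
  classical
  rw [traceDegree, Finset.sum_const, smul_eq_mul, mul_comm, ← hX.card_eq, ← Set.ncard_coe_finset]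
  refine Nat.mul_le_mul_right m (Set.ncard_le_ncard (fun p hp => ?_) (Finset.finite_toSet _))
  exact Finset.mem_filter.mpr ⟨hX.finite_s18.mem_toFinset.mpr (hX.component_subset i hp),
    (hℓL p).mp (hX.subset_line i hp)⟩

theorem mul_le_of_isRegularAt (hX : IsKConfig X d Xs Ls) (i : Fin s) {m T : ℕ}
    (hreg : IsRegularAt hX.finite_s18.toFinset (fun _ => m) T) : m * d i ≤ T := by
  obtain ⟨ℓ, hℓ, hℓ0, hℓL⟩ := (Ls i).exists_linearForm_mem_points_iff
  exact (hX.mul_le_traceDegree hℓL m).trans (hreg.traceDegree_le hℓ hℓ0)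

/-- Once the lines of index at least `i` have been removed from a scheme with multiplicities at most
`m + 1`, only points of the other components can still have multiplicity `m + 1`. Removing the
remaining lines, in decreasing order of their indices, leaves multiplicities at most `m`. -/
theorem isRegularAt_of_forall_isRegularAt (hX : IsKConfig X d Xs Ls) {m N : ℕ}
    (hd : ∀ i, d i + (s - 1 - i) ≤ N)
    (hm : ∀ μ T, (∀ p ∈ X, μ p ≤ m) → m * N ≤ T → IsRegularAt hX.finite_s18.toFinset μ T)
    {i : ℕ} (hi : i ≤ s) {μ : P2 K → ℕ} {T : ℕ} (hμ : ∀ p ∈ X, μ p ≤ m + 1)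
    (hμi : ∀ j : Fin s, i ≤ j → ∀ p ∈ Xs j, μ p ≤ m) (hT : (m + 1) * N ≤ T + (s - i)) :
    IsRegularAt hX.finite_s18.toFinset μ T := by
  induction i generalizing μ T with
  | zero =>
    refine hm μ T (fun p hp => ?_) ?_
    · obtain ⟨j, hj⟩ := hX.exists_mem_component hp
      exact hμi j (Nat.zero_le _) p hj
    · have hsN : s ≤ N := by
        rcases s with _ | n
        · exact Nat.zero_le _
        · have h0 := hd 0
          have := hX.one_le 0
          rw [Fin.val_zero] at h0
          lia
      rw [add_one_mul] at hT
      lia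
  | succ i ih =>
    obtain ⟨ℓ, hℓ, hℓ0, hℓL⟩ := (Ls ⟨i, hi⟩).exists_linearForm_mem_points_iff
    refine IsRegularAt.of_residual hℓ hℓ0 ?_ ?_
    · have hmul : (m + 1) * (d ⟨i, hi⟩ + (s - 1 - i)) ≤ (m + 1) * N :=
        Nat.mul_le_mul_left _ (hd ⟨i, hi⟩)
      calc traceDegree hX.finite_s18.toFinset μ ℓ
          ≤ d ⟨i, hi⟩ * (m + 1) + (s - 1 - i) * m :=
            hX.traceDegree_le hℓL (fun p hp => hμ p (hX.component_subset _ hp)) hμi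
        _ ≤ T := by lia
    · refine ih (by lia) (fun p hp => (residual_le ℓ μ p).trans (hμ p hp)) (fun j hj p hp => ?_)
        (by lia)
      rcases hj.eq_or_lt with rfl | hlt
      · rw [residual_of_eval_eq_zero ((hℓL p).mp (hX.subset_line j hp))]
        exact Nat.sub_le_iff_le_add.mpr (hμ p (hX.component_subset j hp))
      · exact (residual_le ℓ μ p).trans (hμi j hlt p hp)

theorem isRegularAt (hX : IsKConfig X d Xs Ls) {N : ℕ} (hd : ∀ i, d i + (s - 1 - i) ≤ N) {m : ℕ}
    {μ : P2 K → ℕ} {T : ℕ} (hμ : ∀ p ∈ X, μ p ≤ m) (hT : m * N ≤ T) :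
    IsRegularAt hX.finite_s18.toFinset μ T := by
  induction m generalizing μ T with
  | zero =>
    exact isRegularAt_of_eq_zero
      (fun p hp => Nat.le_zero.mp (hμ p (hX.finite_s18.mem_toFinset.mp hp))) T
  | succ m ih =>
    exact hX.isRegularAt_of_forall_isRegularAt hd (fun μ T => ih) le_rfl hμ
      (fun j hj => absurd j.isLt hj.not_gt) (hT.trans (Nat.le_add_right _ _))

theorem isRegularAt_iff (hX : IsKConfig X d Xs Ls) (hs : 0 < s) {m T : ℕ} :
    IsRegularAt hX.finite_s18.toFinset (fun _ => m) T ↔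
      m * d ⟨s - 1, Nat.sub_lt hs Nat.one_pos⟩ ≤ T := by
  refine ⟨hX.mul_le_of_isRegularAt _, hX.isRegularAt (fun i => ?_) fun _ _ => le_rfl⟩
  exact add_sub_le_of_strictMono hX.strictMono (Fin.mk_le_mk.mpr (Nat.le_sub_one_of_lt i.isLt))

theorem hilb_fatIdeal_eq_iff (hX : IsKConfig X d Xs Ls) {m t : ℕ} :
    hilb (fatIdeal X m) t = X.ncard * (m + 1).choose 2 ↔
      IsRegularAt hX.finite_s18.toFinset (fun _ => m) (t + 1) := by
  have hideal : fatIdeal X m = fatPointIdeal hX.finite_s18.toFinset fun _ => m := by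
    simp only [fatIdeal, fatPointIdeal, Set.Finite.mem_toFinset]
  have hdegree : fatPointDegree hX.finite_s18.toFinset (fun _ => m) =
      X.ncard * (m + 1).choose 2 := by
    rw [fatPointDegree, Finset.sum_const, smul_eq_mul, Set.ncard_eq_toFinset_card X hX.finite_s18]
  rw [IsRegularAt, ← hideal, hdegree]
  rfl

end IsKConfig

theorem kconfig_regularity_index_general {K : Type} [Field K] {s : ℕ} (hs : 0 < s)
    (X : Set (P2 K)) (d : Fin s → ℕ) (Xs : Fin s → Set (P2 K)) (Ls : Fin s → ProjLine K)
    (hX : IsKConfig X d Xs Ls)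
    (ds : ℕ) (hds : ds = d ⟨s - 1, Nat.sub_lt hs Nat.one_pos⟩) :
    ∀ m : ℕ, 1 ≤ m →
      IsLeast {t : ℕ | hilb (fatIdeal X m) t = X.ncard * Nat.choose (m + 1) 2}
        (m * ds - 1) := by
  subst hds
  intro m _
  have hregular (t : ℕ) : hilb (fatIdeal X m) t = X.ncard * (m + 1).choose 2 ↔
      m * d ⟨s - 1, Nat.sub_lt hs Nat.one_pos⟩ - 1 ≤ t :=
    hX.hilb_fatIdeal_eq_iff.trans ((hX.isRegularAt_iff hs).trans Nat.sub_le_iff_le_add.symm)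
  exact ⟨(hregular _).mpr le_rfl, fun t ht => (hregular t).mp ht⟩

/-- **Corollary (regularity index).** Let `X` be a k-configuration of type
`(d₁,…,d_s)`. Then for all `m ≥ s + 1`, the regularity index of `mX` is
`ri(mX) = m·d_s − 1`; that is, `m·d_s − 1` is the least `t` with
`H_{mX}(t) = deg(mX) = |X|·C(m+1,2)`. -/
theorem kconfig_regularity_index {K : Type} [Field K] [IsAlgClosed K] {s : ℕ} (hs : 0 < s)
    (X : Set (P2 K)) (d : Fin s → ℕ) (Xs : Fin s → Set (P2 K)) (Ls : Fin s → ProjLine K)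
    (hX : IsKConfig X d Xs Ls)
    (ds : ℕ) (hds : ds = d ⟨s - 1, Nat.sub_lt hs Nat.one_pos⟩) :
    ∀ m : ℕ, s + 1 ≤ m →
      IsLeast {t : ℕ | hilb (fatIdeal X m) t = X.ncard * Nat.choose (m + 1) 2}
        (m * ds - 1) := by
  intro m hm
  exact kconfig_regularity_index_general hs X d Xs Ls hX ds hds m (Nat.le_of_add_left_le hm)
end
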